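/- The solution operator T : X(D) → X(D) is compact. -/

import Mathlib

/-!
Since `T` is only constrained through `a(Tf, φ) = b(f, φ)`, the whole argument runs on the
differences `f = f₁ - f₂`, `w = T f₁ - T f₂`, which satisfy `a(w, φ) = b(f, φ)`.  The heart is
`solution_estimate`:
`‖Δw‖² ≤ C (‖f‖² + ‖∇f‖ ‖Δf‖ + ‖∇f‖²)`, all norms in `L²(D)`.
By `gradSq_le` one has `‖∇f‖² ≤ ‖f‖ ‖Δf‖`, so on a set bounded in `X(D)` the right-hand side is
small as soon as `‖f‖` is small, and `rellich` extracts from a bounded sequence a subsequence that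
is Cauchy in `L²(D)`.

Testing the equation with `φ = w` produces the coercive term `∫ |Δw|² / n`, provided `1/n` is
measurable.  Measurability is a consequence of solvability (`meas_inv`): choosing `f = |x - x₀|²`
near `x₀`, the function `s = (1/n) Δw` solves `Δ(s + f) = 0` weakly, so by Weyl's lemma (`weyl`)
`s = H - f` almost everywhere with `H` harmonic; hence `s ≠ 0` and `1/n = s / Δw` almost everywhere.

The boundary term `∫_{∂D} (1/η) ∂_ν f conj(∂_ν φ) dσ` involves an arbitrary measure `σ` and an
arbitrary field `ν`, so no trace theorem applies to it.  Instead the identity `a(Tf, φ) = b(f, φ)`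
represents it by an integral over `D`, namely `-∫_D h_f conj(Δφ)` with `h_f = f + (1/n) Δ(Tf)`
bounded.  Let `F` be a global `C²` function with `F > 0` in `D`, and `F = 0`, `∇F ≠ 0` on `∂D`
(`exists_defining`).  For functions vanishing on `∂D` the gradient is a multiple of `∇F` (`lagrange`), so the boundary form
only depends on the weight `m = (∂_ν F)² / η`.  Either `m` is not integrable and the form vanishes,
because of the value `0` of undefined integrals (`bd_eq_zero`), or the representation applied to functions concentrated in a thin layer along
`∂D` (`layer_bound`), together with the Rellich vector field
`2 (∇F·∇f) ∇f - |∇f|² ∇F`, yields the trace inequality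
`∫_{∂D} m |∇f|² dσ ≤ C (‖∇f‖ ‖Δf‖ + ‖∇f‖²)` of `weighted_trace`.  Young's inequality
(`bd_young`, `bterm_bound`) then gives `solution_estimate`.
-/

open MeasureTheory Filter

noncomputable section

/-- Euclidean space `ℝ^d`. -/
abbrev Euc (d : ℕ) := EuclideanSpace ℝ (Fin d)

/-- The (classical) Laplacian of a function `f : ℝ^d → ℂ`. -/
def lap {d : ℕ} (f : Euc d → ℂ) (x : Euc d) : ℂ :=
  ∑ i : Fin d,
    iteratedFDeriv ℝ 2 f x ![EuclideanSpace.single i 1, EuclideanSpace.single i 1]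

/-- `D` has a boundary of class `C²`: near every boundary point, `D` is the sublevel
set of a `C²` defining function with nonvanishing gradient. -/
def BoundaryC2 {d : ℕ} (D : Set (Euc d)) : Prop :=
  ∀ x ∈ frontier D, ∃ ρ : Euc d → ℝ, ContDiff ℝ 2 ρ ∧ fderiv ℝ ρ x ≠ 0 ∧
    ∀ᶠ y in nhds x, (y ∈ D ↔ ρ y < 0)

/-- Membership in `X(D) = H²(D) ∩ H¹₀(D)` (classical formulation: twice continuously
differentiable with vanishing boundary trace). -/
def MemX {d : ℕ} (D : Set (Euc d)) (f : Euc d → ℂ) : Prop :=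
  ContDiff ℝ 2 f ∧ ∀ x ∈ frontier D, f x = 0

/-- Squared `L²(D)` norm. -/
def L2normSq {d : ℕ} (D : Set (Euc d)) (f : Euc d → ℂ) : ℝ := ∫ x in D, ‖f x‖ ^ 2

/-- Squared `X(D)` norm `‖Δf‖²_{L²(D)}`. -/
def XnormSq {d : ℕ} (D : Set (Euc d)) (f : Euc d → ℂ) : ℝ := L2normSq D (lap f)

/-- Squared `H¹(D)` norm. -/
def H1normSq {d : ℕ} (D : Set (Euc d)) (f : Euc d → ℂ) : ℝ :=
  ∫ x in D, (‖f x‖ ^ 2 + ‖fderiv ℝ f x‖ ^ 2)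

/-- Squared `H²(D)` norm. -/
def H2normSq {d : ℕ} (D : Set (Euc d)) (f : Euc d → ℂ) : ℝ :=
  ∫ x in D, (‖f x‖ ^ 2 + ‖fderiv ℝ f x‖ ^ 2 + ‖iteratedFDeriv ℝ 2 f x‖ ^ 2)

/-- The sesquilinear form `a(w,φ) = ∫_D (1/n) Δw Δφ̄ dx`. -/
def aform {d : ℕ} (D : Set (Euc d)) (n : Euc d → ℝ) (w φ : Euc d → ℂ) : ℂ :=
  ∫ x in D, ((1 / n x : ℝ) : ℂ) * lap w x * (starRingEnd ℂ) (lap φ x)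

/-- The sesquilinear form
`b(w,φ) = ∫_D ∇w·∇φ̄ dx − ∫_{∂D} (1/η) ∂_ν w ∂_ν φ̄ ds`,
where `σ` is the surface measure on `∂D` and `ν` the outward unit normal. -/
def bform {d : ℕ} (D : Set (Euc d)) (σ : Measure (Euc d)) (ν : Euc d → Euc d)
    (η : Euc d → ℝ) (w φ : Euc d → ℂ) : ℂ :=
  (∫ x in D, ∑ i : Fin d, fderiv ℝ w x (EuclideanSpace.single i 1) *
      (starRingEnd ℂ) (fderiv ℝ φ x (EuclideanSpace.single i 1)))
  - ∫ x in frontier D, ((1 / η x : ℝ) : ℂ) * fderiv ℝ w x (ν x) *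
      (starRingEnd ℂ) (fderiv ℝ φ x (ν x)) ∂σ

/-- `L²(D)` Fourier coefficient `(f, φ_j)_{L²(D)}`. -/
def fcoef {d : ℕ} (D : Set (Euc d)) (φ : ℕ → Euc d → ℂ) (f : Euc d → ℂ) (j : ℕ) : ℂ :=
  ∫ x in D, f x * (starRingEnd ℂ) (φ j x)

open scoped ContDiff ENNReal

/-! ### Partial derivatives and the Laplacian -/

/-- The standard basis vector `e_i` of `ℝ^d`. -/
abbrev ee {d : ℕ} (i : Fin d) : Euc d := EuclideanSpace.single i (1 : ℝ)

/-- The `i`-th partial derivative of a scalar function (real or complex valued). -/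
def pd {d : ℕ} {𝕜 : Type*} [RCLike 𝕜] (i : Fin d) (u : Euc d → 𝕜) (x : Euc d) : 𝕜 :=
  fderiv ℝ u x (ee i)

section basics
variable {d : ℕ} {𝕜 : Type*} [RCLike 𝕜]

lemma pd_contDiff {u : Euc d → 𝕜} {m n : WithTop ℕ∞} (hu : ContDiff ℝ n u) (hmn : m + 1 ≤ n)
    (i : Fin d) : ContDiff ℝ m (pd i u) :=
  (hu.fderiv_right hmn).clm_apply contDiff_const

lemma pd_contDiff_one {u : Euc d → 𝕜} (hu : ContDiff ℝ 2 u) (i : Fin d) :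
    ContDiff ℝ 1 (pd i u) := pd_contDiff hu (by norm_num) i

lemma pd_continuous {u : Euc d → 𝕜} (hu : ContDiff ℝ 1 u) (i : Fin d) :
    Continuous (pd i u) := (pd_contDiff (m := 0) hu (by norm_num) i).continuous

lemma pd_pd_continuous {u : Euc d → 𝕜} (hu : ContDiff ℝ 2 u) (i j : Fin d) :
    Continuous (pd i (pd j u)) := pd_continuous (pd_contDiff_one hu j) i

lemma pd_pd_eq {u : Euc d → 𝕜} (hu : ContDiff ℝ 2 u) (i j : Fin d) (x : Euc d) :
    pd i (pd j u) x = fderiv ℝ (fderiv ℝ u) x (ee i) (ee j) := by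
  have h1 : DifferentiableAt ℝ (fderiv ℝ u) x :=
    ((hu.fderiv_right (m := 1) (by norm_num)).differentiable (by norm_num)) x
  unfold pd
  rw [fderiv_clm_apply h1 (differentiableAt_const _)]
  simp

lemma pd_comm {u : Euc d → 𝕜} (hu : ContDiff ℝ 2 u) (i j : Fin d) (x : Euc d) :
    pd i (pd j u) x = pd j (pd i u) x := by
  rw [pd_pd_eq hu, pd_pd_eq hu]
  have := (hu.contDiffAt (x := x)).isSymmSndFDerivAt (by simp)
  exact this _ _

lemma lap_eq {u : Euc d → ℂ} (hu : ContDiff ℝ 2 u) (x : Euc d) :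
    lap u x = ∑ i, pd i (pd i u) x := by
  unfold lap
  refine Finset.sum_congr rfl fun i _ => ?_
  rw [iteratedFDeriv_two_apply, pd_pd_eq hu]
  simp

lemma lap_continuous {u : Euc d → ℂ} (hu : ContDiff ℝ 2 u) : Continuous (lap u) := by
  have : lap u = fun x => ∑ i, pd i (pd i u) x := funext (lap_eq hu)
  rw [this]
  exact continuous_finsetSum _ fun i _ => pd_pd_continuous hu i i

lemma pd_congr {u v : Euc d → 𝕜} {x : Euc d} (h : u =ᶠ[nhds x] v) (i : Fin d) :
    pd i u x = pd i v x := by unfold pd; rw [h.fderiv_eq]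

lemma pd_mul {u v : Euc d → 𝕜} {x : Euc d} (hu : DifferentiableAt ℝ u x)
    (hv : DifferentiableAt ℝ v x) (i : Fin d) :
    pd i (fun y => u y * v y) x = pd i u x * v x + u x * pd i v x := by
  unfold pd
  rw [fderiv_fun_mul hu hv]
  simp; ring

lemma pd_add {u v : Euc d → 𝕜} {x : Euc d} (hu : DifferentiableAt ℝ u x)
    (hv : DifferentiableAt ℝ v x) (i : Fin d) :
    pd i (fun y => u y + v y) x = pd i u x + pd i v x := by
  unfold pd
  rw [fderiv_fun_add hu hv]; simp

lemma pd_sub {u v : Euc d → 𝕜} {x : Euc d} (hu : DifferentiableAt ℝ u x)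
    (hv : DifferentiableAt ℝ v x) (i : Fin d) :
    pd i (fun y => u y - v y) x = pd i u x - pd i v x := by
  unfold pd
  rw [fderiv_fun_sub hu hv]; simp

lemma pd_const_mul {u : Euc d → 𝕜} {x : Euc d} (hu : DifferentiableAt ℝ u x) (c : 𝕜)
    (i : Fin d) : pd i (fun y => c * u y) x = c * pd i u x := by
  rw [pd_mul (differentiableAt_const c) hu]
  simp [pd]

lemma pd_sum {ι : Type*} {s : Finset ι} {u : ι → Euc d → 𝕜} {x : Euc d}
    (hu : ∀ j ∈ s, DifferentiableAt ℝ (u j) x) (i : Fin d) :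
    pd i (fun y => ∑ j ∈ s, u j y) x = ∑ j ∈ s, pd i (u j) x := by
  unfold pd
  rw [fderiv_fun_sum hu]; simp

lemma pd_ofReal {u : Euc d → ℝ} {x : Euc d} (hu : DifferentiableAt ℝ u x) (i : Fin d) :
    pd i (fun y => (u y : ℂ)) x = ((pd i u x : ℝ) : ℂ) := by
  unfold pd
  have := (Complex.ofRealCLM.hasFDerivAt (x := u x)).comp x hu.hasFDerivAt
  have h2 : fderiv ℝ (fun y => (u y : ℂ)) x = Complex.ofRealCLM.comp (fderiv ℝ u x) :=
    this.fderiv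
  rw [h2]; simp

lemma pd_conj {u : Euc d → ℂ} {x : Euc d} (hu : DifferentiableAt ℝ u x) (i : Fin d) :
    pd i (fun y => (starRingEnd ℂ) (u y)) x = (starRingEnd ℂ) (pd i u x) := by
  unfold pd
  have := ((Complex.conjCLE : ℂ →L[ℝ] ℂ).hasFDerivAt (x := u x)).comp x hu.hasFDerivAt
  have h2 : fderiv ℝ (fun y => (starRingEnd ℂ) (u y)) x
      = (Complex.conjCLE : ℂ →L[ℝ] ℂ).comp (fderiv ℝ u x) := this.fderiv
  rw [h2]; simp

lemma pd_re {u : Euc d → ℂ} {x : Euc d} (hu : DifferentiableAt ℝ u x) (i : Fin d) :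
    pd i (fun y => (u y).re) x = (pd i u x).re := by
  unfold pd
  have := (Complex.reCLM.hasFDerivAt (x := u x)).comp x hu.hasFDerivAt
  have h2 : fderiv ℝ (fun y => (u y).re) x = Complex.reCLM.comp (fderiv ℝ u x) :=
    this.fderiv
  rw [h2]; simp

lemma pd_im {u : Euc d → ℂ} {x : Euc d} (hu : DifferentiableAt ℝ u x) (i : Fin d) :
    pd i (fun y => (u y).im) x = (pd i u x).im := by
  unfold pd
  have := (Complex.imCLM.hasFDerivAt (x := u x)).comp x hu.hasFDerivAt
  have h2 : fderiv ℝ (fun y => (u y).im) x = Complex.imCLM.comp (fderiv ℝ u x) :=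
    this.fderiv
  rw [h2]; simp

lemma pd_comp {g : ℝ → ℝ} {u : Euc d → ℝ} {x : Euc d} (hg : DifferentiableAt ℝ g (u x))
    (hu : DifferentiableAt ℝ u x) (i : Fin d) :
    pd i (fun y => g (u y)) x = deriv g (u x) * pd i u x := by
  unfold pd
  have := (hg.hasDerivAt.comp_hasFDerivAt x hu.hasFDerivAt).fderiv
  have h2 : fderiv ℝ (fun y => g (u y)) x = deriv g (u x) • fderiv ℝ u x := this
  rw [h2]; simp

/-- A continuous function is integrable on a bounded set. -/
lemma integrableOn_of_continuous {E : Type*} [NormedAddCommGroup E] {D : Set (Euc d)}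
    (hDb : Bornology.IsBounded D) {u : Euc d → E} (hu : Continuous u) : IntegrableOn u D :=
  (hu.continuousOn.integrableOn_compact hDb.isCompact_closure).mono_set subset_closure

/-- A continuous function is bounded on a bounded set. -/
lemma exists_bound_of_continuous {E : Type*} [NormedAddCommGroup E] {D : Set (Euc d)}
    (hDb : Bornology.IsBounded D) {u : Euc d → E} (hu : Continuous u) :
    ∃ C : ℝ, 0 ≤ C ∧ ∀ x ∈ closure D, ‖u x‖ ≤ C := by
  obtain ⟨C, hC⟩ := hDb.isCompact_closure.exists_bound_of_continuousOn hu.continuousOn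
  exact ⟨max C 0, le_max_right _ _, fun x hx => (hC x hx).trans (le_max_left _ _)⟩

/-- The points of the zero set of a `C¹` function at which a given directional derivative does
not vanish form a null set: on each line in that direction they are isolated. -/
lemma null_zero_set {v : Euc d → 𝕜} (hv : ContDiff ℝ 1 v) (e : Euc d) :
    volume {x | v x = 0 ∧ fderiv ℝ v x e ≠ 0} = 0 := by
  have hm : MeasurableSet {x | v x = 0 ∧ fderiv ℝ v x e ≠ 0} := by
    apply MeasurableSet.inter
    · exact (isClosed_eq hv.continuous continuous_const).measurableSet
    · have : Continuous fun x => fderiv ℝ v x e :=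
        (hv.continuous_fderiv (by norm_num)).clm_apply continuous_const
      exact (isOpen_ne_fun this continuous_const).measurableSet
  have := MeasureTheory.ae_mem_of_ae_add_linearMap_mem
    (LinearMap.toSpanSingleton ℝ (Euc d) e) volume volume hm.compl ?_
  · exact (ae_iff.1 this |> fun h => by simpa using h)
  intro y
  rw [ae_iff]
  apply measure_null_of_locally_null
  intro t ht
  simp only [LinearMap.toSpanSingleton_apply, Set.mem_compl_iff, Set.mem_ofPred_eq, not_not] at ht
  have hd : HasDerivAt (fun s : ℝ => v (y + s • e)) (fderiv ℝ v (y + t • e) e) t := by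
    have h1 : HasDerivAt (fun s : ℝ => y + s • e) e t := by
      simpa using ((hasDerivAt_id t).smul_const e).const_add y
    exact ((hv.differentiable (by norm_num)) _).hasFDerivAt.comp_hasDerivAt t h1
  have hne := hd.eventually_ne (c := 0) ht.2
  have hU : {s : ℝ | s ≠ t → v (y + s • e) ≠ 0} ∈ nhds t := by
    rw [eventually_nhdsWithin_iff] at hne
    exact hne
  refine ⟨_, mem_nhdsWithin_of_mem_nhds hU |> fun h => inter_mem h self_mem_nhdsWithin, ?_⟩
  refine measure_mono_null (t := {t}) ?_ (by simp)
  rintro s ⟨hs1, hs2⟩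
  simp only [LinearMap.toSpanSingleton_apply, Set.mem_compl_iff, Set.mem_ofPred_eq, not_not] at hs2
  by_contra hne
  exact hs1 hne hs2.1

lemma ae_pd_eq_zero {v : Euc d → 𝕜} (hv : ContDiff ℝ 1 v) (i : Fin d) :
    ∀ᵐ x, v x = 0 → pd i v x = 0 := by
  have := null_zero_set hv (ee i)
  rw [ae_iff]
  convert this using 3
  simp [pd]
end basics

/-! ### Integration by parts for functions vanishing on the boundary -/

section trunc
variable {d : ℕ} {𝕜 : Type*} [RCLike 𝕜]

/-- Smooth soft thresholding: maps `g k` vanishing near `0`, equal to the identity away from `0`,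
with derivatives bounded uniformly in `k`. -/
lemma exists_threshold (𝕜 : Type*) [RCLike 𝕜] : ∃ (g : ℕ → 𝕜 → 𝕜) (C : ℝ), 0 ≤ C ∧ ∀ k,
    ContDiff ℝ 1 (g k) ∧ (∀ z, ‖z‖ ≤ 1 / ((k : ℝ) + 1) → g k z = 0) ∧
    (∀ z, 2 / ((k : ℝ) + 1) ≤ ‖z‖ → g k z = z) ∧ (∀ z, ‖g k z‖ ≤ C * ‖z‖) ∧
    (∀ z, ‖fderiv ℝ (g k) z‖ ≤ C) := by
  let b : ContDiffBump (0 : 𝕜) := ⟨1, 2, one_pos, one_lt_two⟩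
  have hb : ContDiff ℝ 1 (fun z : 𝕜 => b z • z) := b.contDiff.smul contDiff_id
  have hbs : HasCompactSupport (fun z : 𝕜 => b z • z) := b.hasCompactSupport.smul_right
  obtain ⟨C, hC⟩ := hb.lipschitzWith_of_hasCompactSupport hbs (by norm_num)
  let g0 : 𝕜 → 𝕜 := fun z => z - b z • z
  have hg0 : LipschitzWith (1 + C) g0 := LipschitzWith.id.sub hC
  have hg0c : ContDiff ℝ 1 g0 := contDiff_id.sub hb
  let g : ℕ → 𝕜 → 𝕜 := fun k z => ((k : ℝ) + 1)⁻¹ • g0 (((k : ℝ) + 1) • z)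
  have hgl : ∀ k, LipschitzWith (1 + C) (g k) := by
    intro k
    have hk : (0 : ℝ) < (k : ℝ) + 1 := by positivity
    refine LipschitzWith.of_dist_le_mul fun x y => ?_
    have := hg0.dist_le_mul (((k : ℝ) + 1) • x) (((k : ℝ) + 1) • y)
    simp only [g, dist_smul₀, Real.norm_eq_abs, abs_inv, abs_of_pos hk] at this ⊢
    rw [inv_mul_le_iff₀ hk]
    linarith
  refine ⟨g, (1 + C : NNReal), by positivity, fun k => ?_⟩
  have hk : (0 : ℝ) < (k : ℝ) + 1 := by positivity
  have hg00 : ∀ z, ‖z‖ ≤ 1 / ((k : ℝ) + 1) → g k z = 0 := by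
    intro z hz
    have : b (((k : ℝ) + 1) • z) = 1 := by
      apply b.one_of_mem_closedBall
      simp only [mem_closedBall_zero_iff, norm_smul, Real.norm_eq_abs, abs_of_pos hk, b]
      rwa [le_div_iff₀ hk, mul_comm] at hz
    simp [g, g0, this]
  refine ⟨?_, hg00, ?_, ?_, ?_⟩
  · exact (hg0c.comp (contDiff_id.const_smul _)).const_smul _
  · intro z hz
    have : b (((k : ℝ) + 1) • z) = 0 := by
      apply b.zero_of_le_dist
      simp only [dist_zero_right, norm_smul, Real.norm_eq_abs, abs_of_pos hk, b]
      rwa [div_le_iff₀ hk, mul_comm] at hz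
    simp only [g, g0, this, zero_smul, sub_zero]
    rw [inv_smul_smul₀ hk.ne']
  · intro z
    have := (hgl k).dist_le_mul z 0
    rwa [hg00 0 (by simp; positivity), dist_zero_right, dist_zero_right] at this
  · intro z
    exact norm_fderiv_le_of_lipschitz ℝ (hgl k)

/-- A `C¹` function vanishing on `∂D` is approximated, on the bounded open set `D`, by `C¹`
functions with compact support in `D` whose derivatives are dominated by its own. -/
lemma exists_approx (d : ℕ) (𝕜 : Type*) [RCLike 𝕜] : ∃ C : ℝ, 0 ≤ C ∧
    ∀ (D : Set (Euc d)), IsOpen D → Bornology.IsBounded D → ∀ κ : Euc d → 𝕜, ContDiff ℝ 1 κ →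
      (∀ x ∈ frontier D, κ x = 0) → ∃ ψ : ℕ → Euc d → 𝕜, ∀ k,
        ContDiff ℝ 1 (ψ k) ∧ HasCompactSupport (ψ k) ∧ (tsupport (ψ k) ⊆ D) ∧
        (∀ x, ‖ψ k x‖ ≤ C * ‖κ x‖) ∧
        (∀ x ∈ D, ∀ e, ‖fderiv ℝ (ψ k) x e‖ ≤ C * ‖fderiv ℝ κ x e‖) ∧
        (∀ x ∈ D, κ x ≠ 0 → ∀ᶠ k in atTop, ψ k =ᶠ[nhds x] κ) := by
  obtain ⟨g, C, hC, hg⟩ := exists_threshold 𝕜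
  refine ⟨C, hC, fun D hD hDb κ hκ hκ0 => ⟨fun k => D.indicator (fun x => g k (κ x)), fun k => ?_⟩⟩
  obtain ⟨hg1, hg2, hg3, hg4, hg5⟩ := hg k
  have hk : (0 : ℝ) < (k : ℝ) + 1 := by positivity
  set K : Set (Euc d) := closure D ∩ {x | 1 / ((k : ℝ) + 1) ≤ ‖κ x‖} with hK
  have hKc : IsCompact K :=
    hDb.isCompact_closure.inter_right (isClosed_le continuous_const hκ.continuous.norm)
  have hKD : K ⊆ D := by
    rintro x ⟨hx1, hx2⟩
    by_contra hx
    have : x ∈ frontier D := ⟨hx1, by rwa [hD.interior_eq]⟩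
    have h0 := hκ0 x this
    simp only [Set.mem_ofPred_eq, h0, norm_zero] at hx2
    have : 0 < 1 / ((k : ℝ) + 1) := by positivity
    linarith
  have hzero : ∀ x, x ∉ K → D.indicator (fun x => g k (κ x)) x = 0 := by
    intro x hx
    by_cases hxD : x ∈ D
    · rw [Set.indicator_of_mem hxD]
      apply hg2
      by_contra h
      exact hx ⟨subset_closure hxD, (not_le.1 h).le⟩
    · exact Set.indicator_of_notMem hxD _
  have hts : tsupport (D.indicator fun x => g k (κ x)) ⊆ K :=
    closure_minimal (Function.support_subset_iff'.2 hzero) hKc.isClosed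
  have hloc : ∀ (k : ℕ), ∀ x ∈ D,
      (D.indicator fun x => g k (κ x)) =ᶠ[nhds x] fun x => g k (κ x) := by
    intro k x hx
    filter_upwards [hD.mem_nhds hx] with y hy
    exact Set.indicator_of_mem hy _
  refine ⟨?_, HasCompactSupport.of_support_subset_isCompact hKc
    (subset_closure.trans hts), hts.trans hKD, ?_, ?_, ?_⟩
  · rw [contDiff_iff_contDiffAt]
    intro x
    by_cases hx : x ∈ K
    · exact (hg1.comp hκ).contDiffAt.congr_of_eventuallyEq (hloc k x (hKD hx))
    · refine (contDiffAt_const (c := (0 : 𝕜))).congr_of_eventuallyEq ?_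
      filter_upwards [hKc.isClosed.isOpen_compl.mem_nhds hx] with y hy
      exact hzero y hy
  · intro x
    by_cases hx : x ∈ D
    · simpa [Set.indicator_of_mem hx] using hg4 (κ x)
    · simp only [Set.indicator_of_notMem hx, norm_zero]; positivity
  · intro x hx e
    rw [(hloc k x hx).fderiv_eq]
    have h1 : HasFDerivAt (fun x => g k (κ x)) ((fderiv ℝ (g k) (κ x)).comp (fderiv ℝ κ x)) x :=
      ((hg1.differentiable (by norm_num)) _).hasFDerivAt.comp x
        ((hκ.differentiable (by norm_num)) x).hasFDerivAt
    rw [h1.fderiv]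
    exact ((fderiv ℝ (g k) (κ x)).le_opNorm _).trans
      (mul_le_mul_of_nonneg_right (hg5 _) (norm_nonneg _))
  · intro x hx hne
    have hlim : Tendsto (fun k : ℕ => 2 / ((k : ℝ) + 1)) atTop (nhds 0) := by
      have := (tendsto_one_div_add_atTop_nhds_zero_nat (𝕜 := ℝ)).const_mul 2
      simpa [div_eq_mul_inv] using this
    filter_upwards [hlim.eventually (gt_mem_nhds (norm_pos_iff.2 hne))] with k hk
    have : ∀ᶠ y in nhds x, 2 / ((k : ℝ) + 1) < ‖κ y‖ :=
      (continuous_const.tendsto x).eventually_lt (hκ.continuous.norm.tendsto x) hk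
    filter_upwards [hloc k x hx, this] with y hy1 hy2
    rw [hy1]
    exact (hg k).2.2.1 _ hy2.le

/-- Integration by parts on `D`, without boundary term, for `κ` vanishing on `∂D`. -/
lemma ibp {D : Set (Euc d)} (hD : IsOpen D) (hDb : Bornology.IsBounded D) {κ w : Euc d → 𝕜}
    (hκ : ContDiff ℝ 1 κ) (hκ0 : ∀ x ∈ frontier D, κ x = 0) (hw : ContDiff ℝ 1 w) (i : Fin d) :
    ∫ x in D, pd i κ x * w x = - ∫ x in D, κ x * pd i w x := by
  obtain ⟨C, hC, h⟩ := exists_approx d 𝕜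
  obtain ⟨ψ, hψ⟩ := h D hD hDb κ hκ hκ0
  have hk : ∀ k, ∫ x in D, pd i (ψ k) x * w x = - ∫ x in D, ψ k x * pd i w x := by
    intro k
    obtain ⟨h1, h2, h3, -⟩ := hψ k
    have hz : ∀ x, x ∉ D → ψ k x = 0 := fun x hx =>
      image_eq_zero_of_notMem_tsupport fun h => hx (h3 h)
    have hz' : ∀ x, x ∉ D → pd i (ψ k) x = 0 := by
      intro x hx
      have : x ∉ tsupport (fderiv ℝ (ψ k)) := fun h => hx (h3 (tsupport_fderiv_subset ℝ h))
      have := image_eq_zero_of_notMem_tsupport this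
      simp [pd, this]
    rw [setIntegral_eq_integral_of_forall_compl_eq_zero (fun x hx => by simp [hz' x hx]),
      setIntegral_eq_integral_of_forall_compl_eq_zero (fun x hx => by simp [hz x hx])]
    have hs : HasCompactSupport (pd i (ψ k)) := h2.fderiv_apply ℝ (ee i)
    have := integral_mul_fderiv_eq_neg_fderiv_mul_of_integrable (𝕜 := 𝕜) (μ := volume)
      (f := ψ k) (g := w) (v := ee i)
      (((pd_continuous h1 i).mul hw.continuous).integrable_of_hasCompactSupport hs.mul_right)
      ((h1.continuous.mul (pd_continuous hw i)).integrable_of_hasCompactSupport h2.mul_right)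
      ((h1.continuous.mul hw.continuous).integrable_of_hasCompactSupport h2.mul_right)
      (fun x _ => (h1.differentiable (by norm_num)) x)
      (fun x _ => (hw.differentiable (by norm_num)) x)
    unfold pd
    rw [this, neg_neg]
  have e1 : ∀ᵐ x ∂(volume.restrict D),
      Tendsto (fun k => pd i (ψ k) x * w x) atTop (nhds (pd i κ x * w x)) := by
    filter_upwards [ae_restrict_mem hD.measurableSet, ae_restrict_of_ae (ae_pd_eq_zero hκ i)]
      with x hx h0
    by_cases hκx : κ x = 0
    · have : ∀ k, pd i (ψ k) x = 0 := fun k => by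
        have := (hψ k).2.2.2.2.1 x hx (ee i)
        have h0' : fderiv ℝ κ x (ee i) = 0 := h0 hκx
        rw [h0', norm_zero, mul_zero] at this
        exact norm_le_zero_iff.1 this
      simp [this, h0 hκx]
    · refine tendsto_const_nhds.congr' ?_
      filter_upwards [(hψ 0).2.2.2.2.2 x hx hκx] with k hk
      rw [pd_congr hk]
  have e2 : ∀ᵐ x ∂(volume.restrict D),
      Tendsto (fun k => ψ k x * pd i w x) atTop (nhds (κ x * pd i w x)) := by
    filter_upwards [ae_restrict_mem hD.measurableSet] with x hx
    by_cases hκx : κ x = 0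
    · have : ∀ k, ψ k x = 0 := fun k => by
        have := (hψ k).2.2.2.1 x
        rw [hκx, norm_zero, mul_zero] at this
        exact norm_le_zero_iff.1 this
      simp [this, hκx]
    · refine tendsto_const_nhds.congr' ?_
      filter_upwards [(hψ 0).2.2.2.2.2 x hx hκx] with k hk
      rw [hk.self_of_nhds]
  have c1 := pd_continuous hκ i
  have c2 := pd_continuous hw i
  have l1 := tendsto_integral_of_dominated_convergence
    (bound := fun x => C * ‖pd i κ x‖ * ‖w x‖) (μ := volume.restrict D)
    (F := fun k x => pd i (ψ k) x * w x)
    (fun k => (((pd_continuous (hψ k).1 i).mul hw.continuous).aestronglyMeasurable))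
    (integrableOn_of_continuous hDb ((continuous_const.mul c1.norm).mul hw.continuous.norm))
    (fun k => by
      filter_upwards [ae_restrict_mem hD.measurableSet] with x hx
      rw [norm_mul]
      exact mul_le_mul_of_nonneg_right ((hψ k).2.2.2.2.1 x hx _) (norm_nonneg _)) e1
  have l2 := tendsto_integral_of_dominated_convergence
    (bound := fun x => C * ‖κ x‖ * ‖pd i w x‖) (μ := volume.restrict D)
    (F := fun k x => ψ k x * pd i w x)
    (fun k => ((((hψ k).1.continuous).mul c2).aestronglyMeasurable))
    (integrableOn_of_continuous hDb
      ((continuous_const.mul hκ.continuous.norm).mul c2.norm))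
    (fun k => by
      filter_upwards with x
      rw [norm_mul]
      exact mul_le_mul_of_nonneg_right ((hψ k).2.2.2.1 x) (norm_nonneg _)) e2
  refine tendsto_nhds_unique l1 ?_
  simp_rw [hk]
  exact l2.neg
end trunc

/-! ### Energy estimates on `X(D)` -/

section energy
variable {d : ℕ} {𝕜 : Type*} [RCLike 𝕜]

/-- The Dirichlet energy `∫_D |∇u|²`. -/
def gradSq {𝕜 : Type*} [RCLike 𝕜] (D : Set (Euc d)) (u : Euc d → 𝕜) : ℝ :=
  ∫ x in D, ∑ i, ‖pd i u x‖ ^ 2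

lemma gradSq_nonneg (D : Set (Euc d)) (u : Euc d → 𝕜) : 0 ≤ gradSq D u :=
  integral_nonneg fun _ => Finset.sum_nonneg fun _ _ => by positivity

lemma L2normSq_nonneg (D : Set (Euc d)) (u : Euc d → ℂ) : 0 ≤ L2normSq D u :=
  integral_nonneg fun _ => by positivity

/-- Cauchy–Schwarz for continuous functions on a bounded set. -/
lemma cs_real {D : Set (Euc d)} (hDb : Bornology.IsBounded D) {a b : Euc d → ℝ}
    (ha : Continuous a) (hb : Continuous b) :
    ∫ x in D, |a x| * |b x| ≤ √(∫ x in D, a x ^ 2) * √(∫ x in D, b x ^ 2) := by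
  have : IsFiniteMeasure (volume.restrict D) :=
    ⟨by simpa using hDb.measure_lt_top⟩
  have hm : ∀ {c : Euc d → ℝ}, Continuous c →
      MemLp c (ENNReal.ofReal 2) (volume.restrict D) := by
    intro c hc
    rw [show ENNReal.ofReal 2 = 2 by simp, memLp_two_iff_integrable_sq hc.aestronglyMeasurable]
    exact integrableOn_of_continuous hDb (hc.pow 2)
  have := integral_mul_norm_le_Lp_mul_Lq (Real.HolderConjugate.two_two) (hm ha) (hm hb)
  simp only [Real.norm_eq_abs, Real.rpow_two, sq_abs] at this
  rwa [← Real.sqrt_eq_rpow, ← Real.sqrt_eq_rpow] at this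

lemma cs_complex {D : Set (Euc d)} (hDb : Bornology.IsBounded D) {u v : Euc d → ℂ}
    (hu : Continuous u) (hv : Continuous v) :
    ‖∫ x in D, u x * (starRingEnd ℂ) (v x)‖ ≤ √(L2normSq D u) * √(L2normSq D v) := by
  refine (norm_integral_le_integral_norm _).trans ?_
  have := cs_real hDb hu.norm hv.norm
  simpa [L2normSq] using this

lemma sum_continuous {f : Fin d → Euc d → 𝕜} (h : ∀ i, Continuous (f i)) :
    Continuous fun x => ∑ i, f i x := continuous_finsetSum _ fun i _ => h i

lemma conj_continuous {v : Euc d → ℂ} (hv : Continuous v) :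
    Continuous fun x => (starRingEnd ℂ) (v x) := Complex.continuous_conj.comp hv

lemma conj_contDiff {v : Euc d → ℂ} {n : WithTop ℕ∞} (hv : ContDiff ℝ n v) :
    ContDiff ℝ n fun x => (starRingEnd ℂ) (v x) :=
  (Complex.conjCLE : ℂ →L[ℝ] ℂ).contDiff.comp hv

lemma ofReal_contDiff {v : Euc d → ℝ} {n : WithTop ℕ∞} (hv : ContDiff ℝ n v) :
    ContDiff ℝ n fun x => ((v x : ℝ) : ℂ) := Complex.ofRealCLM.contDiff.comp hv

lemma re_contDiff {v : Euc d → ℂ} {n : WithTop ℕ∞} (hv : ContDiff ℝ n v) :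
    ContDiff ℝ n fun x => (v x).re := Complex.reCLM.contDiff.comp hv

lemma im_contDiff {v : Euc d → ℂ} {n : WithTop ℕ∞} (hv : ContDiff ℝ n v) :
    ContDiff ℝ n fun x => (v x).im := Complex.imCLM.contDiff.comp hv

/-- Green's identity for `f` vanishing on `∂D`. -/
lemma green {D : Set (Euc d)} (hD : IsOpen D) (hDb : Bornology.IsBounded D) {f φ : Euc d → ℂ}
    (hf : ContDiff ℝ 1 f) (hf0 : ∀ x ∈ frontier D, f x = 0) (hφ : ContDiff ℝ 2 φ) :
    ∫ x in D, ∑ i, pd i f x * (starRingEnd ℂ) (pd i φ x)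
      = - ∫ x in D, f x * (starRingEnd ℂ) (lap φ x) := by
  have h1 : ∀ i, ∫ x in D, pd i f x * (starRingEnd ℂ) (pd i φ x)
      = - ∫ x in D, f x * (starRingEnd ℂ) (pd i (pd i φ) x) := by
    intro i
    have := ibp hD hDb hf hf0 (conj_contDiff (pd_contDiff_one hφ i)) i
    rw [this]
    congr 2; ext x
    rw [pd_conj (((pd_contDiff_one hφ i).differentiable (by norm_num)) x)]
  rw [integral_finsetSum]
  · simp_rw [h1, lap_eq hφ, map_sum, Finset.mul_sum]
    rw [integral_finsetSum]
    · simp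
    · intro i _
      exact integrableOn_of_continuous hDb
        (hf.continuous.mul (conj_continuous (pd_pd_continuous hφ i i)))
  · intro i _
    exact integrableOn_of_continuous hDb
      ((pd_continuous hf i).mul (conj_continuous (pd_continuous (hφ.of_le (by norm_num)) i)))

/-- Interpolation: `‖∇f‖² ≤ ‖f‖ ‖Δf‖` on `X(D)`. -/
lemma gradSq_le {D : Set (Euc d)} (hD : IsOpen D) (hDb : Bornology.IsBounded D) {f : Euc d → ℂ}
    (hf : MemX D f) : gradSq D f ≤ √(L2normSq D f) * √(XnormSq D f) := by
  have h := green hD hDb (hf.1.of_le (by norm_num)) hf.2 hf.1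
  have h2 := cs_complex hDb hf.1.continuous (lap_continuous hf.1)
  have h3 : ((gradSq D f : ℝ) : ℂ) = ∫ x in D, ∑ i, pd i f x * (starRingEnd ℂ) (pd i f x) := by
    unfold gradSq
    rw [← integral_complex_ofReal]
    congr 1; ext x
    push_cast
    refine Finset.sum_congr rfl fun i _ => ?_
    rw [Complex.mul_conj, Complex.normSq_eq_norm_sq]; push_cast; rfl
  rw [← h3] at h
  calc gradSq D f = ‖((gradSq D f : ℝ) : ℂ)‖ := by
        rw [Complex.norm_real, Real.norm_eq_abs, abs_of_nonneg (gradSq_nonneg D f)]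
    _ ≤ _ := by rw [h, norm_neg]; exact h2

/-- Poincaré's inequality. -/
lemma poincare [NeZero d] {D : Set (Euc d)} (hD : IsOpen D) (hDb : Bornology.IsBounded D) :
    ∃ C : ℝ, 0 ≤ C ∧ ∀ f : Euc d → ℂ, ContDiff ℝ 1 f → (∀ x ∈ frontier D, f x = 0) →
      √(L2normSq D f) ≤ C * √(gradSq D f) := by
  let i : Fin d := 0
  let w : Euc d → ℂ := fun x => ((x i : ℝ) : ℂ)
  have hwr : ContDiff ℝ 1 (fun x : Euc d => x i) :=
    (EuclideanSpace.proj (𝕜 := ℝ) i : Euc d →L[ℝ] ℝ).contDiff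
  have hw : ContDiff ℝ 1 w := ofReal_contDiff hwr
  have hwd : ∀ x, pd i w x = 1 := by
    intro x
    rw [pd_ofReal ((hwr.differentiable (by norm_num)) x)]
    have : fderiv ℝ (fun x : Euc d => x i) x = (EuclideanSpace.proj (𝕜 := ℝ) i : Euc d →L[ℝ] ℝ) :=
      (EuclideanSpace.proj (𝕜 := ℝ) i : Euc d →L[ℝ] ℝ).fderiv
    unfold pd
    rw [this]; simp
  obtain ⟨R, hR0, hR⟩ := exists_bound_of_continuous hDb hw.continuous
  refine ⟨2 * R, by positivity, fun f hf hf0 => ?_⟩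
  have hκ : ContDiff ℝ 1 (fun x => f x * (starRingEnd ℂ) (f x)) := hf.mul (conj_contDiff hf)
  have h := ibp hD hDb hκ (fun x hx => by simp [hf0 x hx]) hw i
  have hdf : Differentiable ℝ f := hf.differentiable (by norm_num)
  have e1 : ((L2normSq D f : ℝ) : ℂ) = ∫ x in D, f x * (starRingEnd ℂ) (f x) * pd i w x := by
    unfold L2normSq
    rw [← integral_complex_ofReal]
    congr 1; ext x
    rw [hwd, mul_one, Complex.mul_conj, Complex.normSq_eq_norm_sq]
  have e2 : L2normSq D f ≤ 2 * R * (√(L2normSq D f) * √(gradSq D f)) := by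
    calc L2normSq D f = ‖((L2normSq D f : ℝ) : ℂ)‖ := by
          rw [Complex.norm_real, Real.norm_eq_abs, abs_of_nonneg (L2normSq_nonneg D f)]
      _ = ‖∫ x in D, pd i (fun x => f x * (starRingEnd ℂ) (f x)) x * w x‖ := by
          rw [e1, h, norm_neg]
      _ ≤ ∫ x in D, 2 * R * (|‖f x‖| * |‖pd i f x‖|) := by
          refine norm_integral_le_of_norm_le (integrableOn_of_continuous hDb
            (continuous_const.mul (hf.continuous.norm.abs.mul (pd_continuous hf i).norm.abs))) ?_
          filter_upwards [ae_restrict_mem hD.measurableSet] with x hx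
          have := hR x (subset_closure hx)
          rw [pd_mul (hdf x) ((conj_contDiff hf).differentiable (by norm_num) x), pd_conj (hdf x),
            norm_mul]
          have h1 : ‖pd i f x * (starRingEnd ℂ) (f x) + f x * (starRingEnd ℂ) (pd i f x)‖
              ≤ 2 * (‖f x‖ * ‖pd i f x‖) := by
            refine (norm_add_le _ _).trans ?_
            simp only [norm_mul, RCLike.norm_conj]; linarith
          calc _ ≤ 2 * (‖f x‖ * ‖pd i f x‖) * R :=
                mul_le_mul h1 this (norm_nonneg _) (by positivity)
            _ = _ := by simp only [abs_norm]; ring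
      _ = 2 * R * ∫ x in D, |‖f x‖| * |‖pd i f x‖| := integral_const_mul _ _
      _ ≤ 2 * R * (√(∫ x in D, ‖f x‖ ^ 2) * √(∫ x in D, ‖pd i f x‖ ^ 2)) :=
          mul_le_mul_of_nonneg_left (cs_real hDb hf.continuous.norm (pd_continuous hf i).norm)
            (by positivity)
      _ ≤ _ := by
          refine mul_le_mul_of_nonneg_left (mul_le_mul_of_nonneg_left (Real.sqrt_le_sqrt ?_)
            (by positivity)) (by positivity)
          refine integral_mono
            (integrableOn_of_continuous hDb ((pd_continuous hf i).norm.pow 2))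
            (integrableOn_of_continuous hDb
              (sum_continuous fun i => (pd_continuous hf i).norm.pow 2)) ?_
          intro x
          exact Finset.single_le_sum (f := fun i => ‖pd i f x‖ ^ 2)
            (fun _ _ => by positivity) (Finset.mem_univ i)
  have hs := Real.sq_sqrt (L2normSq_nonneg D f)
  rcases (Real.sqrt_nonneg (L2normSq D f)).eq_or_lt with h0 | h0
  · rw [← h0]; positivity
  · nlinarith

/-- On `X(D)` the `L²` norm and the gradient norm are controlled by `‖Δf‖`. -/
lemma energy_bounds [NeZero d] {D : Set (Euc d)} (hD : IsOpen D) (hDb : Bornology.IsBounded D) :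
    ∃ C : ℝ, 0 ≤ C ∧ ∀ f : Euc d → ℂ, MemX D f →
      √(L2normSq D f) ≤ C * √(XnormSq D f) ∧ √(gradSq D f) ≤ C * √(XnormSq D f) := by
  obtain ⟨C, hC, h⟩ := poincare hD hDb
  have key : ∀ f : Euc d → ℂ, MemX D f → √(gradSq D f) ≤ C * √(XnormSq D f) := by
    intro f hf
    have h1 := gradSq_le hD hDb hf
    have h2 := h f (hf.1.of_le (by norm_num)) hf.2
    have hs := Real.sq_sqrt (gradSq_nonneg D f)
    have hx := Real.sqrt_nonneg (XnormSq D f)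
    rcases (Real.sqrt_nonneg (gradSq D f)).eq_or_lt with h0 | h0
    · rw [← h0]; positivity
    · have := mul_le_mul_of_nonneg_right h2 hx
      nlinarith
  refine ⟨max C (C * C), le_max_of_le_left hC, fun f hf => ⟨?_, ?_⟩⟩
  · refine (h f (hf.1.of_le (by norm_num)) hf.2).trans ?_
    calc C * √(gradSq D f) ≤ C * (C * √(XnormSq D f)) := mul_le_mul_of_nonneg_left (key f hf) hC
      _ = C * C * √(XnormSq D f) := by ring
      _ ≤ _ := mul_le_mul_of_nonneg_right (le_max_right _ _) (Real.sqrt_nonneg _)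
  · exact (key f hf).trans (mul_le_mul_of_nonneg_right (le_max_left _ _) (Real.sqrt_nonneg _))
end energy

/-! ### Rellich compactness -/

section rellich
variable {d : ℕ}

/-- Jensen's inequality for the square of the norm. -/
lemma enorm_integral_sq_le {α E : Type*} [MeasurableSpace α] [NormedAddCommGroup E]
    [NormedSpace ℝ E] {μ : Measure α} [IsProbabilityMeasure μ] {g : α → E}
    (hg : AEStronglyMeasurable g μ) : ‖∫ x, g x ∂μ‖ₑ ^ 2 ≤ ∫⁻ x, ‖g x‖ₑ ^ 2 ∂μ := by
  have h1 : ‖∫ x, g x ∂μ‖ₑ ≤ eLpNorm g 1 μ := by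
    rw [eLpNorm_one_eq_lintegral_enorm]; exact enorm_integral_le_lintegral_enorm _
  have h2 := h1.trans (eLpNorm_le_eLpNorm_of_exponent_le (by norm_num : (1 : ℝ≥0∞) ≤ 2) hg)
  calc ‖∫ x, g x ∂μ‖ₑ ^ 2 ≤ (eLpNorm g 2 μ) ^ 2 := by gcongr
    _ = ∫⁻ x, ‖g x‖ₑ ^ 2 ∂μ := by
      have := eLpNorm_nnreal_pow_eq_lintegral (f := g) (p := 2) (μ := μ) (by norm_num)
      simpa using this

/-- `L²` continuity of translations for `C¹` functions on the whole space: the fundamental theorem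
of calculus along the segment, then Jensen and Tonelli. -/
lemma translation_test {ψ : Euc d → ℂ} (hψ : ContDiff ℝ 1 ψ) (y : Euc d) :
    ∫⁻ x, ‖ψ x - ψ (x - y)‖ₑ ^ 2 ≤ ∫⁻ x, ‖fderiv ℝ ψ x y‖ₑ ^ 2 := by
  have hDc : Continuous fun x => fderiv ℝ ψ x y :=
    (hψ.continuous_fderiv (by norm_num)).clm_apply continuous_const
  let μ : Measure ℝ := volume.restrict (Set.Ioc (0 : ℝ) 1)
  have : IsProbabilityMeasure μ := ⟨by simp [μ]⟩
  have hpt : ∀ x, ‖ψ x - ψ (x - y)‖ₑ ^ 2 ≤ ∫⁻ t, ‖fderiv ℝ ψ (x - y + t • y) y‖ₑ ^ 2 ∂μ := by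
    intro x
    have hd : ∀ t : ℝ, HasDerivAt (fun t : ℝ => ψ (x - y + t • y))
        (fderiv ℝ ψ (x - y + t • y) y) t := by
      intro t
      have h1 : HasDerivAt (fun t : ℝ => x - y + t • y) y t := by
        simpa using ((hasDerivAt_id t).smul_const y).const_add (x - y)
      exact ((hψ.differentiable (by norm_num)) _).hasFDerivAt.comp_hasDerivAt t h1
    have hc : Continuous fun t : ℝ => fderiv ℝ ψ (x - y + t • y) y :=
      hDc.comp (by fun_prop)
    have h2 := intervalIntegral.integral_eq_sub_of_hasDerivAt (a := 0) (b := 1)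
      (fun t _ => hd t) (hc.intervalIntegrable _ _)
    rw [intervalIntegral.integral_of_le zero_le_one] at h2
    have h3 : ψ x - ψ (x - y) = ∫ t, fderiv ℝ ψ (x - y + t • y) y ∂μ := by
      rw [h2]; simp
    rw [h3]
    exact enorm_integral_sq_le hc.aestronglyMeasurable
  refine (lintegral_mono hpt).trans ?_
  rw [lintegral_lintegral_swap]
  · have : ∀ t : ℝ, ∫⁻ x, ‖fderiv ℝ ψ (x - y + t • y) y‖ₑ ^ 2 = ∫⁻ x, ‖fderiv ℝ ψ x y‖ₑ ^ 2 := by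
      intro t
      have := lintegral_add_right_eq_self (μ := (volume : Measure (Euc d)))
        (fun x => ‖fderiv ℝ ψ x y‖ₑ ^ 2) (-y + t • y)
      rw [← this]
      congr 1; ext x; rw [← add_assoc, ← sub_eq_add_neg]
    simp_rw [this]
    simp
  · apply Measurable.aemeasurable
    apply Measurable.pow_const
    apply Measurable.enorm
    apply Continuous.measurable
    exact hDc.comp (by fun_prop)

lemma norm_fderiv_le_pd {κ : Euc d → ℂ} (x y : Euc d) :
    ‖fderiv ℝ κ x y‖ ^ 2 ≤ ‖y‖ ^ 2 * ∑ i, ‖pd i κ x‖ ^ 2 := by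
  have h1 : fderiv ℝ κ x y = ∑ i, (y i) • pd i κ x := by
    have : y = ∑ i, y i • ee i := by
      ext j; simp [ee, Finset.sum_apply, Pi.single_apply]
    conv_lhs => rw [this]
    simp [pd]
  rw [h1, EuclideanSpace.norm_sq_eq]
  calc ‖∑ i, y i • pd i κ x‖ ^ 2 ≤ (∑ i, ‖y i‖ * ‖pd i κ x‖) ^ 2 := by
        gcongr
        refine (norm_sum_le _ _).trans (le_of_eq ?_)
        simp
    _ ≤ _ := Finset.sum_mul_sq_le_sq_mul_sq _ _ _

/-- `L²` continuity of translations, for the extension by zero of a function vanishing on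
`∂D`. -/
lemma translation_est (d : ℕ) : ∃ C : ℝ, 0 ≤ C ∧ ∀ D : Set (Euc d), IsOpen D →
    Bornology.IsBounded D → ∀ κ : Euc d → ℂ, ContDiff ℝ 1 κ → (∀ x ∈ frontier D, κ x = 0) →
    ∀ y : Euc d, ∫⁻ x, ‖D.indicator κ x - D.indicator κ (x - y)‖ₑ ^ 2 ≤
      ENNReal.ofReal (C * ‖y‖ ^ 2 * gradSq D κ) := by
  obtain ⟨C, hC, h⟩ := exists_approx d ℂ
  refine ⟨C ^ 2, by positivity, fun D hD hDb κ hκ hκ0 y => ?_⟩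
  obtain ⟨ψ, hψ⟩ := h D hD hDb κ hκ hκ0
  have hz : ∀ k x, x ∉ D → ψ k x = 0 := fun k x hx =>
    image_eq_zero_of_notMem_tsupport fun h => hx ((hψ k).2.2.1 h)
  have hlim : ∀ x, Tendsto (fun k => ψ k x) atTop (nhds (D.indicator κ x)) := by
    intro x
    by_cases hx : x ∈ D
    · rw [Set.indicator_of_mem hx]
      by_cases h0 : κ x = 0
      · have : ∀ k, ψ k x = 0 := fun k => by
          have := (hψ k).2.2.2.1 x
          rw [h0, norm_zero, mul_zero] at this
          exact norm_le_zero_iff.1 this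
        simp [this, h0]
      · refine tendsto_const_nhds.congr' ?_
        filter_upwards [(hψ 0).2.2.2.2.2 x hx h0] with k hk
        exact hk.eq_of_nhds.symm
    · rw [Set.indicator_of_notMem hx]
      simp [hz _ _ hx]
  have hb : ∀ k, ∫⁻ x, ‖ψ k x - ψ k (x - y)‖ₑ ^ 2 ≤
      ENNReal.ofReal (C ^ 2 * ‖y‖ ^ 2 * gradSq D κ) := by
    intro k
    obtain ⟨h1, h2, h3, h4, h5, h6⟩ := hψ k
    refine (translation_test h1 y).trans ?_
    have e1 : ∫⁻ x, ‖fderiv ℝ (ψ k) x y‖ₑ ^ 2 = ∫⁻ x in D, ‖fderiv ℝ (ψ k) x y‖ₑ ^ 2 := by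
      rw [← lintegral_indicator hD.measurableSet]
      congr 1; ext x
      by_cases hx : x ∈ D
      · simp [hx]
      · have : fderiv ℝ (ψ k) x = 0 := by
          have : x ∉ tsupport (ψ k) := fun h => hx (h3 h)
          exact image_eq_zero_of_notMem_tsupport fun h => this (tsupport_fderiv_subset ℝ h)
        simp [hx, this]
    rw [e1]
    have hi : IntegrableOn (fun x => C ^ 2 * ‖y‖ ^ 2 * ∑ i, ‖pd i κ x‖ ^ 2) D := by
      apply integrableOn_of_continuous hDb
      exact continuous_const.mul (sum_continuous fun i => (pd_continuous hκ i).norm.pow 2)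
    have e2 : C ^ 2 * ‖y‖ ^ 2 * gradSq D κ = ∫ x in D, C ^ 2 * ‖y‖ ^ 2 * ∑ i, ‖pd i κ x‖ ^ 2 := by
      rw [integral_const_mul]; rfl
    rw [e2, ofReal_integral_eq_lintegral_ofReal hi (Eventually.of_forall fun x => by positivity)]
    refine setLIntegral_mono' hD.measurableSet fun x hx => ?_
    rw [← ofReal_norm, ← ENNReal.ofReal_pow (norm_nonneg _)]
    apply ENNReal.ofReal_le_ofReal
    calc ‖fderiv ℝ (ψ k) x y‖ ^ 2 ≤ (C * ‖fderiv ℝ κ x y‖) ^ 2 := by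
          gcongr; exact h5 x hx y
      _ = C ^ 2 * ‖fderiv ℝ κ x y‖ ^ 2 := by ring
      _ ≤ C ^ 2 * (‖y‖ ^ 2 * ∑ i, ‖pd i κ x‖ ^ 2) := by
          gcongr; exact norm_fderiv_le_pd x y
      _ = _ := by ring
  have hl : ∀ x, ‖D.indicator κ x - D.indicator κ (x - y)‖ₑ ^ 2
      = liminf (fun k => ‖ψ k x - ψ k (x - y)‖ₑ ^ 2) atTop := by
    intro x
    refine (Tendsto.liminf_eq ?_).symm
    exact ((ENNReal.continuous_pow 2).tendsto _).comp ((hlim x).sub (hlim (x - y))).enorm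
  simp_rw [hl]
  refine (lintegral_liminf_le fun k => ?_).trans ?_
  · have : Continuous (ψ k) := (hψ k).1.continuous
    fun_prop
  · refine (liminf_le_liminf (Eventually.of_forall hb)).trans ?_
    simp

end rellich

section rellich2
variable {d : ℕ}

/-- The mean over `ball x δ` of the extension by zero of `κ`. -/
def ballMean (D : Set (Euc d)) (δ : ℝ) (κ : Euc d → ℂ) (x : Euc d) : ℂ :=
  ∫ y, D.indicator κ (x - y) ∂(ProbabilityTheory.cond volume (Metric.ball (0 : Euc d) δ))

lemma cond_ball_prob {δ : ℝ} (hδ : 0 < δ) :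
    IsProbabilityMeasure (ProbabilityTheory.cond volume (Metric.ball (0 : Euc d) δ)) :=
  ProbabilityTheory.cond_isProbabilityMeasure_of_finite (Metric.measure_ball_pos volume _ hδ).ne'
    measure_ball_lt_top.ne

lemma ballMean_eq {D : Set (Euc d)} (hD : IsOpen D) (δ : ℝ) (κ : Euc d → ℂ)
    (x : Euc d) : ballMean D δ κ x =
      (volume (Metric.ball (0 : Euc d) δ)).toReal⁻¹ •
        ∫ y in Metric.ball x δ, κ y ∂(volume.restrict D) := by
  unfold ballMean ProbabilityTheory.cond
  rw [integral_smul_measure, ENNReal.toReal_inv]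
  congr 1
  rw [← integral_indicator Metric.isOpen_ball.measurableSet,
    ← integral_indicator Metric.isOpen_ball.measurableSet, ← integral_indicator hD.measurableSet]
  rw [← integral_sub_left_eq_self _ volume x]
  congr 1; ext y
  by_cases h1 : y ∈ Metric.ball x δ <;> by_cases h2 : y ∈ D <;>
  · have h3 : x - y ∈ Metric.ball (0 : Euc d) δ ↔ y ∈ Metric.ball x δ := by
      rw [mem_ball_zero_iff, Metric.mem_ball, dist_eq_norm, norm_sub_rev]
    simp [Set.indicator, h1, h2, h3, -Metric.mem_ball]

lemma indicator_sm {D : Set (Euc d)} (hD : IsOpen D) {κ : Euc d → ℂ} (hκ : Continuous κ) :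
    StronglyMeasurable (D.indicator κ) := hκ.stronglyMeasurable.indicator hD.measurableSet

lemma ballMean_sm {D : Set (Euc d)} (hD : IsOpen D) {κ : Euc d → ℂ} (hκ : Continuous κ)
    {δ : ℝ} (hδ : 0 < δ) : StronglyMeasurable (ballMean D δ κ) := by
  have := cond_ball_prob (d := d) hδ
  unfold ballMean
  refine StronglyMeasurable.integral_prod_right (f := fun x y => D.indicator κ (x - y)) ?_
  exact (indicator_sm hD hκ).comp_measurable (by fun_prop)

/-- Approximation of `κ` by its ball means, with an error controlled by the gradient. -/
lemma mean_est (d : ℕ) : ∃ C : ℝ, 0 ≤ C ∧ ∀ D : Set (Euc d), IsOpen D →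
    Bornology.IsBounded D → ∀ κ : Euc d → ℂ, ContDiff ℝ 1 κ → (∀ x ∈ frontier D, κ x = 0) →
    ∀ δ > 0, ∫⁻ x in D, ‖κ x - ballMean D δ κ x‖ₑ ^ 2 ≤
      ENNReal.ofReal (C * δ ^ 2 * gradSq D κ) := by
  obtain ⟨C, hC, h⟩ := translation_est d
  refine ⟨C, hC, fun D hD hDb κ hκ hκ0 δ hδ => ?_⟩
  have hP := cond_ball_prob (d := d) hδ
  set μ := ProbabilityTheory.cond volume (Metric.ball (0 : Euc d) δ) with hμ
  have hsm := indicator_sm hD hκ.continuous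
  obtain ⟨K, hK0, hK⟩ := exists_bound_of_continuous hDb hκ.continuous
  have hbd : ∀ x, ‖D.indicator κ x‖ ≤ K := fun x => by
    by_cases hx : x ∈ D
    · rw [Set.indicator_of_mem hx]; exact hK x (subset_closure hx)
    · rw [Set.indicator_of_notMem hx]; simpa using hK0
  have hpt : ∀ x ∈ D, ‖κ x - ballMean D δ κ x‖ₑ ^ 2 ≤
      ∫⁻ y, ‖D.indicator κ x - D.indicator κ (x - y)‖ₑ ^ 2 ∂μ := by
    intro x hx
    have hms : StronglyMeasurable fun y => D.indicator κ (x - y) :=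
      hsm.comp_measurable (by fun_prop)
    have hi : Integrable (fun y => D.indicator κ (x - y)) μ :=
      Integrable.of_bound hms.aestronglyMeasurable K (Eventually.of_forall fun y => hbd _)
    have : κ x - ballMean D δ κ x = ∫ y, (D.indicator κ x - D.indicator κ (x - y)) ∂μ := by
      rw [integral_sub (integrable_const _) hi, integral_const, Set.indicator_of_mem hx]
      simp [ballMean, hμ]
    rw [this]
    exact enorm_integral_sq_le (stronglyMeasurable_const.sub hms).aestronglyMeasurable
  calc ∫⁻ x in D, ‖κ x - ballMean D δ κ x‖ₑ ^ 2
      ≤ ∫⁻ x in D, ∫⁻ y, ‖D.indicator κ x - D.indicator κ (x - y)‖ₑ ^ 2 ∂μ :=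
        setLIntegral_mono' hD.measurableSet hpt
    _ ≤ ∫⁻ x, ∫⁻ y, ‖D.indicator κ x - D.indicator κ (x - y)‖ₑ ^ 2 ∂μ :=
        lintegral_mono' Measure.restrict_le_self le_rfl
    _ = ∫⁻ y, (∫⁻ x, ‖D.indicator κ x - D.indicator κ (x - y)‖ₑ ^ 2) ∂μ := by
        rw [lintegral_lintegral_swap]
        apply Measurable.aemeasurable
        apply Measurable.pow_const
        apply Measurable.enorm
        exact (hsm.measurable.comp measurable_fst).sub
          (hsm.measurable.comp (measurable_fst.sub measurable_snd))
    _ ≤ ∫⁻ y, ENNReal.ofReal (C * δ ^ 2 * gradSq D κ) ∂μ := by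
        apply lintegral_mono_ae
        have : ∀ᵐ y ∂μ, y ∈ Metric.ball (0 : Euc d) δ :=
          ProbabilityTheory.ae_cond_mem Metric.isOpen_ball.measurableSet
        filter_upwards [this] with y hy
        refine (h D hD hDb κ hκ hκ0 y).trans (ENNReal.ofReal_le_ofReal ?_)
        have := gradSq_nonneg D κ
        rw [mem_ball_zero_iff] at hy
        gcongr
    _ = _ := by simp

/-- The pointwise bound that dominates the ball means of an `L²`-bounded sequence. -/
lemma ballMean_bound {D : Set (Euc d)} (hD : IsOpen D) (hDb : Bornology.IsBounded D) {δ : ℝ}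
    {κ : Euc d → ℂ} (hκ : Continuous κ) (x : Euc d) :
    ‖ballMean D δ κ x‖ ≤ (volume (Metric.ball (0 : Euc d) δ)).toReal⁻¹ *
      (volume.real D + L2normSq D κ) := by
  have : IsFiniteMeasure (volume.restrict D) := ⟨by simpa using hDb.measure_lt_top⟩
  rw [ballMean_eq hD, norm_smul, Real.norm_of_nonneg (by positivity)]
  gcongr
  have h1 : Integrable (fun y => ‖κ y‖) (volume.restrict D) :=
    integrableOn_of_continuous hDb hκ.norm
  have h2 : Integrable (fun y => ‖κ y‖ ^ 2) (volume.restrict D) :=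
    integrableOn_of_continuous hDb (hκ.norm.pow 2)
  calc ‖∫ y in Metric.ball x δ, κ y ∂(volume.restrict D)‖
      ≤ ∫ y in Metric.ball x δ, ‖κ y‖ ∂(volume.restrict D) := norm_integral_le_integral_norm _
    _ ≤ ∫ y, ‖κ y‖ ∂(volume.restrict D) :=
        integral_mono_measure Measure.restrict_le_self (Eventually.of_forall fun _ => norm_nonneg _) h1
    _ ≤ ∫ y in D, (1 + ‖κ y‖ ^ 2) := by
        apply integral_mono h1 ((integrable_const 1).add h2)
        intro y
        change ‖κ y‖ ≤ 1 + ‖κ y‖ ^ 2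
        nlinarith [norm_nonneg (κ y), sq_nonneg (‖κ y‖ - 1)]
    _ = _ := by
        rw [integral_add (integrable_const 1) h2]
        simp [L2normSq]

lemma ballMean_sub {D : Set (Euc d)} (hD : IsOpen D) (hDb : Bornology.IsBounded D) {δ : ℝ}
    {u v : Euc d → ℂ} (hu : Continuous u) (hv : Continuous v) (x : Euc d) :
    ballMean D δ (fun y => u y - v y) x = ballMean D δ u x - ballMean D δ v x := by
  rw [ballMean_eq hD, ballMean_eq hD, ballMean_eq hD, integral_sub, smul_sub]
  · exact Integrable.restrict (integrableOn_of_continuous hDb hu)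
  · exact Integrable.restrict (integrableOn_of_continuous hDb hv)

lemma ofReal_L2 {D : Set (Euc d)} (hDb : Bornology.IsBounded D)
    {u : Euc d → ℂ} (hu : Continuous u) :
    ENNReal.ofReal (L2normSq D u) = ∫⁻ x in D, ‖u x‖ₑ ^ 2 := by
  unfold L2normSq
  rw [ofReal_integral_eq_lintegral_ofReal (f := fun x => ‖u x‖ ^ 2)
    (integrableOn_of_continuous hDb (hu.norm.pow 2))
    (Eventually.of_forall fun x => by positivity)]
  congr 1; ext x
  rw [ENNReal.ofReal_pow (norm_nonneg _), ofReal_norm]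

/-- Along a subsequence, the integrals of an `L²`-bounded sequence over all balls converge. -/
lemma weak_compact {D : Set (Euc d)} (hDb : Bornology.IsBounded D)
    {f : ℕ → Euc d → ℂ} (hf : ∀ k, Continuous (f k)) {M : ℝ} (hM : ∀ k, L2normSq D (f k) ≤ M) :
    ∃ g : ℕ → ℕ, StrictMono g ∧ ∀ x δ, ∃ l : ℂ, Tendsto (fun k =>
      ∫ y in Metric.ball x δ, f (g k) y ∂(volume.restrict D)) atTop (nhds l) := by
  have hfin : IsFiniteMeasure (volume.restrict D) := ⟨by simpa using hDb.measure_lt_top⟩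
  let μ := (volume : Measure (Euc d)).restrict D
  have h2 : ∀ k, MemLp (f k) 2 μ := fun k => by
    rw [memLp_two_iff_integrable_sq_norm (hf k).aestronglyMeasurable]
    exact integrableOn_of_continuous hDb ((hf k).norm.pow 2)
  let F : ℕ → Lp ℂ 2 μ := fun k => (h2 k).toLp (f k)
  have hFn : ∀ k, ‖F k‖ ≤ √M := by
    intro k
    apply Real.le_sqrt_of_sq_le
    have h3 : ‖F k‖ ^ 2 = L2normSq D (f k) := by
      have h4 := inner_self_eq_norm_sq_to_K (𝕜 := ℂ) (F k)
      rw [L2.inner_def] at h4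
      have h5 : ∫ a, inner ℂ ((F k) a) ((F k) a) ∂μ = ((∫ a, ‖f k a‖ ^ 2 ∂μ : ℝ) : ℂ) := by
        rw [← integral_complex_ofReal]
        apply integral_congr_ae
        filter_upwards [(h2 k).coeFn_toLp] with a ha
        rw [show (F k) a = f k a from ha, inner_self_eq_norm_sq_to_K]
        simp
      rw [h5] at h4
      change _ = ∫ a, ‖f k a‖ ^ 2 ∂μ
      have h4' : ((∫ a, ‖f k a‖ ^ 2 ∂μ : ℝ) : ℂ) = ((‖F k‖ ^ 2 : ℝ) : ℂ) := by
        rw [h4]; push_cast; rfl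
      exact (Complex.ofReal_injective h4').symm
    rw [h3]; exact hM k
  let Λ : ℕ → WeakDual ℂ (Lp ℂ 2 μ) := fun k => StrongDual.toWeakDual (innerSL ℂ (F k))
  have : Fact ((2 : ℝ≥0∞) ≠ ⊤) := ⟨by norm_num⟩
  have : SecondCountableTopology (Lp ℂ 2 μ) := inferInstance
  have hc := WeakDual.isSeqCompact_closedBall ℂ (Lp ℂ 2 μ) 0 (√M)
  obtain ⟨l, -, g, hg, hl⟩ := hc (x := Λ) (fun k => by
    simp [Λ, hFn k])
  refine ⟨g, hg, fun x δ => ?_⟩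
  let e : Lp ℂ 2 μ := indicatorConstLp 2 (μ := μ) (Metric.isOpen_ball (x := x) (ε := δ)).measurableSet
    (measure_ne_top _ _) (1 : ℂ)
  have h6 : Tendsto (fun k => Λ (g k) e) atTop (nhds (l e)) :=
    (WeakBilin.tendsto_iff_forall_eval_tendsto _ (ContinuousLinearMap.coe_injective)).1 hl e
  refine ⟨(starRingEnd ℂ) (l e), ?_⟩
  have h7 := (Complex.continuous_conj.tendsto _).comp h6
  refine h7.congr fun k => ?_
  change (starRingEnd ℂ) (inner ℂ (F (g k)) e) = _
  rw [inner_conj_symm]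
  rw [L2.inner_indicatorConstLp_one]
  apply integral_congr_ae
  exact ae_restrict_of_ae (h2 (g k)).coeFn_toLp

/-- Rellich's compactness theorem for functions vanishing on `∂D`. -/
lemma rellich {D : Set (Euc d)} (hD : IsOpen D) (hDb : Bornology.IsBounded D)
    {f : ℕ → Euc d → ℂ} (hf : ∀ k, ContDiff ℝ 1 (f k)) (hf0 : ∀ k, ∀ x ∈ frontier D, f k x = 0)
    {M : ℝ} (hM : ∀ k, L2normSq D (f k) ≤ M)
    (hG : ∀ i j, gradSq D (fun x => f i x - f j x) ≤ M) :
    ∃ g : ℕ → ℕ, StrictMono g ∧ Tendsto (fun p : ℕ × ℕ =>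
      L2normSq D (fun x => f (g p.1) x - f (g p.2) x)) atTop (nhds 0) := by
  obtain ⟨g, hg, hl⟩ := weak_compact hDb (fun k => (hf k).continuous) hM
  refine ⟨g, hg, ?_⟩
  have hfin : IsFiniteMeasure (volume.restrict D) := ⟨by simpa using hDb.measure_lt_top⟩
  obtain ⟨C, hC, hmean⟩ := mean_est d
  have hM0 : 0 ≤ M := (L2normSq_nonneg D _).trans (hM 0)
  let w : ℕ × ℕ → Euc d → ℂ := fun p x => f (g p.1) x - f (g p.2) x
  have hw : ∀ p, ContDiff ℝ 1 (w p) := fun p => (hf _).sub (hf _)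
  have hw0 : ∀ p, ∀ x ∈ frontier D, w p x = 0 := fun p x hx => by
    simp [w, hf0 _ x hx]
  -- the ball means of the differences tend to zero in `L²`
  have hA : ∀ δ > 0, Tendsto (fun p : ℕ × ℕ => ∫ x in D, ‖ballMean D δ (w p) x‖ ^ 2) atTop
      (nhds 0) := by
    intro δ hδ
    let K : ℝ := (volume (Metric.ball (0 : Euc d) δ)).toReal⁻¹ * (volume.real D + M)
    have hK : ∀ k x, ‖ballMean D δ (f k) x‖ ≤ K := fun k x =>
      (ballMean_bound hD hDb (hf k).continuous x).trans (by
        apply mul_le_mul_of_nonneg_left _ (by positivity)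
        linarith [hM k])
    have := tendsto_integral_filter_of_dominated_convergence (μ := volume.restrict D)
      (l := (atTop : Filter (ℕ × ℕ))) (F := fun p x => ‖ballMean D δ (w p) x‖ ^ 2)
      (f := fun _ => (0 : ℝ)) (fun _ => (K + K) ^ 2)
      (Eventually.of_forall fun p => ((ballMean_sm hD (hw p).continuous hδ).norm.pow
        2).aestronglyMeasurable)
      (Eventually.of_forall fun p => Eventually.of_forall fun x => by
        rw [ballMean_sub hD hDb (hf _).continuous (hf _).continuous, norm_pow, norm_norm]
        gcongr
        exact (norm_sub_le _ _).trans (add_le_add (hK _ _) (hK _ _)))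
      (integrable_const _)
      (Eventually.of_forall fun x => by
        obtain ⟨l, hl⟩ := hl x δ
        have h1 : Tendsto (fun k => ballMean D δ (f (g k)) x) atTop
            (nhds ((volume (Metric.ball (0 : Euc d) δ)).toReal⁻¹ • l)) := by
          simp_rw [ballMean_eq hD]
          exact hl.const_smul _
        have h2 : Tendsto (fun p : ℕ × ℕ => ballMean D δ (w p) x) atTop (nhds 0) := by
          have := (h1.comp (tendsto_fst (f := atTop) (g := atTop))).sub
            (h1.comp (tendsto_snd (f := atTop) (g := atTop)))
          rw [sub_self, prod_atTop_atTop_eq] at this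
          refine this.congr fun p => ?_
          rw [ballMean_sub hD hDb (hf _).continuous (hf _).continuous]; rfl
        have := (h2.norm.pow 2)
        simpa using this)
    simpa using this
  have hineq : ∀ p, ∀ δ > 0, L2normSq D (w p) ≤
      2 * (C * δ ^ 2 * M) + 2 * ∫ x in D, ‖ballMean D δ (w p) x‖ ^ 2 := by
    intro p δ hδ
    obtain ⟨K, hK⟩ : ∃ K, ∀ x, ‖ballMean D δ (w p) x‖ ≤ K :=
      ⟨_, ballMean_bound hD hDb (hw p).continuous⟩
    have hsm := ballMean_sm hD (hw p).continuous hδ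
    have hi : Integrable (fun x => ‖ballMean D δ (w p) x‖ ^ 2) (volume.restrict D) :=
      Integrable.of_bound (hsm.norm.pow 2).aestronglyMeasurable (K ^ 2)
        (Eventually.of_forall fun x => by
          rw [norm_pow, norm_norm]; gcongr; exact hK x)
    have h1 : ENNReal.ofReal (L2normSq D (w p)) ≤
        ENNReal.ofReal (2 * (C * δ ^ 2 * M) + 2 * ∫ x in D, ‖ballMean D δ (w p) x‖ ^ 2) := by
      rw [ofReal_L2 hDb (hw p).continuous]
      have h2 : ∀ x, ‖w p x‖ₑ ^ 2 ≤ 2 * ‖w p x - ballMean D δ (w p) x‖ₑ ^ 2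
          + 2 * ‖ballMean D δ (w p) x‖ₑ ^ 2 := by
        intro x
        have h3 : ‖w p x‖ ^ 2 ≤ 2 * ‖w p x - ballMean D δ (w p) x‖ ^ 2
          + 2 * ‖ballMean D δ (w p) x‖ ^ 2 := by
          have := norm_add_le (w p x - ballMean D δ (w p) x) (ballMean D δ (w p) x)
          rw [sub_add_cancel] at this
          nlinarith [norm_nonneg (w p x), sq_nonneg (‖w p x - ballMean D δ (w p) x‖ -
            ‖ballMean D δ (w p) x‖)]
        have h4 := ENNReal.ofReal_le_ofReal h3
        rwa [ENNReal.ofReal_add (by positivity) (by positivity), ENNReal.ofReal_mul (by norm_num),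
          ENNReal.ofReal_mul (by norm_num), ENNReal.ofReal_pow (norm_nonneg _),
          ENNReal.ofReal_pow (norm_nonneg _), ENNReal.ofReal_pow (norm_nonneg _), ofReal_norm,
          ofReal_norm, ofReal_norm, ENNReal.ofReal_ofNat] at h4
      have hmeas : Measurable fun x => 2 * ‖ballMean D δ (w p) x‖ₑ ^ 2 :=
        (hsm.measurable.enorm.pow_const 2).const_mul 2
      have hmeas2 : Measurable fun x => ‖w p x - ballMean D δ (w p) x‖ₑ ^ 2 :=
        (((hw p).continuous.measurable.sub hsm.measurable).enorm.pow_const 2)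
      refine (lintegral_mono h2).trans ?_
      rw [lintegral_add_right _ hmeas, lintegral_const_mul _ hmeas2,
        lintegral_const_mul _ (hsm.measurable.enorm.pow_const 2)]
      rw [ENNReal.ofReal_add (by positivity) (by positivity), ENNReal.ofReal_mul (by norm_num),
        ENNReal.ofReal_mul (p := 2) (by norm_num)]
      rw [ENNReal.ofReal_ofNat]
      gcongr
      · refine (hmean D hD hDb (w p) (hw p) (hw0 p) δ hδ).trans (ENNReal.ofReal_le_ofReal ?_)
        gcongr
        exact hG _ _
      · rw [ofReal_integral_eq_lintegral_ofReal hi (Eventually.of_forall fun x => by positivity)]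
        apply le_of_eq
        congr 1; ext x
        rw [ENNReal.ofReal_pow (norm_nonneg _), ofReal_norm]
    rwa [ENNReal.ofReal_le_ofReal_iff (by positivity)] at h1
  rw [Metric.tendsto_atTop']
  intro ε hε
  obtain ⟨δ, hδ, hδε⟩ : ∃ δ > 0, 2 * (C * δ ^ 2 * M) < ε / 2 := by
    have : Tendsto (fun δ : ℝ => 2 * (C * δ ^ 2 * M)) (nhdsWithin 0 (Set.Ioi 0)) (nhds 0) := by
      have : Continuous fun δ : ℝ => 2 * (C * δ ^ 2 * M) := by fun_prop
      have := this.tendsto 0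
      simp only [ne_eq, OfNat.ofNat_ne_zero, not_false_eq_true, zero_pow, mul_zero, zero_mul] at this
      exact this.mono_left nhdsWithin_le_nhds
    have h := (this.eventually (gt_mem_nhds (half_pos hε))).and self_mem_nhdsWithin
    obtain ⟨δ, h1, h2⟩ := h.exists
    exact ⟨δ, h2, h1⟩
  have h := (hA δ hδ).eventually (gt_mem_nhds (show (0 : ℝ) < ε / 4 by positivity))
  obtain ⟨N, hN⟩ := eventually_atTop.1 h
  refine ⟨N, fun p hp => ?_⟩
  have h1 := hN p hp.le
  have h2 := hineq p δ hδ
  rw [Real.dist_eq, sub_zero, abs_of_nonneg (L2normSq_nonneg D _)]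
  change L2normSq D (w p) < ε
  linarith

end rellich2

/-! ### Mollifiers and Weyl's lemma -/

section weyl
variable {d : ℕ}

lemma normSq_contDiff (x : Euc d) (a : ℝ) {n : WithTop ℕ∞} :
    ContDiff ℝ n fun y : Euc d => a * ‖y - x‖ ^ 2 :=
  contDiff_const.mul ((contDiff_id.sub contDiff_const).norm_sq ℝ)

lemma coord_contDiff (i : Fin d) {n : WithTop ℕ∞} : ContDiff ℝ n fun y : Euc d => y i :=
  (EuclideanSpace.proj (𝕜 := ℝ) i : Euc d →L[ℝ] ℝ).contDiff

lemma pd_coord (i : Fin d) (y : Euc d) : pd i (fun y : Euc d => y i) y = 1 := by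
  unfold pd
  have := (EuclideanSpace.proj (𝕜 := ℝ) i : Euc d →L[ℝ] ℝ).hasFDerivAt (x := y)
  have h2 : fderiv ℝ (fun y : Euc d => y i) y = EuclideanSpace.proj i := this.fderiv
  rw [h2]; simp [ee]

lemma pd_const (i : Fin d) (c : ℝ) (y : Euc d) : pd i (fun _ : Euc d => c) y = 0 := by
  simp [pd]

lemma pd_normSq (x : Euc d) (a : ℝ) (i : Fin d) (y : Euc d) :
    pd i (fun y : Euc d => a * ‖y - x‖ ^ 2) y = 2 * a * (y i - x i) := by
  unfold pd
  have h1 : HasFDerivAt (fun y : Euc d => y - x) (ContinuousLinearMap.id ℝ (Euc d)) y :=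
    (hasFDerivAt_id y).sub_const x
  have h2 := (h1.norm_sq).const_mul a
  rw [h2.fderiv]
  simp [ee, EuclideanSpace.inner_single_right]
  ring

/-- The Laplacian of a radial function. -/
lemma lap_radial {Q : ℝ → ℝ} (hQ : ContDiff ℝ 2 Q) (x : Euc d) (a : ℝ) (y : Euc d) :
    lap (fun y => ((Q (a * ‖y - x‖ ^ 2) : ℝ) : ℂ)) y =
      ((4 * a * (a * ‖y - x‖ ^ 2) * deriv (deriv Q) (a * ‖y - x‖ ^ 2)
        + 2 * a * d * deriv Q (a * ‖y - x‖ ^ 2) : ℝ) : ℂ) := by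
  have hG : ContDiff ℝ 2 fun y : Euc d => Q (a * ‖y - x‖ ^ 2) := hQ.comp (normSq_contDiff x a)
  have hQ' : ContDiff ℝ 1 (deriv Q) := ((contDiff_succ_iff_deriv (n := 1)).1 hQ).2.2
  rw [lap_eq (ofReal_contDiff hG)]
  have h1 : ∀ i : Fin d, pd i (fun y => ((Q (a * ‖y - x‖ ^ 2) : ℝ) : ℂ)) =
      fun y => ((deriv Q (a * ‖y - x‖ ^ 2) * (2 * a * (y i - x i)) : ℝ) : ℂ) := by
    intro i; ext y
    rw [pd_ofReal (hG.differentiable (by norm_num) _), pd_comp (hQ.differentiable (by norm_num) _)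
      ((normSq_contDiff x a (n := 1)).differentiable (by norm_num) _), pd_normSq]
  have h2 : ∀ i : Fin d, pd i (pd i (fun y => ((Q (a * ‖y - x‖ ^ 2) : ℝ) : ℂ))) y =
      ((deriv (deriv Q) (a * ‖y - x‖ ^ 2) * (2 * a * (y i - x i)) ^ 2
        + 2 * a * deriv Q (a * ‖y - x‖ ^ 2) : ℝ) : ℂ) := by
    intro i
    have hu : ContDiff ℝ 1 fun y : Euc d => deriv Q (a * ‖y - x‖ ^ 2) :=
      hQ'.comp (normSq_contDiff x a)
    have hw0 : ContDiff ℝ 1 fun y : Euc d => y i - x i := (coord_contDiff i).sub contDiff_const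
    have hw : ContDiff ℝ 1 fun y : Euc d => 2 * a * (y i - x i) := contDiff_const.mul hw0
    rw [h1, pd_ofReal ((hu.mul hw).differentiable (by norm_num) _),
      pd_mul (hu.differentiable (by norm_num) _) (hw.differentiable (by norm_num) _),
      pd_comp (hQ'.differentiable (by norm_num) _)
      ((normSq_contDiff x a (n := 1)).differentiable (by norm_num) _), pd_normSq,
      pd_const_mul (hw0.differentiable (by norm_num) _),
      pd_sub ((coord_contDiff i (n := 1)).differentiable (by norm_num) _) (differentiableAt_const _),
      pd_coord, pd_const]
    congr 1; ring
  simp_rw [h2]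
  rw [← Complex.ofReal_sum]
  congr 1
  rw [Finset.sum_add_distrib, ← Finset.mul_sum]
  have h3 : ∑ i, (2 * a * (y i - x i)) ^ 2 = 4 * a ^ 2 * ‖y - x‖ ^ 2 := by
    rw [EuclideanSpace.norm_sq_eq, Finset.mul_sum]
    refine Finset.sum_congr rfl fun i _ => ?_
    simp; ring
  rw [h3]; simp; ring

/-- A radial profile used to build mollifiers whose scale derivative is a Laplacian. -/
lemma exists_profile : ∃ Q : ℝ → ℝ, ContDiff ℝ ∞ Q ∧ (∀ s > 1 / 2, Q s = 0) ∧
    (∀ s, 0 ≤ deriv Q s) ∧ ∃ s > 0, 0 < deriv Q s := by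
  have hc : ContDiff ℝ ∞ fun s : ℝ => -expNegInvGlue (1 / 2 - s) :=
    (expNegInvGlue.contDiff.comp (contDiff_const.sub contDiff_id)).neg
  refine ⟨_, hc, fun s hs => ?_, fun s => ?_, ?_⟩
  · simp only [neg_eq_zero]
    exact expNegInvGlue.zero_of_nonpos (by linarith)
  · apply Monotone.deriv_nonneg
    intro s t h
    exact neg_le_neg (expNegInvGlue.monotone (by linarith))
  · obtain ⟨c, hc1, hc2⟩ := exists_deriv_eq_slope (fun s : ℝ => -expNegInvGlue (1 / 2 - s))
      (zero_lt_one) hc.continuous.continuousOn (hc.differentiable (by norm_num)).differentiableOn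
    refine ⟨c, hc1.1, ?_⟩
    rw [hc2]
    have h1 : expNegInvGlue (1 / 2 - 1) = 0 := expNegInvGlue.zero_of_nonpos (by norm_num)
    have h2 := expNegInvGlue.pos_of_pos (show (0 : ℝ) < 1 / 2 - 0 by norm_num)
    rw [h1]; simp only [neg_zero]; simp at h2 ⊢; exact h2

end weyl

section weyl2
variable {d : ℕ}

/-- The (unnormalized) mollifier at scale `ε` with radial profile `2 Q'`, i.e.
`ε^{-d} 2 Q'(‖z‖² / ε²)`. -/
def moll (Q : ℝ → ℝ) (ε : ℝ) (z : Euc d) : ℝ := (ε⁻¹) ^ d * (2 * deriv Q ((ε ^ 2)⁻¹ * ‖z‖ ^ 2))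

lemma profile_facts {Q : ℝ → ℝ} (hQ : ContDiff ℝ ∞ Q) (h0 : ∀ s > 1 / 2, Q s = 0) :
    ContDiff ℝ ∞ (deriv Q) ∧ ContDiff ℝ ∞ (deriv (deriv Q)) ∧ (∀ s > 1 / 2, deriv Q s = 0) ∧
      (∀ s > 1 / 2, deriv (deriv Q) s = 0) := by
  have h1 : ContDiff ℝ ∞ (deriv Q) := (contDiff_infty_iff_deriv.1 hQ).2
  have h2 : ContDiff ℝ ∞ (deriv (deriv Q)) := (contDiff_infty_iff_deriv.1 h1).2
  have key : ∀ f : ℝ → ℝ, (∀ s > (1 / 2 : ℝ), f s = 0) → ∀ s > (1 / 2 : ℝ), deriv f s = 0 := by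
    intro f hf s hs
    have : f =ᶠ[nhds s] fun _ => 0 := by
      filter_upwards [Ioi_mem_nhds hs] with t ht using hf t ht
    rw [this.deriv_eq]; simp
  exact ⟨h1, h2, key _ h0, key _ (key _ h0)⟩

/-- `P(‖z‖²/ε²) = 0` off the ball of radius `ε`. -/
lemma profile_zero {P : ℝ → ℝ} (h0 : ∀ s > 1 / 2, P s = 0) {ε : ℝ} (hε : 0 < ε) {z : Euc d}
    (hz : ε ≤ ‖z‖) : P ((ε ^ 2)⁻¹ * ‖z‖ ^ 2) = 0 := by
  apply h0
  have : 1 ≤ (ε ^ 2)⁻¹ * ‖z‖ ^ 2 := by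
    rw [inv_mul_eq_div, one_le_div (by positivity)]
    gcongr
  linarith

/-- The derivative of the mollifier in the scale `ε` is, by the formula `lap_radial`, the Laplacian of
a compactly supported radial function; this is why convolving a weakly harmonic function with it
does not depend on the scale. -/
lemma moll_deriv [NeZero d] {Q : ℝ → ℝ} (hQ : ContDiff ℝ ∞ Q) (h0 : ∀ s > 1 / 2, Q s = 0)
    {ε : ℝ} (hε : 0 < ε) (x y : Euc d) :
    HasDerivAt (fun ε => moll Q ε (y - x)) (-ε * (ε⁻¹) ^ d *
      (4 * (ε ^ 2)⁻¹ * ((ε ^ 2)⁻¹ * ‖y - x‖ ^ 2) * deriv (deriv Q) ((ε ^ 2)⁻¹ * ‖y - x‖ ^ 2)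
        + 2 * (ε ^ 2)⁻¹ * d * deriv Q ((ε ^ 2)⁻¹ * ‖y - x‖ ^ 2))) ε := by
  obtain ⟨h1, -⟩ := profile_facts hQ h0
  have e1 : HasDerivAt (fun ε : ℝ => (ε⁻¹) ^ d) (d * (ε⁻¹) ^ (d - 1) * (-(ε ^ 2)⁻¹)) ε :=
    (hasDerivAt_inv hε.ne').pow d
  have e2 : HasDerivAt (fun ε : ℝ => (ε ^ 2)⁻¹ * ‖y - x‖ ^ 2)
      (-(2 * ε) / (ε ^ 2) ^ 2 * ‖y - x‖ ^ 2) ε := by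
    have := ((hasDerivAt_pow 2 ε).inv (by positivity)).mul_const (‖y - x‖ ^ 2)
    simpa using this
  have e3 : HasDerivAt (deriv Q) (deriv (deriv Q) ((ε ^ 2)⁻¹ * ‖y - x‖ ^ 2))
      ((ε ^ 2)⁻¹ * ‖y - x‖ ^ 2) := (h1.differentiable (by norm_num) _).hasDerivAt
  have e4 := e1.mul ((e3.comp ε e2).const_mul 2)
  refine e4.congr_deriv ?_
  obtain ⟨m, hm⟩ : ∃ m, d = m + 1 := Nat.exists_eq_succ_of_ne_zero (NeZero.ne d)
  have h3 : (ε⁻¹) ^ (d - 1) = ε * (ε⁻¹) ^ d := by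
    subst hm; simp only [Nat.add_sub_cancel, pow_succ]; field_simp
  rw [h3]
  simp only [Function.comp]
  field_simp
  ring

lemma moll_contDiff {Q : ℝ → ℝ} (hQ : ContDiff ℝ ∞ Q) (h0 : ∀ s > 1 / 2, Q s = 0)
    (ε : ℝ) : ContDiff ℝ ∞ (moll (d := d) Q ε) := by
  obtain ⟨h1, -⟩ := profile_facts hQ h0
  have := normSq_contDiff (d := d) 0 ((ε ^ 2)⁻¹) (n := ∞)
  simp only [sub_zero] at this
  exact contDiff_const.mul (contDiff_const.mul (h1.comp this))

lemma moll_zero {Q : ℝ → ℝ} (hQ : ContDiff ℝ ∞ Q) (h0 : ∀ s > 1 / 2, Q s = 0)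
    {ε : ℝ} (hε : 0 < ε) {z : Euc d} (hz : ε ≤ ‖z‖) : moll Q ε z = 0 := by
  obtain ⟨-, -, h1, -⟩ := profile_facts hQ h0
  unfold moll
  rw [profile_zero h1 hε hz]; simp

lemma moll_compact {Q : ℝ → ℝ} (hQ : ContDiff ℝ ∞ Q) (h0 : ∀ s > 1 / 2, Q s = 0)
    {ε : ℝ} (hε : 0 < ε) : HasCompactSupport (moll (d := d) Q ε) := by
  refine HasCompactSupport.intro (isCompact_closedBall 0 ε) fun z hz => ?_
  apply moll_zero hQ h0 hε
  simp at hz; exact hz.le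

lemma moll_integral {Q : ℝ → ℝ} {ε : ℝ} (hε : 0 < ε) :
    ∫ z : Euc d, moll Q ε z = ∫ z : Euc d, moll Q 1 z := by
  have := Measure.integral_comp_smul (volume : Measure (Euc d)) (fun z => moll Q 1 z) ε⁻¹
  rw [finrank_euclideanSpace, Fintype.card_fin, abs_of_pos (by positivity)] at this
  have h2 : ∀ z : Euc d, moll Q ε z = (ε⁻¹) ^ d * moll Q 1 (ε⁻¹ • z) := by
    intro z
    unfold moll
    rw [norm_smul, Real.norm_of_nonneg (by positivity)]
    rw [show (1 ^ 2 : ℝ)⁻¹ * (ε⁻¹ * ‖z‖) ^ 2 = (ε ^ 2)⁻¹ * ‖z‖ ^ 2 by simp [mul_pow]]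
    simp
  simp_rw [h2]
  rw [integral_const_mul, this, smul_eq_mul, ← mul_assoc, mul_inv_cancel₀ (by positivity), one_mul]

lemma moll_integral_pos [NeZero d] {Q : ℝ → ℝ} (hQ : ContDiff ℝ ∞ Q) (h0 : ∀ s > 1 / 2, Q s = 0)
    (h1 : ∀ s, 0 ≤ deriv Q s) (h2 : ∃ s > 0, 0 < deriv Q s) :
    0 < ∫ z : Euc d, moll Q 1 z := by
  obtain ⟨s, hs, h3⟩ := h2
  refine (moll_contDiff hQ h0 1).continuous.integral_pos_of_hasCompactSupport_nonneg_nonzero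
    (moll_compact hQ h0 one_pos) (fun z => ?_) (x := EuclideanSpace.single 0 (√s)) ?_
  · have := h1 ((1 ^ 2)⁻¹ * ‖z‖ ^ 2)
    unfold moll; positivity
  · unfold moll
    simp [Real.sq_sqrt hs.le]
    exact h3.ne'

lemma moll_bound {Q : ℝ → ℝ} (hQ : ContDiff ℝ ∞ Q) (h0 : ∀ s > 1 / 2, Q s = 0) :
    ∃ C : ℝ, 0 ≤ C ∧ (∀ s ≥ 0, |2 * deriv Q s| ≤ C) ∧
      (∀ s ≥ 0, |4 * s * deriv (deriv Q) s + 2 * d * deriv Q s| ≤ C) := by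
  obtain ⟨h1, h2, h3, h4⟩ := profile_facts hQ h0
  have key : ∀ f : ℝ → ℝ, Continuous f → (∀ s > (1 / 2 : ℝ), f s = 0) →
      ∃ C : ℝ, 0 ≤ C ∧ ∀ s ≥ 0, |f s| ≤ C := by
    intro f hf hf0
    obtain ⟨C, hC⟩ := isCompact_Icc.exists_bound_of_continuousOn (s := Set.Icc (0 : ℝ) 1)
      hf.continuousOn
    refine ⟨max C 0, le_max_right _ _, fun s hs => ?_⟩
    by_cases hs1 : s ≤ 1
    · exact (hC s ⟨hs, hs1⟩).trans (le_max_left _ _)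
    · rw [hf0 s (by linarith)]; simp
  obtain ⟨C1, p1, q1⟩ := key (fun s => 2 * deriv Q s) (continuous_const.mul h1.continuous)
    (fun s hs => by simp [h3 s hs])
  obtain ⟨C2, p2, q2⟩ := key (fun s => 4 * s * deriv (deriv Q) s + 2 * d * deriv Q s)
    (by have := h1.continuous; have := h2.continuous; fun_prop)
    (fun s hs => by simp [h3 s hs, h4 s hs])
  exact ⟨max C1 C2, p1.trans (le_max_left _ _), fun s hs => (q1 s hs).trans (le_max_left _ _),
    fun s hs => (q2 s hs).trans (le_max_right _ _)⟩

/-- Mollifications of a weakly harmonic function do not depend on the scale. -/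
lemma moll_const [NeZero d] {Q : ℝ → ℝ} (hQ : ContDiff ℝ ∞ Q) (h0 : ∀ s > 1 / 2, Q s = 0)
    {h : Euc d → ℂ} (hh : Integrable h) {x0 : Euc d} {r : ℝ}
    (hz : ∀ ψ : Euc d → ℝ, ContDiff ℝ ∞ ψ → HasCompactSupport ψ →
      tsupport ψ ⊆ Metric.ball x0 (2 * r) → ∫ y, h y * lap (fun y => ((ψ y : ℝ) : ℂ)) y = 0)
    {x : Euc d} (hx : x ∈ Metric.ball x0 r) {ε₁ ε₂ : ℝ} (h1 : ε₁ ∈ Set.Ioo 0 r)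
    (h2 : ε₂ ∈ Set.Ioo 0 r) :
    ∫ y, h y * (moll Q ε₁ (y - x) : ℂ) = ∫ y, h y * (moll Q ε₂ (y - x) : ℂ) := by
  obtain ⟨C, hC, hC1, hC2⟩ := moll_bound (d := d) hQ h0
  obtain ⟨q1, q2, -, -⟩ := profile_facts hQ h0
  have hmc : ∀ ε, Continuous fun y : Euc d => (moll Q ε (y - x) : ℂ) := fun ε =>
    Complex.continuous_ofReal.comp ((moll_contDiff hQ h0 ε).continuous.comp (by fun_prop))
  let F' : ℝ → Euc d → ℝ := fun ε y => -ε * (ε⁻¹) ^ d *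
      (4 * (ε ^ 2)⁻¹ * ((ε ^ 2)⁻¹ * ‖y - x‖ ^ 2) * deriv (deriv Q) ((ε ^ 2)⁻¹ * ‖y - x‖ ^ 2)
        + 2 * (ε ^ 2)⁻¹ * d * deriv Q ((ε ^ 2)⁻¹ * ‖y - x‖ ^ 2))
  have hF'c : ∀ ε, Continuous (F' ε) := by
    intro ε
    have := q1.continuous
    have := q2.continuous
    fun_prop
  have hder : ∀ ε ∈ Set.Ioo 0 r, HasDerivAt (fun ε => ∫ y, h y * (moll Q ε (y - x) : ℂ)) 0 ε := by
    intro ε hε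
    have hε0 : 0 < ε := hε.1
    have hI := hasDerivAt_integral_of_dominated_loc_of_deriv_le (𝕜 := ℝ)
      (μ := (volume : Measure (Euc d)))
      (F := fun ε y => h y * (moll Q ε (y - x) : ℂ)) (x₀ := ε) (s := Set.Ioi (ε / 2))
      (F' := fun ε y => h y * (F' ε y : ℂ))
      (bound := fun y => ‖h y‖ * (((ε / 2)⁻¹) * ((ε / 2)⁻¹) ^ d * C)) (Ioi_mem_nhds (by linarith))
      (Eventually.of_forall fun t => hh.aestronglyMeasurable.mul (hmc t).aestronglyMeasurable)
      (by
        refine hh.mul_bdd (c := (ε⁻¹) ^ d * C) (hmc ε).aestronglyMeasurable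
          (Eventually.of_forall fun y => ?_)
        rw [Complex.norm_real, moll, Real.norm_eq_abs, abs_mul, abs_of_pos (by positivity)]
        gcongr
        exact hC1 _ (by positivity))
      (hh.aestronglyMeasurable.mul
        (Complex.continuous_ofReal.comp (hF'c ε)).aestronglyMeasurable)
      (Eventually.of_forall fun y t ht => by
        have ht0 : 0 < t := by rw [Set.mem_Ioi] at ht; linarith
        have ht1 : ε / 2 ≤ t := le_of_lt ht
        have : F' t y = - (t⁻¹ * (t⁻¹) ^ d * (4 * ((t ^ 2)⁻¹ * ‖y - x‖ ^ 2) *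
            deriv (deriv Q) ((t ^ 2)⁻¹ * ‖y - x‖ ^ 2)
            + 2 * d * deriv Q ((t ^ 2)⁻¹ * ‖y - x‖ ^ 2))) := by
          simp only [F']
          field_simp
        rw [norm_mul, Complex.norm_real, this, norm_neg, Real.norm_eq_abs, abs_mul,
          abs_of_pos (by positivity)]
        gcongr
        exact hC2 _ (by positivity))
      (hh.norm.mul_const _)
      (Eventually.of_forall fun y t ht => by
        have ht0 : 0 < t := by rw [Set.mem_Ioi] at ht; linarith
        exact ((moll_deriv hQ h0 ht0 x y).ofReal_comp).const_mul (h y))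
    refine hI.2.congr_deriv ?_
    -- the scale derivative is a multiple of the Laplacian of a test function
    have hG := normSq_contDiff x ((ε ^ 2)⁻¹) (n := ∞)
    have hsupp : ∀ y, y ∉ Metric.closedBall x ε → Q ((ε ^ 2)⁻¹ * ‖y - x‖ ^ 2) = 0 := by
      intro y hy
      apply profile_zero h0 hε0
      rw [Metric.mem_closedBall, dist_eq_norm] at hy
      linarith
    have := hz (fun y => Q ((ε ^ 2)⁻¹ * ‖y - x‖ ^ 2)) (hQ.comp hG)
      (HasCompactSupport.intro (isCompact_closedBall x ε) hsupp)
      ((closure_minimal (fun y hy => by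
          by_contra hy2
          exact hy (hsupp y hy2)) Metric.isClosed_closedBall).trans
        (Metric.closedBall_subset_ball' (by
          rw [Metric.mem_ball] at hx
          linarith [hε.2])))
    have hQ2 : ContDiff ℝ 2 Q := contDiff_infty.1 hQ 2
    simp_rw [lap_radial hQ2 x] at this
    have h3 : ∀ y, h y * (F' ε y : ℂ) = ((-ε * (ε⁻¹) ^ d : ℝ) : ℂ) * (h y *
      ((4 * (ε ^ 2)⁻¹ * ((ε ^ 2)⁻¹ * ‖y - x‖ ^ 2) * deriv (deriv Q) ((ε ^ 2)⁻¹ * ‖y - x‖ ^ 2)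
        + 2 * (ε ^ 2)⁻¹ * d * deriv Q ((ε ^ 2)⁻¹ * ‖y - x‖ ^ 2) : ℝ) : ℂ)) := by
      intro y
      simp only [F']
      rw [Complex.ofReal_mul (-ε * (ε⁻¹) ^ d)]; ring
    simp_rw [h3]
    rw [integral_const_mul, this, mul_zero]
  have hconv : Convex ℝ (Set.Ioo 0 r) := convex_Ioo 0 r
  refine hconv.is_const_of_fderivWithin_eq_zero (𝕜 := ℝ)
    (f := fun ε => ∫ y, h y * (moll Q ε (y - x) : ℂ)) ?_ ?_ h1 h2
  · exact fun ε hε => (hder ε hε).differentiableAt.differentiableWithinAt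
  · intro ε hε
    rw [fderivWithin_of_mem_nhds (isOpen_Ioo.mem_nhds hε)]
    ext
    simp [(hder ε hε).deriv]

end weyl2

section weyl3
variable {d : ℕ}

/-- At Lebesgue points mollifications converge. -/
lemma moll_tendsto {Q : ℝ → ℝ} (hQ : ContDiff ℝ ∞ Q) (h0 : ∀ s > 1 / 2, Q s = 0)
    {h : Euc d → ℂ} (hh : Integrable h) :
    ∀ᵐ x, ∀ ε : ℕ → ℝ, (∀ k, 0 < ε k) → Tendsto ε atTop (nhds 0) →
      Tendsto (fun k => ∫ y, h y * (moll Q (ε k) (y - x) : ℂ)) atTop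
        (nhds (h x * ((∫ z : Euc d, moll Q 1 z : ℝ) : ℂ))) := by
  obtain ⟨C, hC, hC1, hC2⟩ := moll_bound (d := d) hQ h0
  filter_upwards [IsUnifLocDoublingMeasure.ae_tendsto_average_norm_sub (volume : Measure (Euc d))
    hh.locallyIntegrable 1] with x hx ε hε hlim
  have hav := hx (l := atTop) (fun _ : ℕ => x) ε
    (tendsto_nhdsWithin_iff.2 ⟨hlim, Eventually.of_forall hε⟩)
    (Eventually.of_forall fun k => Metric.mem_closedBall_self (by linarith [hε k]))
  rw [tendsto_iff_norm_sub_tendsto_zero]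
  have hav2 := hav.const_mul (C * (volume : Measure (Euc d)).real (Metric.ball 0 1))
  rw [mul_zero] at hav2
  refine squeeze_zero (fun k => norm_nonneg _) (fun k => ?_) hav2
  have hk := hε k
  have hmc : Continuous fun y : Euc d => moll Q (ε k) (y - x) :=
    (moll_contDiff hQ h0 _).continuous.comp (by fun_prop)
  have hmi : Integrable fun y : Euc d => moll Q (ε k) (y - x) :=
    ((moll_contDiff hQ h0 _).continuous.integrable_of_hasCompactSupport
      (moll_compact hQ h0 hk)).comp_sub_right x
  have hmb : ∀ y : Euc d, ‖moll Q (ε k) (y - x)‖ ≤ ((ε k)⁻¹) ^ d * C := by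
    intro y
    rw [moll, Real.norm_eq_abs, abs_mul, abs_of_pos (by positivity)]
    gcongr
    exact hC1 _ (by positivity)
  have e1 : ∫ y : Euc d, moll Q (ε k) (y - x) = ∫ z : Euc d, moll Q 1 z := by
    rw [integral_sub_right_eq_self (fun y => moll Q (ε k) y) x, moll_integral hk]
  have hi1 : Integrable fun y => h y * (moll Q (ε k) (y - x) : ℂ) :=
    hh.mul_bdd (c := ((ε k)⁻¹) ^ d * C) (Complex.continuous_ofReal.comp hmc).aestronglyMeasurable
      (Eventually.of_forall fun y => by rw [Complex.norm_real]; exact hmb y)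
  have hi2 : Integrable fun y => h x * (moll Q (ε k) (y - x) : ℂ) :=
    (hmi.ofReal (𝕜 := ℂ)).const_mul _
  have e2 : (∫ y, h y * (moll Q (ε k) (y - x) : ℂ)) - h x * ((∫ z : Euc d, moll Q 1 z : ℝ) : ℂ)
      = ∫ y, (h y - h x) * (moll Q (ε k) (y - x) : ℂ) := by
    rw [← e1, ← integral_complex_ofReal, ← integral_const_mul, ← integral_sub hi1
      hi2]
    congr 1; ext y; ring
  rw [e2]
  have hb : ∀ y, ‖(h y - h x) * (moll Q (ε k) (y - x) : ℂ)‖ ≤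
      (Metric.closedBall x (ε k)).indicator (fun y => ‖h y - h x‖ * (((ε k)⁻¹) ^ d * C)) y := by
    intro y
    by_cases hy : y ∈ Metric.closedBall x (ε k)
    · rw [Set.indicator_of_mem hy, norm_mul, Complex.norm_real]
      gcongr; exact hmb y
    · rw [Set.indicator_of_notMem hy, moll_zero hQ h0 hk]
      · simp
      · rw [Metric.mem_closedBall, dist_eq_norm] at hy; linarith
  have hfin : IntegrableOn (fun y => ‖h y - h x‖) (Metric.closedBall x (ε k)) := by
    refine (hh.integrableOn.sub (integrableOn_const ?_)).norm
    exact measure_closedBall_lt_top.ne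
  refine (norm_integral_le_of_norm_le ((integrable_indicator_iff
    Metric.isClosed_closedBall.measurableSet).2 (hfin.mul_const _))
    (Eventually.of_forall hb)).trans ?_
  rw [integral_indicator Metric.isClosed_closedBall.measurableSet, integral_mul_const,
    setAverage_eq, Measure.addHaar_real_closedBall _ _ hk.le, finrank_euclideanSpace,
    Fintype.card_fin, smul_eq_mul]
  have hv : 0 < (volume : Measure (Euc d)).real (Metric.ball 0 1) :=
    ENNReal.toReal_pos (Metric.measure_ball_pos _ _ one_pos).ne' measure_ball_lt_top.ne
  apply le_of_eq
  rw [inv_pow]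
  field_simp

/-- Weyl's lemma: an integrable, weakly harmonic function is almost everywhere equal to a `C²`
function. -/
lemma weyl [NeZero d] {h : Euc d → ℂ} (hh : Integrable h) {x0 : Euc d} {r : ℝ} (hr : 0 < r)
    (hz : ∀ ψ : Euc d → ℝ, ContDiff ℝ ∞ ψ → HasCompactSupport ψ →
      tsupport ψ ⊆ Metric.ball x0 (2 * r) → ∫ y, h y * lap (fun y => ((ψ y : ℝ) : ℂ)) y = 0) :
    ∃ H : Euc d → ℂ, ContDiff ℝ 2 H ∧ ∀ᵐ y, y ∈ Metric.ball x0 r → h y = H y := by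
  obtain ⟨Q, hQ, h0, h1, h2⟩ := exists_profile
  have hc := moll_integral_pos (d := d) hQ h0 h1 h2
  set c := ∫ z : Euc d, moll Q 1 z
  let g : Euc d → ℂ := fun z => (moll Q (r / 2) z : ℂ)
  have hg : ContDiff ℝ ∞ g := ofReal_contDiff (moll_contDiff hQ h0 _)
  have hgs : HasCompactSupport g :=
    (moll_compact hQ h0 (half_pos hr)).comp_left (g := fun t : ℝ => (t : ℂ)) (by simp)
  have hconv : ContDiff ℝ ∞ (convolution h g (ContinuousLinearMap.mul ℝ ℂ) volume) :=
    hgs.contDiff_convolution_right _ hh.locallyIntegrable hg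
  refine ⟨fun x => (convolution h g (ContinuousLinearMap.mul ℝ ℂ) volume) x * ((c⁻¹ : ℝ) : ℂ),
    (contDiff_infty.1 hconv 2).mul contDiff_const, ?_⟩
  filter_upwards [moll_tendsto hQ h0 hh] with x hx hxb
  have e1 : (convolution h g (ContinuousLinearMap.mul ℝ ℂ) volume) x
      = ∫ y, h y * (moll Q (r / 2) (y - x) : ℂ) := by
    rw [convolution_def]
    congr 1; ext y
    simp only [ContinuousLinearMap.mul_apply', g, moll, norm_sub_rev]
  have hl := hx (fun k => r / 2 / ((k : ℝ) + 1)) (fun k => by positivity)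
    (tendsto_const_div_atTop_nhds_zero_nat (r / 2) |>.comp (tendsto_add_atTop_nat 1) |>.congr
      fun k => by simp)
  have e2 : ∀ k : ℕ, ∫ y, h y * (moll Q (r / 2 / ((k : ℝ) + 1)) (y - x) : ℂ)
      = ∫ y, h y * (moll Q (r / 2) (y - x) : ℂ) := by
    intro k
    apply moll_const hQ h0 hh hz hxb
    · refine ⟨by positivity, ?_⟩
      have : r / 2 / ((k : ℝ) + 1) ≤ r / 2 := div_le_self (by positivity) (by
        have : (0 : ℝ) ≤ k := by positivity
        linarith)
      linarith
    · exact ⟨by positivity, by linarith⟩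
  simp_rw [e2] at hl
  have e3 := tendsto_nhds_unique tendsto_const_nhds hl
  rw [e1, e3, mul_assoc, ← Complex.ofReal_mul, mul_inv_cancel₀ hc.ne']
  simp

end weyl3

/-! ### Measurability of the coefficient `1/n` -/

section measurability
variable {d : ℕ}

lemma lap_congr {u v : Euc d → ℂ} {x : Euc d} (h : u =ᶠ[nhds x] v) : lap u x = lap v x := by
  unfold lap
  have := (h.iteratedFDeriv ℝ 2).eq_of_nhds
  rw [this]

lemma lap_of_notMem_tsupport {u : Euc d → ℂ} {x : Euc d} (h : x ∉ tsupport u) : lap u x = 0 := by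
  have h1 := notMem_tsupport_iff_eventuallyEq.1 h
  rw [lap_congr h1]
  have h2 : ContDiff ℝ 2 (0 : Euc d → ℂ) := contDiff_const
  rw [lap_eq h2]
  have : ∀ i : Fin d, pd i (0 : Euc d → ℂ) = 0 := by
    intro i; ext y; simp [pd]
  simp [this]

/-- A test function supported in `D` lies in `X(D)` and its gradient vanishes on `∂D`. -/
lemma test_facts {D : Set (Euc d)} (hD : IsOpen D) {ψ : Euc d → ℂ} (hψ : ContDiff ℝ 2 ψ)
    (hs : tsupport ψ ⊆ D) : MemX D ψ ∧ ∀ x ∈ frontier D, fderiv ℝ ψ x = 0 := by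
  have key : ∀ x ∈ frontier D, ψ =ᶠ[nhds x] 0 := by
    intro x hx
    apply notMem_tsupport_iff_eventuallyEq.1
    intro h
    rw [hD.frontier_eq] at hx
    exact hx.2 (hs h)
  refine ⟨⟨hψ, fun x hx => (key x hx).eq_of_nhds⟩, fun x hx => ?_⟩
  rw [(key x hx).fderiv_eq]; simp

/-- Against a test function the boundary term of `b` disappears: `Δ((1/n) Δw) = -Δf` in the sense
of distributions. -/
lemma test_identity {D : Set (Euc d)} (hD : IsOpen D) (hDb : Bornology.IsBounded D)
    {σ : Measure (Euc d)} {ν : Euc d → Euc d} {n η : Euc d → ℝ} {f w : Euc d → ℂ}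
    (hf : MemX D f)
    (hw : ∀ φ, MemX D φ → aform D n w φ = bform D σ ν η f φ)
    {ψ : Euc d → ℂ} (hψ : ContDiff ℝ 2 ψ) (hs : tsupport ψ ⊆ D) :
    ∫ x in D, ((1 / n x : ℝ) : ℂ) * lap w x * (starRingEnd ℂ) (lap ψ x)
      = - ∫ x in D, f x * (starRingEnd ℂ) (lap ψ x) := by
  obtain ⟨h1, h2⟩ := test_facts hD hψ hs
  have h3 := hw ψ h1
  unfold aform bform at h3
  rw [h3, ← green hD hDb (hf.1.of_le (by norm_num)) hf.2 hψ]
  have h4 : ∫ x in frontier D, ((1 / η x : ℝ) : ℂ) * fderiv ℝ f x (ν x) *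
      (starRingEnd ℂ) (fderiv ℝ ψ x (ν x)) ∂σ = 0 := by
    rw [setIntegral_congr_fun (g := fun _ => 0) isClosed_frontier.measurableSet]
    · simp
    · intro x hx
      simp [h2 x hx]
  rw [h4, sub_zero]
  rfl

/-- Green's second identity against a test function. -/
lemma lap_symm {D : Set (Euc d)} (hD : IsOpen D) (hDb : Bornology.IsBounded D)
    {ψ H : Euc d → ℂ} (hψ : ContDiff ℝ 2 ψ) (hs : tsupport ψ ⊆ D) (hH : ContDiff ℝ 2 H) :
    ∫ x in D, lap ψ x * H x = ∫ x in D, ψ x * lap H x := by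
  obtain ⟨h1, h2⟩ := test_facts hD hψ hs
  have e : ∀ i, ∫ x in D, pd i (pd i ψ) x * H x = ∫ x in D, ψ x * pd i (pd i H) x := by
    intro i
    rw [ibp hD hDb (pd_contDiff_one hψ i) (fun x hx => by simp [pd, h2 x hx])
      (hH.of_le (by norm_num)) i,
      ibp hD hDb (hψ.of_le (by norm_num)) h1.2 (pd_contDiff_one hH i) i, neg_neg] 
  simp_rw [lap_eq hψ, lap_eq hH, Finset.sum_mul, Finset.mul_sum]
  rw [integral_finsetSum, integral_finsetSum]
  · exact Finset.sum_congr rfl fun i _ => e i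
  · exact fun i _ => integrableOn_of_continuous hDb (hψ.continuous.mul (pd_pd_continuous hH i i))
  · exact fun i _ => integrableOn_of_continuous hDb ((pd_pd_continuous hψ i i).mul hH.continuous)

lemma lap_normSq (x0 y : Euc d) :
    lap (fun y => ((‖y - x0‖ ^ 2 : ℝ) : ℂ)) y = ((2 * d : ℝ) : ℂ) := by
  have := lap_radial (Q := fun t => t) contDiff_id x0 1 y
  simpa using this

lemma lap_add {u v : Euc d → ℂ} (hu : ContDiff ℝ 2 u) (hv : ContDiff ℝ 2 v) (x : Euc d) :
    lap (fun y => u y + v y) x = lap u x + lap v x := by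
  rw [lap_eq (hu.add hv), lap_eq hu, lap_eq hv, ← Finset.sum_add_distrib]
  refine Finset.sum_congr rfl fun i _ => ?_
  have : pd i (fun y => u y + v y) = fun y => pd i u y + pd i v y :=
    funext fun y => pd_add (hu.differentiable (by norm_num) y) (hv.differentiable (by norm_num) y) i
  rw [this, pd_add ((pd_contDiff_one hu i).differentiable (by norm_num) x)
    ((pd_contDiff_one hv i).differentiable (by norm_num) x)]

lemma lap_const_mul {u : Euc d → ℂ} (hu : ContDiff ℝ 2 u) (c : ℂ) (x : Euc d) :
    lap (fun y => c * u y) x = c * lap u x := by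
  rw [lap_eq (contDiff_const.mul hu), lap_eq hu, Finset.mul_sum]
  refine Finset.sum_congr rfl fun i _ => ?_
  have : pd i (fun y => c * u y) = fun y => c * pd i u y :=
    funext fun y => pd_const_mul (hu.differentiable (by norm_num) y) c i
  rw [this, pd_const_mul ((pd_contDiff_one hu i).differentiable (by norm_num) x)]

lemma lap_sub {u v : Euc d → ℂ} (hu : ContDiff ℝ 2 u) (hv : ContDiff ℝ 2 v) (x : Euc d) :
    lap (fun y => u y - v y) x = lap u x - lap v x := by
  have h1 := lap_add hu (contDiff_const.mul hv : ContDiff ℝ 2 fun y => (-1 : ℂ) * v y) x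
  rw [lap_const_mul hv] at h1
  convert h1 using 2
  · ext y; ring
  · ring

/-- A `C²` function with a.e. nonzero Laplacian on a set is a.e. nonzero there. -/
lemma ae_ne_zero_of_lap {u : Euc d → ℂ} (hu : ContDiff ℝ 2 u) :
    ∀ᵐ y, u y = 0 → lap u y = 0 := by
  have h1 : ∀ᵐ y, ∀ i : Fin d, u y = 0 → pd i u y = 0 :=
    ae_all_iff.2 fun i => ae_pd_eq_zero (hu.of_le (by norm_num)) i
  have h2 : ∀ᵐ y, ∀ i : Fin d, pd i u y = 0 → pd i (pd i u) y = 0 :=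
    ae_all_iff.2 fun i => ae_pd_eq_zero (pd_contDiff_one hu i) i
  filter_upwards [h1, h2] with y h1 h2 h
  rw [lap_eq hu]
  exact Finset.sum_eq_zero fun i _ => h2 i (h1 i h)

lemma lap_ofReal {u : Euc d → ℝ} (hu : ContDiff ℝ 2 u) (x : Euc d) :
    lap (fun y => ((u y : ℝ) : ℂ)) x = ((∑ i, pd i (pd i u) x : ℝ) : ℂ) := by
  rw [lap_eq (ofReal_contDiff hu)]
  push_cast
  refine Finset.sum_congr rfl fun i _ => ?_
  have : pd i (fun y => ((u y : ℝ) : ℂ)) = fun y => ((pd i u y : ℝ) : ℂ) :=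
    funext fun y => pd_ofReal (hu.differentiable (by norm_num) y) i
  rw [this, pd_ofReal ((pd_contDiff_one hu i).differentiable (by norm_num) x)]

lemma conj_lap_ofReal {u : Euc d → ℝ} (hu : ContDiff ℝ 2 u) (x : Euc d) :
    (starRingEnd ℂ) (lap (fun y => ((u y : ℝ) : ℂ)) x) = lap (fun y => ((u y : ℝ) : ℂ)) x := by
  rw [lap_ofReal hu, Complex.conj_ofReal]

/-- Near any point of `D`, `1/n` agrees almost everywhere with a measurable function.  With
`f = |x - x₀|²` near `x₀` and `w` the corresponding solution, `s = (1/n) Δw` satisfies `Δ(s + f) = 0`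
weakly, so by Weyl's lemma `s = H - f` with `H` harmonic, and `1/n = s / Δw` wherever `s ≠ 0`,
that is, almost everywhere.  Nothing is known about `s` beforehand, not even measurability. -/
lemma local_meas [NeZero d] {D : Set (Euc d)} (hD : IsOpen D) (hDb : Bornology.IsBounded D)
    {n : Euc d → ℝ} {x0 : Euc d} {R : ℝ} (hR : 0 < R) (hball : Metric.closedBall x0 (3 * R) ⊆ D)
    (S : ∀ f, MemX D f → ∃ w, MemX D w ∧ ∀ ψ : Euc d → ℂ, ContDiff ℝ 2 ψ → tsupport ψ ⊆ D →
      ∫ x in D, ((1 / n x : ℝ) : ℂ) * lap w x * (starRingEnd ℂ) (lap ψ x)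
      = - ∫ x in D, f x * (starRingEnd ℂ) (lap ψ x)) :
    AEStronglyMeasurable (fun x => 1 / n x) (volume.restrict (Metric.ball x0 R)) := by
  have hd0 : (d : ℝ) ≠ 0 := by exact_mod_cast NeZero.ne d
  let χ : ContDiffBump x0 := ⟨2 * R, 3 * R, by positivity, by linarith⟩
  let χ0 : ContDiffBump x0 := ⟨R / 2, R, by positivity, by linarith⟩
  let f : Euc d → ℂ := fun y => ((χ y * ‖y - x0‖ ^ 2 : ℝ) : ℂ)
  let ψ0 : Euc d → ℂ := fun y => ((χ0 y : ℝ) : ℂ)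
  have hf : ContDiff ℝ 2 f := by
    apply ofReal_contDiff
    apply χ.contDiff.mul
    simpa using normSq_contDiff (n := 2) x0 1
  have hψ0 : ContDiff ℝ 2 ψ0 := ofReal_contDiff χ0.contDiff
  have hfs : tsupport f ⊆ D := by
    refine subset_trans ?_ hball
    have : tsupport f ⊆ tsupport χ := by
      apply closure_mono
      intro y hy hy0
      apply hy
      simp only [f]
      rw [hy0]; simp
    rwa [χ.tsupport_eq] at this
  have hψs' : tsupport ψ0 ⊆ Metric.closedBall x0 R := by
    have : tsupport ψ0 ⊆ tsupport χ0 := by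
      apply closure_mono
      intro y hy hy0
      apply hy
      simp only [ψ0]
      rw [hy0]; simp
    rwa [χ0.tsupport_eq] at this
  have hψs : tsupport ψ0 ⊆ D :=
    hψs'.trans ((Metric.closedBall_subset_closedBall (by linarith)).trans hball)
  obtain ⟨hfX, -⟩ := test_facts hD hf hfs
  have hlf : ∀ y ∈ Metric.ball x0 (2 * R), lap f y = ((2 * d : ℝ) : ℂ) := by
    intro y hy
    rw [← lap_normSq x0 y]
    apply lap_congr
    filter_upwards [Metric.isOpen_ball.mem_nhds hy] with z hz
    simp only [f]
    rw [χ.one_of_mem_closedBall (Metric.ball_subset_closedBall hz), one_mul]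
  obtain ⟨w, hw, hS⟩ := S f hfX
  set s : Euc d → ℂ := fun x => ((1 / n x : ℝ) : ℂ) * lap w x with hs
  -- the pairing of `f` with `Δψ₀` does not vanish
  have hβ : ∫ x in D, f x * (starRingEnd ℂ) (lap ψ0 x) ≠ 0 := by
    have e1 : ∀ x, f x * (starRingEnd ℂ) (lap ψ0 x) = lap ψ0 x * f x := by
      intro x
      rw [conj_lap_ofReal χ0.contDiff]; exact mul_comm _ _
    simp_rw [e1]
    rw [lap_symm hD hDb hψ0 hψs hf]
    have e2 : ∀ x, ψ0 x * lap f x = ((χ0 x : ℝ) : ℂ) * ((2 * d : ℝ) : ℂ) := by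
      intro x
      by_cases hx : x ∈ Metric.ball x0 (2 * R)
      · rw [hlf x hx]
      · have : χ0 x = 0 := by
          apply χ0.zero_of_le_dist
          have := not_lt.1 (fun h => hx (Metric.mem_ball.2 h))
          exact le_trans (by show R ≤ 2 * R; linarith) this
        simp [ψ0, this]
    simp_rw [e2]
    rw [integral_mul_const, integral_complex_ofReal,
      setIntegral_eq_integral_of_forall_compl_eq_zero]
    · have := χ0.integral_pos (μ := volume)
      have h2 : (2 * d : ℝ) ≠ 0 := by positivity
      exact mul_ne_zero (by exact_mod_cast this.ne') (by exact_mod_cast h2)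
    · intro x hx
      by_contra h
      have : x ∈ tsupport χ0 := subset_tsupport _ h
      rw [χ0.tsupport_eq] at this
      exact hx (hball (Metric.closedBall_subset_closedBall (by show R ≤ 3 * R; linarith) this))
  -- A nonzero pairing with `f` forces integrability, since the integral of a function that is not
  -- integrable is zero by convention.
  have hint : ∀ ψ : Euc d → ℂ, ContDiff ℝ 2 ψ → tsupport ψ ⊆ D →
      ∫ x in D, f x * (starRingEnd ℂ) (lap ψ x) ≠ 0 →
      IntegrableOn (fun x => s x * (starRingEnd ℂ) (lap ψ x)) D := by
    intro ψ h1 h2 h3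
    by_contra hc
    have := hS ψ h1 h2
    rw [integral_undef hc] at this
    exact h3 (by simpa using this.symm)
  have hI0 := hint ψ0 hψ0 hψs hβ
  -- At least one of `ψ₀ + f`, `ψ₀ - f` pairs nontrivially with `f`; subtracting the integrable
  -- `s Δψ₀` leaves `s Δf`, and `Δf = 2d` near `x₀`.
  have hsf : IntegrableOn (fun x => s x * (starRingEnd ℂ) (lap f x)) D := by
    have hadd : ∀ t : ℂ, t ≠ 0 → ∫ x in D, f x * (starRingEnd ℂ) (lap (fun y => ψ0 y + t * f y) x) ≠ 0 →
        IntegrableOn (fun x => s x * (starRingEnd ℂ) (lap f x)) D := by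
      intro t ht h
      have h1 : ContDiff ℝ 2 fun y => t * f y := contDiff_const.mul hf
      have h2 : tsupport (fun y => ψ0 y + t * f y) ⊆ D := by
        refine (tsupport_add ψ0 (fun y => t * f y)).trans (Set.union_subset hψs ?_)
        exact (tsupport_mul_subset_right (f := fun _ => t)).trans hfs
      have h3 := (hint _ (hψ0.add h1) h2 h).sub hI0
      have h4 := h3.const_mul ((starRingEnd ℂ) t)⁻¹
      refine h4.congr (ae_of_all _ fun x => ?_)
      have ht' : (starRingEnd ℂ) t ≠ 0 := by simpa using ht
      simp only [Pi.sub_apply]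
      rw [lap_add hψ0 h1, lap_const_mul hf]
      simp only [map_add, map_mul]
      field_simp
      ring
    have hexp : ∀ t : ℝ, ∫ x in D, f x * (starRingEnd ℂ) (lap (fun y => ψ0 y + (t : ℂ) * f y) x)
        = (∫ x in D, f x * (starRingEnd ℂ) (lap ψ0 x)) +
          t * ∫ x in D, f x * (starRingEnd ℂ) (lap f x) := by
      intro t
      have h1 : ContDiff ℝ 2 fun y => (t : ℂ) * f y := contDiff_const.mul hf
      rw [← integral_const_mul, ← integral_add]
      · congr 1; ext x
        rw [lap_add hψ0 h1, lap_const_mul hf]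
        simp only [map_add, map_mul, Complex.conj_ofReal]
        ring
      · exact integrableOn_of_continuous hDb
          (hf.continuous.mul (conj_continuous (lap_continuous hψ0)))
      · exact integrableOn_of_continuous hDb (continuous_const.mul
          (hf.continuous.mul (conj_continuous (lap_continuous hf))))
    by_cases hc : ∫ x in D, f x * (starRingEnd ℂ) (lap (fun y => ψ0 y + ((1:ℝ) : ℂ) * f y) x) = 0
    · apply hadd ((-1 : ℝ) : ℂ) (by simp)
      rw [hexp] at hc ⊢
      intro h
      apply hβ
      push_cast at h hc
      linear_combination (h + hc) / 2
    · exact hadd _ (by simp) hc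
  have hsI : IntegrableOn s (Metric.ball x0 (2 * R)) := by
    have hsub : Metric.ball x0 (2 * R) ⊆ D :=
      Metric.ball_subset_closedBall.trans
        ((Metric.closedBall_subset_closedBall (by linarith)).trans hball)
    have h1 := (hsf.mono_set hsub).const_mul (((2 * d : ℝ) : ℂ))⁻¹
    refine Integrable.congr h1 ?_
    refine (ae_restrict_iff' Metric.isOpen_ball.measurableSet).2 (ae_of_all _ fun y hy => ?_)
    have : ((2 * d : ℝ) : ℂ) ≠ 0 := by
      exact_mod_cast (by positivity : (2 * d : ℝ) ≠ 0)
    simp only [hlf y hy, Complex.conj_ofReal]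
    field_simp
  set B2 := Metric.ball x0 (2 * R) with hB2
  have hB2D : B2 ⊆ D := Metric.ball_subset_closedBall.trans
        ((Metric.closedBall_subset_closedBall (by linarith)).trans hball)
  have hBB : Metric.ball x0 R ⊆ B2 := Metric.ball_subset_ball (by linarith)
  have hB2b : Bornology.IsBounded B2 := Metric.isBounded_ball
  set h : Euc d → ℂ := B2.indicator (fun y => s y + f y) with hh
  have hhI : Integrable h := by
    rw [hh, integrable_indicator_iff Metric.isOpen_ball.measurableSet]
    exact hsI.add (integrableOn_of_continuous hB2b hf.continuous)
  have hz : ∀ ψ : Euc d → ℝ, ContDiff ℝ ∞ ψ → HasCompactSupport ψ → tsupport ψ ⊆ B2 →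
      ∫ y, h y * lap (fun y => ((ψ y : ℝ) : ℂ)) y = 0 := by
    intro ψ h1 _ h3
    have h1' : ContDiff ℝ 2 ψ := contDiff_infty.1 h1 2
    have h1c := ofReal_contDiff h1'
    have hsup : tsupport (fun y => ((ψ y : ℝ) : ℂ)) ⊆ tsupport ψ := by
      apply closure_mono
      intro y hy hy0
      apply hy
      simp only
      rw [hy0]; simp
    have hl0 : ∀ y ∉ B2, lap (fun y => ((ψ y : ℝ) : ℂ)) y = 0 := fun y hy =>
      lap_of_notMem_tsupport fun h => hy (h3 (hsup h))
    have e1 : ∀ y, h y * lap (fun y => ((ψ y : ℝ) : ℂ)) y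
        = B2.indicator (fun y => s y * lap (fun y => ((ψ y : ℝ) : ℂ)) y
          + f y * lap (fun y => ((ψ y : ℝ) : ℂ)) y) y := by
      intro y
      by_cases hy : y ∈ B2
      · simp only [hh, Set.indicator_of_mem hy]; ring
      · simp only [hh, Set.indicator_of_notMem hy, zero_mul]
    simp_rw [e1]
    obtain ⟨C, hC, hCb⟩ := exists_bound_of_continuous hB2b (lap_continuous h1c)
    rw [integral_indicator Metric.isOpen_ball.measurableSet, integral_add]
    · have e2 : ∀ q : Euc d → ℂ, ∫ x in B2, q x * lap (fun y => ((ψ y : ℝ) : ℂ)) x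
          = ∫ x in D, q x * (starRingEnd ℂ) (lap (fun y => ((ψ y : ℝ) : ℂ)) x) := by
        intro q
        simp_rw [conj_lap_ofReal h1']
        refine (setIntegral_eq_of_subset_of_forall_sdiff_eq_zero hD.measurableSet hB2D ?_).symm
        intro x hx
        rw [hl0 x hx.2, mul_zero]
      rw [e2, e2, hS _ h1c ((hsup.trans h3).trans hB2D)]
      ring
    · refine Integrable.mul_bdd (c := C) hsI (lap_continuous h1c).aestronglyMeasurable ?_
      exact (ae_restrict_iff' Metric.isOpen_ball.measurableSet).2
        (ae_of_all _ fun y hy => hCb y (subset_closure hy))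
    · exact integrableOn_of_continuous hB2b (hf.continuous.mul (lap_continuous h1c))
  obtain ⟨H, hH, hHe⟩ := weyl hhI hR hz
  have hlap : ∀ᵐ y, y ∈ Metric.ball x0 R → lap H y = 0 := by
    refine IsOpen.ae_eq_zero_of_integral_contDiff_smul_eq_zero Metric.isOpen_ball
      ((lap_continuous hH).locallyIntegrable.locallyIntegrableOn _) ?_
    intro ψ h1 h2 h3
    have h1' : ContDiff ℝ 2 ψ := contDiff_infty.1 h1 2
    have h1c := ofReal_contDiff h1'
    have hsup : tsupport (fun y => ((ψ y : ℝ) : ℂ)) ⊆ tsupport ψ := by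
      apply closure_mono
      intro y hy hy0
      apply hy
      simp only
      rw [hy0]; simp
    have hl0 : ∀ y ∉ Metric.ball x0 R, lap (fun y => ((ψ y : ℝ) : ℂ)) y = 0 := fun y hy =>
      lap_of_notMem_tsupport fun h => hy (h3 (hsup h))
    have e1 := lap_symm Metric.isOpen_ball Metric.isBounded_ball h1c (hsup.trans h3) hH
    rw [setIntegral_eq_integral_of_forall_compl_eq_zero (fun y hy => by rw [hl0 y hy, zero_mul]),
      setIntegral_eq_integral_of_forall_compl_eq_zero] at e1
    · have e2 := hz ψ h1 h2 (h3.trans hBB)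
      have e3 : ∫ y, h y * lap (fun y => ((ψ y : ℝ) : ℂ)) y
          = ∫ y, lap (fun y => ((ψ y : ℝ) : ℂ)) y * H y := by
        refine integral_congr_ae ?_
        filter_upwards [hHe] with y hy
        by_cases hyb : y ∈ Metric.ball x0 R
        · rw [hy hyb, mul_comm]
        · rw [hl0 y hyb, zero_mul, mul_zero]
      rw [e3, e1] at e2
      simpa [Complex.real_smul] using e2
    · intro y hy
      have : ψ y = 0 := by
        by_contra hc
        exact hy (h3 (subset_tsupport _ hc))
      simp [this]
  -- `s = H - f` a.e. near `x₀`, and `Δ(H - f) = -2d ≠ 0`, so `s ≠ 0` a.e. and `1/n = s / Δw`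
  have hu := ae_ne_zero_of_lap (hH.sub hf)
  have hmeas : Measurable fun y => ((H y - f y) / lap w y).re :=
    Complex.measurable_re.comp ((hH.sub hf).continuous.measurable.div
      (lap_continuous hw.1).measurable)
  refine hmeas.aestronglyMeasurable.congr ?_
  refine (ae_restrict_iff' Metric.isOpen_ball.measurableSet).2 ?_
  filter_upwards [hHe, hlap, hu] with y h1 h2 h3 hy
  have h1 := h1 hy
  have h2 := h2 hy
  rw [hh, Set.indicator_of_mem (hBB hy)] at h1
  have h4 : H y - f y = s y := by rw [← h1]; ring
  have h5 : s y ≠ 0 := by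
    intro h0
    have h6 := h3 (by rw [← h0, ← h4])
    rw [lap_sub hH hf, h2, hlf y (hBB hy)] at h6
    have : (2 * d : ℝ) ≠ 0 := by positivity
    apply this
    have h7 : ((2 * d : ℝ) : ℂ) = 0 := by linear_combination -h6
    exact_mod_cast h7
  have h6 : lap w y ≠ 0 := fun h0 => h5 (by simp [hs, h0])
  rw [h4, hs]
  simp only
  rw [mul_div_assoc, div_self h6, mul_one, Complex.ofReal_re]

/-- The solvability of the variational problem forces `1/n` to be measurable on `D`. -/
lemma meas_inv [NeZero d] {D : Set (Euc d)} (hD : IsOpen D) (hDb : Bornology.IsBounded D)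
    {n : Euc d → ℝ}
    (S : ∀ f, MemX D f → ∃ w, MemX D w ∧ ∀ ψ : Euc d → ℂ, ContDiff ℝ 2 ψ → tsupport ψ ⊆ D →
      ∫ x in D, ((1 / n x : ℝ) : ℂ) * lap w x * (starRingEnd ℂ) (lap ψ x)
      = - ∫ x in D, f x * (starRingEnd ℂ) (lap ψ x)) :
    AEStronglyMeasurable (fun x => 1 / n x) (volume.restrict D) := by
  have h1 : ∀ x ∈ D, ∃ R > 0, Metric.closedBall x (3 * R) ⊆ D := by
    intro x hx
    obtain ⟨ε, hε, h⟩ := Metric.isOpen_iff.1 hD x hx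
    refine ⟨ε / 6, by positivity, (Metric.closedBall_subset_ball (by linarith)).trans h⟩
  choose! R hR hRD using h1
  obtain ⟨t, htD, htc, hcov⟩ := TopologicalSpace.countable_cover_nhdsWithin
    (f := fun x => Metric.ball x (R x)) (s := D)
    (fun x hx => mem_nhdsWithin_of_mem_nhds (Metric.ball_mem_nhds x (hR x hx)))
  have : Countable t := htc.to_subtype
  rw [Set.biUnion_eq_iUnion] at hcov
  refine AEStronglyMeasurable.mono_set hcov (aestronglyMeasurable_iUnion_iff.2 fun x => ?_)
  exact local_meas hD hDb (hR x (htD x.2)) (hRD x (htD x.2)) S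
end measurability

/-! ### A global defining function -/

section defining
variable {d : ℕ}

/-- A function which is nonnegative to the right of `0` along a line and vanishes at `0` has a
nonnegative derivative in that direction. -/
lemma fderiv_nonneg_of_ray {g : Euc d → ℝ} {y v : Euc d} (hg : DifferentiableAt ℝ g y)
    (h0 : g y = 0) (hpos : ∀ᶠ t in nhdsWithin (0 : ℝ) (Set.Ioi 0), 0 ≤ g (y + t • v)) :
    0 ≤ fderiv ℝ g y v := by
  have hd : HasDerivAt (fun s : ℝ => g (y + s • v)) (fderiv ℝ g y v) 0 := by
    have h1 : HasDerivAt (fun s : ℝ => y + s • v) v 0 := by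
      simpa using ((hasDerivAt_id (0 : ℝ)).smul_const v).const_add y
    have h2 : HasFDerivAt g (fderiv ℝ g y) (y + (0 : ℝ) • v) := by simpa using hg.hasFDerivAt
    exact h2.comp_hasDerivAt (0 : ℝ) h1
  have := hd.tendsto_slope_zero_right
  refine ge_of_tendsto this ?_
  filter_upwards [hpos, self_mem_nhdsWithin] with t ht ht0
  have : (0 : ℝ) < t := ht0
  simp only [zero_add, zero_smul, add_zero, h0, sub_zero, smul_eq_mul]
  positivity

lemma exists_neg_dir {L : Euc d →L[ℝ] ℝ} (h : L ≠ 0) : ∃ v, L v < 0 := by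
  obtain ⟨v, hv⟩ : ∃ v, L v ≠ 0 := by
    by_contra hc
    push Not at hc
    exact h (ContinuousLinearMap.ext hc)
  rcases lt_or_gt_of_ne hv with h1 | h1
  · exact ⟨v, h1⟩
  · exact ⟨-v, by simpa using h1⟩

/-- Moving from a zero of `ρ` in a direction of decrease makes `ρ` negative. -/
lemma eventually_neg_ray {ρ : Euc d → ℝ} {y v : Euc d} (hg : DifferentiableAt ℝ ρ y)
    (h0 : ρ y = 0) (hv : fderiv ℝ ρ y v < 0) :
    ∀ᶠ t in nhdsWithin (0 : ℝ) (Set.Ioi 0), ρ (y + t • v) < 0 := by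
  have hd : HasDerivAt (fun s : ℝ => ρ (y + s • v)) (fderiv ℝ ρ y v) 0 := by
    have h1 : HasDerivAt (fun s : ℝ => y + s • v) v 0 := by
      simpa using ((hasDerivAt_id (0 : ℝ)).smul_const v).const_add y
    have h2 : HasFDerivAt ρ (fderiv ℝ ρ y) (y + (0 : ℝ) • v) := by simpa using hg.hasFDerivAt
    exact h2.comp_hasDerivAt (0 : ℝ) h1
  have := hd.tendsto_slope_zero_right.eventually_lt_const hv
  filter_upwards [this, self_mem_nhdsWithin] with t ht ht0
  have ht0 : (0 : ℝ) < t := ht0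
  simp only [zero_add, zero_smul, add_zero, h0, sub_zero, smul_eq_mul] at ht
  by_contra hc
  push Not at hc
  have : 0 ≤ t⁻¹ * ρ (y + t • v) := by positivity
  linarith

lemma tendsto_ray (y v : Euc d) :
    Tendsto (fun t : ℝ => y + t • v) (nhdsWithin (0 : ℝ) (Set.Ioi 0)) (nhds y) := by
  have : Continuous fun t : ℝ => y + t • v := by fun_prop
  have h := this.tendsto 0
  simp only [zero_smul, add_zero] at h
  exact h.mono_left nhdsWithin_le_nhds

/-- Local description of `D` near a boundary point. -/
lemma local_chart {D : Set (Euc d)} (hD : IsOpen D) (hC2 : BoundaryC2 D) {x : Euc d}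
    (hx : x ∈ frontier D) :
    ∃ (ρ : Euc d → ℝ) (r : ℝ) (χ : Euc d → ℝ), ContDiff ℝ 2 ρ ∧ 0 < r ∧ ContDiff ℝ 2 χ ∧
      (∀ y ∈ Metric.ball x r, (y ∈ D ↔ ρ y < 0) ∧ fderiv ℝ ρ y ≠ 0 ∧
        (y ∈ frontier D ↔ ρ y = 0)) ∧
      (∀ y, 0 ≤ χ y) ∧ (∀ y, χ y ≤ 1) ∧ (∀ y ∈ Metric.ball x (r / 2), χ y = 1) ∧
      (∀ y ∉ Metric.ball x r, χ y = 0) := by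
  obtain ⟨ρ, hρ, hρ0, hρD⟩ := hC2 x hx
  have hc : Continuous (fderiv ℝ ρ) := hρ.continuous_fderiv (by norm_num)
  have h1 : ∀ᶠ y in nhds x, fderiv ℝ ρ y ≠ 0 := hc.continuousAt.eventually_ne hρ0
  obtain ⟨r, hr, hb⟩ := Metric.eventually_nhds_iff_ball.1 (hρD.and h1)
  let χ : ContDiffBump x := ⟨r / 2, r, by positivity, by linarith⟩
  refine ⟨ρ, r, χ, hρ, hr, χ.contDiff, ?_, fun _ => χ.nonneg, fun _ => χ.le_one, ?_, ?_⟩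
  · intro y hy
    refine ⟨(hb y hy).1, (hb y hy).2, ?_⟩
    have hball : Metric.ball x r ∈ nhds y := Metric.isOpen_ball.mem_nhds hy
    constructor
    · intro hyf
      rw [hD.frontier_eq] at hyf
      have h2 : 0 ≤ ρ y := not_lt.1 fun h => hyf.2 ((hb y hy).1.2 h)
      refine le_antisymm ?_ h2
      by_contra hc
      push Not at hc
      have h3 : {z | 0 < ρ z} ∩ Metric.ball x r ∈ nhds y :=
        inter_mem ((isOpen_lt continuous_const hρ.continuous).mem_nhds hc) hball
      obtain ⟨z, hz1, hz2⟩ := mem_closure_iff_nhds.1 hyf.1 _ h3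
      have := (hb z hz1.2).1.1 hz2
      have h4 : 0 < ρ z := hz1.1
      linarith
    · intro h0
      rw [hD.frontier_eq]
      refine ⟨?_, fun h => by have := (hb y hy).1.1 h; linarith⟩
      obtain ⟨v, hv⟩ := exists_neg_dir (hb y hy).2
      have h3 := eventually_neg_ray (hρ.differentiable (by norm_num) y) h0 hv
      refine mem_closure_of_tendsto (tendsto_ray y v) ?_
      filter_upwards [h3, (tendsto_ray y v).eventually hball] with t ht1 ht2
      exact (hb _ ht2).1.2 ht1
  · intro y hy
    exact χ.one_of_mem_closedBall (Metric.ball_subset_closedBall hy)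
  · intro y hy
    have : y ∉ Function.support χ := by rwa [χ.support_eq]
    simpa using this

/-- A bounded domain of class `C²` has a global `C²` defining function. -/
lemma exists_defining {D : Set (Euc d)} (hD : IsOpen D) (hDb : Bornology.IsBounded D)
    (hC2 : BoundaryC2 D) :
    ∃ F : Euc d → ℝ, ContDiff ℝ 2 F ∧ (∀ x ∈ D, 0 < F x) ∧ (∀ x ∈ frontier D, F x = 0) ∧
      ∀ x ∈ frontier D, fderiv ℝ F x ≠ 0 := by
  have hloc := fun x (hx : x ∈ frontier D) => local_chart hD hC2 hx
  choose! ρ r χ hρ hr hχ hch hχ0 hχ1 hχin hχout using hloc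
  have hcomp : IsCompact (frontier D) :=
    hDb.isCompact_closure.of_isClosed_subset isClosed_frontier frontier_subset_closure
  obtain ⟨t, htf, hcov⟩ := hcomp.elim_nhds_subcover (fun x => Metric.ball x (r x / 2))
    (fun x hx => Metric.ball_mem_nhds x (half_pos (hr x hx)))
  have hcov' : ∀ y ∈ frontier D, ∃ x ∈ t, y ∈ Metric.ball x (r x / 2) := by
    intro y hy; simpa using hcov hy
  let F : Euc d → ℝ := fun y => ∑ x ∈ t, χ x y * (-ρ x y) + ∏ x ∈ t, (1 - χ x y)
  have hF : ContDiff ℝ 2 F :=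
    (ContDiff.sum fun x hx => (hχ x (htf x hx)).mul (hρ x (htf x hx)).neg).add
      (contDiff_prod fun x hx => contDiff_const.sub (hχ x (htf x hx)))
  have hterm : ∀ y ∈ D, ∀ x ∈ t, 0 ≤ χ x y * (-ρ x y) := by
    intro y hy x hx
    by_cases hb : y ∈ Metric.ball x (r x)
    · have := (hch x (htf x hx) y hb).1.1 hy
      exact mul_nonneg (hχ0 x (htf x hx) y) (by linarith)
    · rw [hχout x (htf x hx) y hb]; simp
  have hprod : ∀ y, 0 ≤ ∏ x ∈ t, (1 - χ x y) := fun y =>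
    Finset.prod_nonneg fun x hx => sub_nonneg.2 (hχ1 x (htf x hx) y)
  have hF0 : ∀ y ∈ frontier D, F y = 0 := by
    intro y hy
    obtain ⟨x, hx, hyx⟩ := hcov' y hy
    have h1 : ∏ x ∈ t, (1 - χ x y) = 0 :=
      Finset.prod_eq_zero hx (by rw [hχin x (htf x hx) y hyx]; simp)
    have h2 : ∑ x ∈ t, χ x y * (-ρ x y) = 0 := by
      refine Finset.sum_eq_zero fun x hx => ?_
      by_cases hb : y ∈ Metric.ball x (r x)
      · rw [((hch x (htf x hx) y hb).2.2).1 hy]; simp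
      · rw [hχout x (htf x hx) y hb]; simp
    simp only [F, h1, h2, add_zero]
  refine ⟨F, hF, ?_, hF0, ?_⟩
  · intro y hy
    by_cases hall : ∀ x ∈ t, χ x y = 0
    · have : ∏ x ∈ t, (1 - χ x y) = 1 := Finset.prod_eq_one fun x hx => by simp [hall x hx]
      have h2 := Finset.sum_nonneg (hterm y hy)
      simp only [F, this]
      linarith
    · push Not at hall
      obtain ⟨x, hx, hx0⟩ := hall
      have hb : y ∈ Metric.ball x (r x) := by
        by_contra hb
        exact hx0 (hχout x (htf x hx) y hb)
      have h1 : 0 < χ x y * (-ρ x y) :=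
        mul_pos (lt_of_le_of_ne (hχ0 x (htf x hx) y) (Ne.symm hx0))
          (by have := (hch x (htf x hx) y hb).1.1 hy; linarith)
      have h2 := Finset.single_le_sum (hterm y hy) hx
      have h3 := hprod y
      simp only [F]
      linarith
  · intro y hy hfd
    obtain ⟨x, hx, hyx⟩ := hcov' y hy
    have hxf := htf x hx
    have hyr : y ∈ Metric.ball x (r x) :=
      Metric.ball_subset_ball (by have := hr x hxf; linarith) hyx
    obtain ⟨v, hv⟩ := exists_neg_dir (hch x hxf y hyr).2.1
    have hρ0 := (hch x hxf y hyr).2.2.1 hy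
    have hdF := hF.differentiable (by norm_num) y
    have hdρ := (hρ x hxf).differentiable (by norm_num) y
    have hneg := eventually_neg_ray hdρ hρ0 hv
    -- inside `D` near `y`, the defining function dominates `-ρ`
    have h := fderiv_nonneg_of_ray (g := fun z => F z + ρ x z) (v := v) (hdF.add hdρ)
      (by simp [hF0 y hy, hρ0]) (by
        filter_upwards [hneg, (tendsto_ray y v).eventually (Metric.isOpen_ball.mem_nhds hyx)]
          with s hs1 hs2
        have hzr : y + s • v ∈ Metric.ball x (r x) :=
          Metric.ball_subset_ball (by have := hr x hxf; linarith) hs2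
        have hzD := (hch x hxf _ hzr).1.2 hs1
        have h2 := Finset.single_le_sum (hterm _ hzD) hx
        rw [hχin x hxf _ hs2] at h2
        have h3 := hprod (y + s • v)
        simp only [F]
        linarith)
    rw [fderiv_fun_add hdF hdρ, hfd] at h
    simp at h
    linarith

/-- A `C¹` function vanishing on `∂D` has a gradient parallel to that of a local defining function
at boundary points. -/
lemma lagrange {D : Set (Euc d)} (hD : IsOpen D) (hC2 : BoundaryC2 D) {F : Euc d → ℝ}
    (hF : ContDiff ℝ 2 F) (hF0 : ∀ x ∈ frontier D, F x = 0)
    (hF1 : ∀ x ∈ frontier D, fderiv ℝ F x ≠ 0)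
    {f : Euc d → ℝ} (hf : ContDiff ℝ 1 f) (hf0 : ∀ x ∈ frontier D, f x = 0) {x : Euc d}
    (hx : x ∈ frontier D) : ∃ c : ℝ, fderiv ℝ f x = c • fderiv ℝ F x := by
  obtain ⟨ρ, r, -, hρ, hr, -, hch, -⟩ := local_chart hD hC2 hx
  have hxb : x ∈ Metric.ball x r := Metric.mem_ball_self hr
  have key : ∀ g : Euc d → ℝ, ContDiff ℝ 1 g → (∀ x ∈ frontier D, g x = 0) →
      ∃ c : ℝ, fderiv ℝ g x = c • fderiv ℝ ρ x := by
    intro g hg hg0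
    have hex : IsLocalExtrOn g {y | ρ y = ρ x} x := by
      left
      filter_upwards [self_mem_nhdsWithin,
        mem_nhdsWithin_of_mem_nhds (Metric.isOpen_ball.mem_nhds hxb)] with y hy hyb
      have hy : ρ y = ρ x := hy
      rw [(hch x hxb).2.2.1 hx] at hy
      rw [hg0 x hx, hg0 y ((hch y hyb).2.2.2 hy)]
    obtain ⟨a, b, hab, h⟩ := hex.exists_multipliers_of_hasStrictFDerivAt_1d
      (hρ.contDiffAt.hasStrictFDerivAt (by norm_num))
      (hg.contDiffAt.hasStrictFDerivAt (by norm_num))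
    have hb : b ≠ 0 := by
      rintro rfl
      have ha : a ≠ 0 := by
        rintro rfl; exact hab rfl
      simp only [zero_smul, add_zero, smul_eq_zero] at h
      exact h.elim ha (hch x hxb).2.1
    refine ⟨-(b⁻¹ * a), ?_⟩
    have h2 : b • fderiv ℝ g x = -(a • fderiv ℝ ρ x) := by
      rw [eq_neg_iff_add_eq_zero, add_comm]; exact h
    rw [neg_smul, mul_smul, ← smul_neg, ← h2, smul_smul, inv_mul_cancel₀ hb, one_smul]
  obtain ⟨c1, h1⟩ := key f hf hf0
  obtain ⟨c2, h2⟩ := key F (hF.of_le (by norm_num)) hF0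
  have hc2 : c2 ≠ 0 := by
    rintro rfl
    exact hF1 x hx (by rw [h2, zero_smul])
  refine ⟨c1 / c2, ?_⟩
  rw [h1, h2, smul_smul, div_mul_cancel₀ _ hc2]
end defining

/-! ### The boundary layer estimate -/

section layer
variable {d : ℕ}

/-- The Laplacian of a real valued function. -/
def lapR (u : Euc d → ℝ) (x : Euc d) : ℝ := ∑ i, pd i (pd i u) x

lemma lapR_continuous {u : Euc d → ℝ} (hu : ContDiff ℝ 2 u) : Continuous (lapR u) :=
  continuous_finsetSum _ fun i _ => pd_pd_continuous hu i i

/-- The profile of the boundary layer: `b` is a decreasing cut-off with `b(0) = 1` and `b = 0` beyond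
`2`, and `θ` is its primitive vanishing at `0`, bounded on `[0, ∞)`. -/
lemma exists_cutoff : ∃ θ b : ℝ → ℝ, ContDiff ℝ 2 θ ∧ ContDiff ℝ 1 b ∧ deriv θ = b ∧ θ 0 = 0 ∧
    b 0 = 1 ∧ (∀ s, 0 ≤ b s) ∧ (∀ s, b s ≤ 1) ∧ (∀ s, deriv b s ≤ 0) ∧ (∀ s ≥ 2, b s = 0) ∧
    (∀ s ≥ 2, deriv b s = 0) ∧ ∀ s ≥ 0, |θ s| ≤ 2 := by
  let b : ℝ → ℝ := fun s => Real.smoothTransition (2 - s)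
  have hb : ContDiff ℝ 1 b := Real.smoothTransition.contDiff.comp (contDiff_const.sub contDiff_id)
  have hb0 : ∀ s ≥ 2, b s = 0 := fun s hs => Real.smoothTransition.zero_of_nonpos (by linarith)
  have hneg : ∀ s, deriv b s ≤ 0 := by
    intro s
    apply Antitone.deriv_nonpos
    intro s t h
    exact Real.smoothTransition.monotone (by linarith)
  have hbc := hb.continuous
  have hderiv : deriv (fun u => ∫ x in (0 : ℝ)..u, b x) = b :=
    funext fun s => hbc.deriv_integral _ 0 s
  have hle : ∀ s ≥ 0, |∫ x in (0 : ℝ)..s, b x| ≤ s := by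
    intro s hs
    have := intervalIntegral.norm_integral_le_of_norm_le_const (a := 0) (b := s) (f := b) (C := 1)
      (fun x _ => by
        rw [Real.norm_eq_abs, abs_of_nonneg (Real.smoothTransition.nonneg _)]
        exact Real.smoothTransition.le_one _)
    rw [Real.norm_eq_abs, sub_zero, abs_of_nonneg hs, one_mul] at this
    exact this
  refine ⟨fun u => ∫ x in (0 : ℝ)..u, b x, b, ?_, hb, hderiv, by simp, ?_,
    fun s => Real.smoothTransition.nonneg _, fun s => Real.smoothTransition.le_one _, hneg, hb0,
    ?_, ?_⟩
  · have : (2 : WithTop ℕ∞) = 1 + 1 := by norm_num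
    rw [this, contDiff_succ_iff_deriv]
    refine ⟨fun s => (hbc.integral_hasStrictDerivAt 0 s).hasDerivAt.differentiableAt,
      by norm_num, ?_⟩
    rw [hderiv]; exact hb
  · exact Real.smoothTransition.one_of_one_le (by norm_num)
  · intro s hs
    refine le_antisymm (hneg s) ?_
    have hd := (hb.differentiable (by norm_num) s).hasDerivAt.tendsto_slope_zero_right
    refine ge_of_tendsto hd ?_
    filter_upwards [self_mem_nhdsWithin] with t ht
    have ht : (0 : ℝ) < t := ht
    rw [hb0 s hs, hb0 (s + t) (by linarith)]; simp
  · intro s hs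
    rcases le_total s 2 with h | h
    · exact (hle s hs).trans h
    · have h1 : ∫ x in (2 : ℝ)..s, b x = 0 := by
        rw [intervalIntegral.integral_congr (g := fun _ => 0)]
        · simp
        · intro x hx
          rw [Set.uIcc_of_le h] at hx
          exact hb0 x hx.1
      have h2 := intervalIntegral.integral_add_adjacent_intervals
        (hbc.intervalIntegrable (μ := volume) 0 2) (hbc.intervalIntegrable (μ := volume) 2 s)
      simp only
      rw [← h2, h1, add_zero]
      exact hle 2 (by norm_num)

lemma pd_cutoff {g : ℝ → ℝ} (hg : ContDiff ℝ 1 g) {F : Euc d → ℝ} (hF : ContDiff ℝ 1 F) (ε : ℝ)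
    (i : Fin d) (x : Euc d) :
    pd i (fun y => g (F y / ε)) x = ε⁻¹ * deriv g (F x / ε) * pd i F x := by
  have hdF := hF.differentiable (by norm_num)
  have h1 : pd i (fun y => F y / ε) x = ε⁻¹ * pd i F x := by
    have : (fun y => F y / ε) = fun y => ε⁻¹ * F y := by ext y; ring
    rw [this, pd_const_mul (hdF x)]
  have h2 : DifferentiableAt ℝ (fun y => F y / ε) x :=
    (hF.div_const ε).differentiable (by norm_num) x
  rw [pd_comp (hg.differentiable (by norm_num) _) h2, h1]
  ring

/-- The Laplacian of the layer function `ε θ(F/ε) p` splits into a part of order `1/ε` that is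
supported in the layer `F ≤ 2ε` of `D`, and a remainder that is bounded in `ε`. -/
lemma lapR_cutoff {θ b : ℝ → ℝ} (hθ : ContDiff ℝ 2 θ) (hb : ContDiff ℝ 1 b) (hθb : deriv θ = b)
    {F p : Euc d → ℝ} (hF : ContDiff ℝ 2 F) (hp : ContDiff ℝ 2 p) {ε : ℝ} (hε : 0 < ε)
    (x : Euc d) :
    lapR (fun y => ε * θ (F y / ε) * p y) x =
      ε⁻¹ * deriv b (F x / ε) * ((∑ i, pd i F x ^ 2) * p x)
      + (b (F x / ε) * (p x * lapR F x + 2 * ∑ i, pd i F x * pd i p x)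
        + ε * θ (F x / ε) * lapR p x) := by
  have hF1 : ContDiff ℝ 1 F := hF.of_le (by norm_num)
  have hθ1 : ContDiff ℝ 1 θ := hθ.of_le (by norm_num)
  have hFε : ContDiff ℝ 2 fun y => F y / ε := hF.div_const ε
  have hθF : ContDiff ℝ 2 fun y => θ (F y / ε) := hθ.comp hFε
  have hbF : ContDiff ℝ 1 fun y => b (F y / ε) := hb.comp (hFε.of_le (by norm_num))
  have hp1 : ContDiff ℝ 1 p := hp.of_le (by norm_num)
  have key : ∀ i, pd i (pd i (fun y => ε * θ (F y / ε) * p y)) x =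
      ε⁻¹ * deriv b (F x / ε) * (pd i F x ^ 2 * p x)
      + (b (F x / ε) * (p x * pd i (pd i F) x + 2 * (pd i F x * pd i p x))
        + ε * θ (F x / ε) * pd i (pd i p) x) := by
    intro i
    have e1 : pd i (fun y => ε * θ (F y / ε) * p y) =
        fun y => b (F y / ε) * pd i F y * p y + ε * θ (F y / ε) * pd i p y := by
      ext y
      rw [pd_mul ((contDiff_const.mul hθF).differentiable (by norm_num) y)
        (hp.differentiable (by norm_num) y), pd_const_mul (hθF.differentiable (by norm_num) y),
        pd_cutoff hθ1 hF1, hθb]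
      field_simp
    have d1 := hbF.differentiable (by norm_num) x
    have d2 := (pd_contDiff_one hF i).differentiable (by norm_num) x
    have d3 := hp1.differentiable (by norm_num) x
    have d4 := (hθF.differentiable (by norm_num) x)
    have d5 := (pd_contDiff_one hp i).differentiable (by norm_num) x
    have d12 : DifferentiableAt ℝ (fun y => b (F y / ε) * pd i F y) x := d1.mul d2
    have d123 : DifferentiableAt ℝ (fun y => b (F y / ε) * pd i F y * p y) x := d12.mul d3
    have d4' : DifferentiableAt ℝ (fun y => ε * θ (F y / ε)) x := d4.const_mul ε
    have d45 : DifferentiableAt ℝ (fun y => ε * θ (F y / ε) * pd i p y) x := d4'.mul d5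
    rw [e1, pd_add d123 d45, pd_mul d12 d3, pd_mul d1 d2, pd_mul d4' d5, pd_const_mul d4, pd_cutoff hθ1 hF1,
      pd_cutoff hb hF1, hθb]
    field_simp
    ring
  unfold lapR
  simp_rw [key]
  rw [Finset.sum_add_distrib, Finset.sum_add_distrib, ← Finset.mul_sum, ← Finset.mul_sum,
    ← Finset.mul_sum, Finset.sum_add_distrib, ← Finset.mul_sum, ← Finset.mul_sum, Finset.sum_mul]
end layer

section layer
variable {d : ℕ}

/-- Boundary layer estimate.  A positive functional `p ↦ ∫_{∂D} m p dσ` that is represented on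
`C²` functions `ζ` vanishing on `∂D`, with normal derivative prescribed by `p`, as
`-∫_D g Δζ` for a bounded `g`, is controlled by the divergence of any `C¹` vector field `Y` with
the right component along `∇F` on the boundary. -/
lemma layer_bound {D : Set (Euc d)} (hD : IsOpen D) (hDb : Bornology.IsBounded D) {F : Euc d → ℝ}
    (hF : ContDiff ℝ 2 F) (hFpos : ∀ x ∈ D, 0 < F x) (hF0 : ∀ x ∈ frontier D, F x = 0)
    (hF1 : ∀ x ∈ frontier D, 0 < ∑ i, pd i F x ^ 2)
    {σ : Measure (Euc d)} {m : Euc d → ℝ} (hm : IntegrableOn m (frontier D) σ)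
    (hm0 : ∀ᵐ x ∂σ.restrict (frontier D), 0 ≤ m x)
    {g : Euc d → ℝ} {M : ℝ} (hM : 0 ≤ M)
    (hgm : AEStronglyMeasurable g (volume.restrict D))
    (hgM : ∀ᵐ x ∂(volume : Measure (Euc d)).restrict D, ‖g x‖ ≤ M)
    (hΛ : ∀ ζ p : Euc d → ℝ, ContDiff ℝ 2 ζ → ContDiff ℝ 2 p → (∀ x ∈ frontier D, ζ x = 0) →
      (∀ x ∈ frontier D, fderiv ℝ ζ x = p x • fderiv ℝ F x) →
      ∫ x in frontier D, m x * p x ∂σ = - ∫ x in D, g x * lapR ζ x)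
    {P : Euc d → ℝ} (hP : Continuous P) (hP0 : ∀ x, 0 ≤ P x)
    {Y : Fin d → Euc d → ℝ} (hY : ∀ i, ContDiff ℝ 1 (Y i))
    (hYP : ∀ x ∈ frontier D, ∑ i, pd i F x * Y i x = (∑ i, pd i F x ^ 2) * P x) :
    ∫ x in frontier D, m x * P x ∂σ ≤ M * ∫ x in D, |∑ i, pd i (Y i) x| := by
  have hcomp : IsCompact (frontier D) :=
    hDb.isCompact_closure.of_isClosed_subset isClosed_frontier frontier_subset_closure
  have hFr1 : ContDiff ℝ 1 F := hF.of_le (by norm_num)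
  have hpdF : ∀ i, Continuous (pd i F) := fun i => pd_continuous hFr1 i
  have hS : Continuous fun x => ∑ i, pd i F x ^ 2 :=
    continuous_finsetSum _ fun i _ => (hpdF i).pow 2
  have hdivc : Continuous fun x => ∑ i, pd i (Y i) x :=
    continuous_finsetSum _ fun i _ => pd_continuous (hY i) i
  obtain ⟨θ, b, hθ, hb, hθb, hθ0, hb0, hbnn, hble, hb', hb2, hb'2, hθ2⟩ := exists_cutoff
  have hmbdd : ∀ q : Euc d → ℝ, Continuous q → IntegrableOn (fun x => m x * q x) (frontier D) σ := by
    intro q hq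
    obtain ⟨C, hC⟩ := hcomp.exists_bound_of_continuousOn hq.continuousOn
    exact Integrable.mul_bdd (c := C) hm hq.aestronglyMeasurable
      ((ae_restrict_iff' isClosed_frontier.measurableSet).2 (ae_of_all _ hC))
  -- the estimate with a loss `2 δ M ∫ |ΔF|`
  have main : ∀ δ > 0, ∫ x in frontier D, m x * P x ∂σ ≤
      M * ((∫ x in D, |∑ i, pd i (Y i) x|) + 2 * δ * ∫ x in D, |lapR F x|) := by
    intro δ hδ
    obtain ⟨p, hp', hpP, -⟩ := (hP.add continuous_const :
      Continuous fun x => P x + δ / 2).exists_contDiff_approx (ε := fun _ => δ / 2) 2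
      continuous_const (fun _ => half_pos hδ)
    have hp : ContDiff ℝ 2 p := by exact_mod_cast hp'
    have hp1 : ∀ x, P x < p x ∧ p x < P x + δ := by
      intro x
      have := abs_lt.1 (by simpa [Real.dist_eq] using hpP x)
      constructor <;> linarith [this.1, this.2]
    have hp0 : ∀ x, 0 ≤ p x := fun x => (hP0 x).trans (hp1 x).1.le
    -- Adding `2 δ ∇F` to `Y` turns the equality `∇F·Y = |∇F|² P` on `∂D` into the strict inequality
    -- `|∇F|² p < ∇F·W`, which then persists in a layer `F < ε₀`.
    let W : Fin d → Euc d → ℝ := fun i x => Y i x + 2 * δ * pd i F x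
    have hW : ∀ i, ContDiff ℝ 1 (W i) := fun i =>
      (hY i).add (contDiff_const.mul (pd_contDiff_one hF i))
    let q : Euc d → ℝ := fun x => ∑ i, pd i F x * W i x - (∑ i, pd i F x ^ 2) * p x
    have hq : Continuous q :=
      (continuous_finsetSum _ fun i _ => (hpdF i).mul (hW i).continuous).sub (hS.mul hp.continuous)
    have hqf : ∀ x ∈ frontier D, 0 < q x := by
      intro x hx
      have e : q x = (∑ i, pd i F x ^ 2) * (P x + 2 * δ - p x) := by
        have : ∑ i, pd i F x * W i x
            = ∑ i, pd i F x * Y i x + 2 * δ * ∑ i, pd i F x ^ 2 := by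
          rw [Finset.mul_sum, ← Finset.sum_add_distrib]
          exact Finset.sum_congr rfl fun i _ => by simp only [W]; ring
        simp only [q]
        rw [this, hYP x hx]; ring
      rw [e]
      exact mul_pos (hF1 x hx) (by linarith [(hp1 x).2])
    have hlayer : ∃ ε0 > 0, ∀ x ∈ D, F x < ε0 → 0 ≤ q x := by
      have hK : IsCompact (closure D ∩ {x | q x ≤ 0}) :=
        hDb.isCompact_closure.inter_right (isClosed_le hq continuous_const)
      rcases (closure D ∩ {x | q x ≤ 0}).eq_empty_or_nonempty with h | h
      · refine ⟨1, one_pos, fun x hx _ => ?_⟩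
        by_contra hc
        have : x ∈ closure D ∩ {x | q x ≤ 0} := ⟨subset_closure hx, (not_le.1 hc).le⟩
        rw [h] at this
        exact this
      · obtain ⟨z, hz, hzmin⟩ := hK.exists_isMinOn h hF.continuous.continuousOn
        have hzD : z ∈ D := by
          by_contra hc
          have h1 : z ∈ frontier D := by rw [hD.frontier_eq]; exact ⟨hz.1, hc⟩
          have h2 : q z ≤ 0 := hz.2
          linarith [hqf z h1]
        refine ⟨F z, hFpos z hzD, fun x hx hlt => ?_⟩
        by_contra hc
        have h1 : x ∈ closure D ∩ {x | q x ≤ 0} := ⟨subset_closure hx, (not_le.1 hc).le⟩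
        have h2 : F z ≤ F x := hzmin h1
        linarith
    obtain ⟨ε0, hε0, hlay⟩ := hlayer
    let e : ℕ → ℝ := fun k => 1 / ((k : ℝ) + 1)
    have he : ∀ k, 0 < e k := fun k => by positivity
    have he1 : ∀ k, e k ≤ 1 := fun k => by
      simp only [e]
      rw [div_le_one (by positivity)]
      linarith [(Nat.cast_nonneg k : (0 : ℝ) ≤ k)]
    have hetend : Tendsto e atTop (nhds 0) := tendsto_one_div_add_atTop_nhds_zero_nat
    let A : ℕ → Euc d → ℝ := fun k x =>
      (e k)⁻¹ * deriv b (F x / e k) * ((∑ i, pd i F x ^ 2) * p x)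
    let R : ℕ → Euc d → ℝ := fun k x =>
      b (F x / e k) * (p x * lapR F x + 2 * ∑ i, pd i F x * pd i p x)
        + e k * θ (F x / e k) * lapR p x
    have hFk : ∀ k, Continuous fun x => F x / e k := fun k => hF.continuous.div_const _
    have hb'c : Continuous (deriv b) := hb.continuous_deriv (by norm_num)
    have hAc : ∀ k, Continuous (A k) := fun k =>
      (continuous_const.mul (hb'c.comp (hFk k))).mul (hS.mul hp.continuous)
    have hc1 : Continuous fun x => p x * lapR F x + 2 * ∑ i, pd i F x * pd i p x :=
      (hp.continuous.mul (lapR_continuous hF)).add (continuous_const.mul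
        (continuous_finsetSum _ fun i _ => (hpdF i).mul (pd_continuous (hp.of_le (by norm_num)) i)))
    have hRc : ∀ k, Continuous (R k) := fun k =>
      ((hb.continuous.comp (hFk k)).mul hc1).add
        ((continuous_const.mul (hθ.continuous.comp (hFk k))).mul (lapR_continuous hp))
    have hnonneg : ∀ k, ∀ x ∈ D, 0 ≤ F x / e k := fun k x hx => (div_pos (hFpos x hx) (he k)).le
    have hR0 : Tendsto (fun k => ∫ x in D, |R k x|) atTop (nhds 0) := by
      have h0 : (0 : ℝ) = ∫ x in D, (0 : ℝ) := by simp
      rw [h0]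
      refine tendsto_integral_of_dominated_convergence
        (fun x => |p x * lapR F x + 2 * ∑ i, pd i F x * pd i p x| + 2 * |lapR p x|)
        (fun k => (hRc k).abs.aestronglyMeasurable)
        (integrableOn_of_continuous hDb (hc1.abs.add
          (continuous_const.mul (lapR_continuous hp).abs))) ?_ ?_
      · intro k
        refine (ae_restrict_iff' hD.measurableSet).2 (ae_of_all _ fun x hx => ?_)
        rw [Real.norm_eq_abs, abs_abs]
        refine (abs_add_le _ _).trans (add_le_add ?_ ?_)
        · rw [abs_mul, abs_of_nonneg (hbnn _)]
          exact mul_le_of_le_one_left (abs_nonneg _) (hble _)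
        · rw [abs_mul, abs_mul, abs_of_pos (he k)]
          refine mul_le_mul_of_nonneg_right ?_ (abs_nonneg _)
          calc e k * |θ (F x / e k)| ≤ 1 * 2 :=
                mul_le_mul (he1 k) (hθ2 _ (hnonneg k x hx)) (abs_nonneg _) zero_le_one
            _ = 2 := by norm_num
      · refine (ae_restrict_iff' hD.measurableSet).2 (ae_of_all _ fun x hx => ?_)
        have hFx := hFpos x hx
        have hlim : Tendsto (fun k => e k * (2 * |lapR p x|)) atTop (nhds 0) := by
          simpa using hetend.mul_const (2 * |lapR p x|)
        refine squeeze_zero' (Eventually.of_forall fun k => abs_nonneg _) ?_ hlim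
        have hsmall : ∀ᶠ k in atTop, e k < F x / 2 := hetend.eventually_lt_const (by positivity)
        filter_upwards [hsmall] with k hk
        have h2 : 2 ≤ F x / e k := by
          rw [le_div_iff₀ (he k)]; linarith
        simp only [R]
        rw [hb2 _ h2, zero_mul, zero_add, abs_mul, abs_mul, abs_of_pos (he k), mul_assoc]
        exact mul_le_mul_of_nonneg_left
          (mul_le_mul_of_nonneg_right (hθ2 _ (hnonneg k x hx)) (abs_nonneg _)) (he k).le
    -- The representation of the functional is applied to `ζ = e θ(F/e) p`, for which `∇ζ = p ∇F` on `∂D`.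
    have hrep : ∀ k, ∫ x in frontier D, m x * p x ∂σ ≤
        M * (∫ x in D, |A k x|) + M * ∫ x in D, |R k x| := by
      intro k
      have hζ : ContDiff ℝ 2 fun y => e k * θ (F y / e k) * p y :=
        (contDiff_const.mul (hθ.comp (hF.div_const _))).mul hp
      have h1 := hΛ (fun y => e k * θ (F y / e k) * p y) p hζ hp
        (fun x hx => by rw [hF0 x hx]; simp [hθ0])
        (fun x hx => by
          have hdF := (hFr1.differentiable (by norm_num) x).hasFDerivAt
          have hθF : HasFDerivAt (fun y => θ (F y / e k))
              ((b 0 * (e k)⁻¹) • fderiv ℝ F x) x := by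
            have h3 : HasFDerivAt (fun y => F y / e k) ((e k)⁻¹ • fderiv ℝ F x) x := by
              have h8 := hdF.const_mul (e k)⁻¹
              have h9 : (fun y => F y / e k) = fun y => (e k)⁻¹ * F y := by
                ext y; rw [div_eq_inv_mul]
              rw [h9]
              exact h8
            have h4 : HasDerivAt θ (b 0) (F x / e k) := by
              rw [hF0 x hx, zero_div, ← hθb]
              exact (hθ.differentiable (by norm_num) 0).hasDerivAt
            have h5 := h4.comp_hasFDerivAt x h3
            rw [smul_smul] at h5
            exact h5
          have hp' := (hp.differentiable (by norm_num) x).hasFDerivAt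
          have h6 := ((hθF.const_mul (e k)).mul hp').fderiv
          have h7 : fderiv ℝ (fun y => e k * θ (F y / e k) * p y) x = _ := h6
          rw [h7, hF0 x hx, zero_div, hθ0, hb0]
          have := (he k).ne'
          simp [smul_smul, this])
      rw [h1, ← integral_neg, ← integral_const_mul, ← integral_const_mul, ← integral_add]
      · have hgi : IntegrableOn (fun x => -(g x * lapR (fun y => e k * θ (F y / e k) * p y) x)) D :=
          (Integrable.bdd_mul (c := M)
            (integrableOn_of_continuous hDb (lapR_continuous hζ)) hgm hgM).neg
        refine integral_mono_ae hgi ?_ ?_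
        · exact integrableOn_of_continuous hDb ((continuous_const.mul (hAc k).abs).add
            (continuous_const.mul (hRc k).abs))
        · filter_upwards [hgM] with x hx
          rw [lapR_cutoff hθ hb hθb hF hp (he k)]
          show -(g x * (A k x + R k x)) ≤ M * |A k x| + M * |R k x|
          have h2 : |g x * (A k x + R k x)| ≤ M * (|A k x| + |R k x|) := by
            rw [abs_mul]
            exact mul_le_mul hx (abs_add_le _ _) (abs_nonneg _) hM
          have := neg_abs_le (g x * (A k x + R k x))
          linarith
      · exact integrableOn_of_continuous hDb (continuous_const.mul (hAc k).abs)
      · exact integrableOn_of_continuous hDb (continuous_const.mul (hRc k).abs)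
    -- the singular part is controlled by integrating by parts
    have hA : ∀ᶠ k in atTop, ∫ x in D, |A k x| ≤
        (∫ x in D, |∑ i, pd i (Y i) x|) + 2 * δ * ∫ x in D, |lapR F x| := by
      have hsmall : ∀ᶠ k in atTop, e k < ε0 / 2 := hetend.eventually_lt_const (by positivity)
      filter_upwards [hsmall] with k hk
      let κ : Euc d → ℝ := fun x => 1 - b (F x / e k)
      have hbF : ContDiff ℝ 1 fun x => b (F x / e k) := hb.comp (hFr1.div_const _)
      have hκ : ContDiff ℝ 1 κ := contDiff_const.sub hbF
      have hκ0 : ∀ x ∈ frontier D, κ x = 0 := by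
        intro x hx
        simp only [κ]
        rw [hF0 x hx, zero_div, hb0, sub_self]
      have hpdκ : ∀ i x, pd i κ x = (e k)⁻¹ * (-deriv b (F x / e k)) * pd i F x := by
        intro i x
        have : pd i κ x = pd i (fun _ => (1 : ℝ)) x - pd i (fun y => b (F y / e k)) x :=
          pd_sub (differentiableAt_const _) (hbF.differentiable (by norm_num) x) i
        rw [this, pd_cutoff hb hFr1]
        simp [pd]
      have hle : ∫ x in D, |A k x| ≤ ∫ x in D, ∑ i, pd i κ x * W i x := by
        refine setIntegral_mono_on (integrableOn_of_continuous hDb (hAc k).abs)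
          (integrableOn_of_continuous hDb (continuous_finsetSum _ fun i _ =>
            (pd_continuous hκ i).mul (hW i).continuous)) hD.measurableSet ?_
        intro x hx
        have hb'x := hb' (F x / e k)
        have e1 : |A k x| = (e k)⁻¹ * (-deriv b (F x / e k)) * ((∑ i, pd i F x ^ 2) * p x) := by
          have : A k x ≤ 0 := by
            have h1 : 0 ≤ (∑ i, pd i F x ^ 2) * p x :=
              mul_nonneg (Finset.sum_nonneg fun i _ => sq_nonneg _) (hp0 x)
            exact mul_nonpos_of_nonpos_of_nonneg
              (mul_nonpos_of_nonneg_of_nonpos (inv_nonneg.2 (he k).le) hb'x) h1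
          rw [abs_of_nonpos this]
          simp only [A]; ring
        have e2 : ∑ i, pd i κ x * W i x =
            (e k)⁻¹ * (-deriv b (F x / e k)) * ∑ i, pd i F x * W i x := by
          rw [Finset.mul_sum]
          exact Finset.sum_congr rfl fun i _ => by rw [hpdκ]; ring
        rw [e1, e2]
        by_cases h2 : 2 ≤ F x / e k
        · rw [hb'2 _ h2]; simp
        · have h3 : F x < ε0 := by
            rw [not_le, div_lt_iff₀ (he k)] at h2
            linarith
          have h4 := hlay x hx h3
          refine mul_le_mul_of_nonneg_left (by simp only [q] at h4; linarith) ?_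
          exact mul_nonneg (inv_nonneg.2 (he k).le) (by linarith)
      refine hle.trans ?_
      have h7 : ∀ i, IntegrableOn (fun x => pd i κ x * W i x) D := fun i =>
        integrableOn_of_continuous hDb ((pd_continuous hκ i).mul (hW i).continuous)
      have h8 : ∀ i, IntegrableOn (fun x => κ x * pd i (W i) x) D := fun i =>
        integrableOn_of_continuous hDb (hκ.continuous.mul (pd_continuous (hW i) i))
      rw [integral_finsetSum _ fun i _ => h7 i]
      have h5 : ∀ i, ∫ x in D, pd i κ x * W i x = - ∫ x in D, κ x * pd i (W i) x :=
        fun i => ibp hD hDb hκ hκ0 (hW i) i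
      simp_rw [h5]
      rw [Finset.sum_neg_distrib, ← integral_finsetSum _ fun i _ => h8 i, ← integral_neg, ← integral_const_mul,
        ← integral_add]
      · refine setIntegral_mono_on ?_ ?_ hD.measurableSet ?_
        · exact (integrableOn_of_continuous hDb (continuous_finsetSum _ fun i _ =>
            hκ.continuous.mul (pd_continuous (hW i) i))).neg
        · exact integrableOn_of_continuous hDb (hdivc.abs.add
            (continuous_const.mul (lapR_continuous hF).abs))
        · intro x hx
          have e3 : ∑ i, κ x * pd i (W i) x = κ x * (∑ i, pd i (Y i) x + 2 * δ * lapR F x) := by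
            unfold lapR
            rw [Finset.mul_sum, ← Finset.sum_add_distrib, Finset.mul_sum]
            refine Finset.sum_congr rfl fun i _ => ?_
            have hd := (pd_contDiff_one hF i).differentiable (by norm_num) x
            have hd2 : DifferentiableAt ℝ (fun y => 2 * δ * pd i F y) x := hd.const_mul _
            have : pd i (W i) x = pd i (Y i) x + pd i (fun y => 2 * δ * pd i F y) x :=
              pd_add ((hY i).differentiable (by norm_num) x) hd2 i
            rw [this, pd_const_mul hd]
          rw [e3]
          have h6 : |κ x| ≤ 1 := by
            have := hbnn (F x / e k)
            have := hble (F x / e k)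
            rw [abs_le]; simp only [κ]; constructor <;> linarith
          refine (neg_le_abs _).trans ?_
          rw [abs_mul]
          refine (mul_le_of_le_one_left (abs_nonneg _) h6).trans ((abs_add_le _ _).trans ?_)
          rw [abs_mul (2 * δ), abs_of_pos (by positivity : 0 < 2 * δ)]
      · exact integrableOn_of_continuous hDb hdivc.abs
      · exact integrableOn_of_continuous hDb (continuous_const.mul (lapR_continuous hF).abs)
    have hlim : ∫ x in frontier D, m x * p x ∂σ ≤
        M * ((∫ x in D, |∑ i, pd i (Y i) x|) + 2 * δ * ∫ x in D, |lapR F x|) + M * 0 := by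
      refine ge_of_tendsto ((hR0.const_mul M).const_add _) ?_
      filter_upwards [hA] with k hk
      exact (hrep k).trans (add_le_add (mul_le_mul_of_nonneg_left hk hM) le_rfl)
    rw [mul_zero, add_zero] at hlim
    refine le_trans ?_ hlim
    refine integral_mono_ae (hmbdd P hP) (hmbdd p hp.continuous) ?_
    filter_upwards [hm0] with x hx
    exact mul_le_mul_of_nonneg_left (hp1 x).1.le hx
  have hlim : Tendsto (fun δ : ℝ => M * ((∫ x in D, |∑ i, pd i (Y i) x|)
      + 2 * δ * ∫ x in D, |lapR F x|)) (nhdsWithin 0 (Set.Ioi 0))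
      (nhds (M * ((∫ x in D, |∑ i, pd i (Y i) x|) + 2 * 0 * ∫ x in D, |lapR F x|))) := by
    have : Continuous fun δ : ℝ => M * ((∫ x in D, |∑ i, pd i (Y i) x|)
      + 2 * δ * ∫ x in D, |lapR F x|) := by fun_prop
    exact (this.tendsto 0).mono_left nhdsWithin_le_nhds
  have := ge_of_tendsto hlim (by filter_upwards [self_mem_nhdsWithin] with δ hδ using main δ hδ)
  simpa using this
end layer

/-! ### The Rellich vector field -/

section rellichField
variable {d : ℕ}

/-- The Rellich vector field `2 (∇F·∇u) ∇u - |∇u|² ∇F`. -/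
def rfield (F u : Euc d → ℝ) (i : Fin d) (x : Euc d) : ℝ :=
  2 * (∑ j, pd j F x * pd j u x) * pd i u x - (∑ j, pd j u x ^ 2) * pd i F x

lemma contDiff_gradProd {F u : Euc d → ℝ} (hF : ContDiff ℝ 2 F) (hu : ContDiff ℝ 2 u) :
    ContDiff ℝ 1 fun x => ∑ j, pd j F x * pd j u x :=
  ContDiff.sum fun j _ => (pd_contDiff_one hF j).mul (pd_contDiff_one hu j)

lemma contDiff_gradNorm {u : Euc d → ℝ} (hu : ContDiff ℝ 2 u) :
    ContDiff ℝ 1 fun x => ∑ j, pd j u x ^ 2 :=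
  ContDiff.sum fun j _ => (pd_contDiff_one hu j).pow 2

lemma rfield_contDiff {F u : Euc d → ℝ} (hF : ContDiff ℝ 2 F) (hu : ContDiff ℝ 2 u) (i : Fin d) :
    ContDiff ℝ 1 (rfield F u i) :=
  ((contDiff_const.mul (contDiff_gradProd hF hu)).mul (pd_contDiff_one hu i)).sub
    ((contDiff_gradNorm hu).mul (pd_contDiff_one hF i))

/-- On a boundary where `∇u = c ∇F`, the normal component of the Rellich field is `|∇F|² |∇u|²`. -/
lemma rfield_normal {F u : Euc d → ℝ} {x : Euc d} {c : ℝ} (h : fderiv ℝ u x = c • fderiv ℝ F x) :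
    ∑ i, pd i F x * rfield F u i x = (∑ i, pd i F x ^ 2) * ∑ i, pd i u x ^ 2 := by
  have h1 : ∀ i, pd i u x = c * pd i F x := by intro i; simp [pd, h]
  have e1 : ∑ j, pd j F x * pd j u x = c * ∑ j, pd j F x ^ 2 := by
    rw [Finset.mul_sum]; exact Finset.sum_congr rfl fun j _ => by rw [h1]; ring
  have e2 : ∑ j, pd j u x ^ 2 = c ^ 2 * ∑ j, pd j F x ^ 2 := by
    rw [Finset.mul_sum]; exact Finset.sum_congr rfl fun j _ => by rw [h1]; ring
  have e3 : ∑ i, pd i F x * rfield F u i x = c ^ 2 * (∑ j, pd j F x ^ 2) * ∑ i, pd i F x ^ 2 := by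
    rw [Finset.mul_sum (s := Finset.univ) (f := fun i => pd i F x ^ 2)]
    refine Finset.sum_congr rfl fun i _ => ?_
    unfold rfield
    rw [e1, e2, h1]; ring
  rw [e3, e2]; ring

/-- In the divergence of the Rellich field all second derivatives of `u` combine to `Δu`. -/
lemma div_rfield {F u : Euc d → ℝ} (hF : ContDiff ℝ 2 F) (hu : ContDiff ℝ 2 u) (x : Euc d) :
    ∑ i, pd i (rfield F u i) x = 2 * (∑ j, pd j F x * pd j u x) * lapR u x
      + 2 * (∑ i, ∑ j, pd i (pd j F) x * pd j u x * pd i u x) - (∑ j, pd j u x ^ 2) * lapR F x := by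
  have dF := fun j => (pd_contDiff_one hF j).differentiable (by norm_num) x
  have du := fun j => (pd_contDiff_one hu j).differentiable (by norm_num) x
  have dZ := (contDiff_gradProd hF hu).differentiable (by norm_num) x
  have dP := (contDiff_gradNorm hu).differentiable (by norm_num) x
  have eZ : ∀ i, pd i (fun x => ∑ j, pd j F x * pd j u x) x
      = ∑ j, (pd i (pd j F) x * pd j u x + pd j F x * pd i (pd j u) x) := by
    intro i
    rw [pd_sum fun j _ => (dF j).fun_mul (du j)]
    exact Finset.sum_congr rfl fun j _ => pd_mul (dF j) (du j) i
  have eP : ∀ i, pd i (fun x => ∑ j, pd j u x ^ 2) x = ∑ j, 2 * pd j u x * pd i (pd j u) x := by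
    intro i
    rw [pd_sum fun j _ => (du j).fun_pow 2]
    refine Finset.sum_congr rfl fun j _ => ?_
    have : (fun y => pd j u y ^ 2) = fun y => pd j u y * pd j u y := by ext y; ring
    rw [this, pd_mul (du j) (du j)]; ring
  have key : ∀ i, pd i (rfield F u i) x =
      2 * (∑ j, pd j F x * pd j u x) * pd i (pd i u) x
      + 2 * (∑ j, (pd i (pd j F) x * pd j u x + pd j F x * pd i (pd j u) x)) * pd i u x
      - (∑ j, 2 * pd j u x * pd i (pd j u) x) * pd i F x
      - (∑ j, pd j u x ^ 2) * pd i (pd i F) x := by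
    intro i
    have d2Z : DifferentiableAt ℝ (fun x => 2 * ∑ j, pd j F x * pd j u x) x := dZ.const_mul 2
    have d3 : DifferentiableAt ℝ (fun x => 2 * (∑ j, pd j F x * pd j u x) * pd i u x) x :=
      d2Z.mul (du i)
    have d4 : DifferentiableAt ℝ (fun x => (∑ j, pd j u x ^ 2) * pd i F x) x := dP.mul (dF i)
    have e : pd i (rfield F u i) x = pd i (fun x => 2 * (∑ j, pd j F x * pd j u x) * pd i u x) x
        - pd i (fun x => (∑ j, pd j u x ^ 2) * pd i F x) x := pd_sub d3 d4 i
    rw [e, pd_mul d2Z (du i), pd_const_mul dZ, pd_mul dP (dF i), eZ, eP]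
    ring
  simp_rw [key]
  have s1 : ∑ i, (∑ j, (pd i (pd j F) x * pd j u x + pd j F x * pd i (pd j u) x)) * pd i u x
      = (∑ i, ∑ j, pd i (pd j F) x * pd j u x * pd i u x)
        + ∑ i, ∑ j, pd j F x * pd i (pd j u) x * pd i u x := by
    rw [← Finset.sum_add_distrib]
    refine Finset.sum_congr rfl fun i _ => ?_
    rw [← Finset.sum_add_distrib, Finset.sum_mul]
    exact Finset.sum_congr rfl fun j _ => by ring
  have s2 : ∑ i, (∑ j, 2 * pd j u x * pd i (pd j u) x) * pd i F x
      = 2 * ∑ i, ∑ j, pd j F x * pd i (pd j u) x * pd i u x := by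
    rw [Finset.sum_comm, Finset.mul_sum]
    refine Finset.sum_congr rfl fun i _ => ?_
    rw [Finset.sum_mul, Finset.mul_sum]
    refine Finset.sum_congr rfl fun j _ => ?_
    rw [pd_comm hu i j]; ring
  unfold lapR
  rw [Finset.sum_sub_distrib, Finset.sum_sub_distrib, Finset.sum_add_distrib, s2,
    ← Finset.mul_sum, ← Finset.mul_sum]
  have s3 : ∑ i, 2 * (∑ j, (pd i (pd j F) x * pd j u x + pd j F x * pd i (pd j u) x)) * pd i u x
      = 2 * ∑ i, (∑ j, (pd i (pd j F) x * pd j u x + pd j F x * pd i (pd j u) x)) * pd i u x := by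
    rw [Finset.mul_sum]; exact Finset.sum_congr rfl fun i _ => by ring
  rw [s3, s1]
  ring

lemma abs_sum_mul_le (a b : Fin d → ℝ) {C : ℝ} (hC : 0 ≤ C) (ha : ∀ j, |a j| ≤ C) :
    |∑ j, a j * b j| ≤ C * d * √(∑ j, b j ^ 2) := by
  have hb : ∀ j, |b j| ≤ √(∑ j, b j ^ 2) := fun j =>
    Real.abs_le_sqrt (Finset.single_le_sum (f := fun j => b j ^ 2) (fun _ _ => sq_nonneg _)
      (Finset.mem_univ j))
  calc |∑ j, a j * b j| ≤ ∑ j, |a j * b j| := Finset.abs_sum_le_sum_abs _ _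
    _ ≤ ∑ _j : Fin d, C * √(∑ j, b j ^ 2) := by
        refine Finset.sum_le_sum fun j _ => ?_
        rw [abs_mul]
        exact mul_le_mul (ha j) (hb j) (abs_nonneg _) hC
    _ = _ := by simp; ring

/-- The divergence of the Rellich field contains no third derivative and no Hessian of `u` other than
`Δu`, so its `L¹` norm is of lower order than `‖Δu‖²`. -/
lemma div_rfield_bound {D : Set (Euc d)} (hD : IsOpen D) (hDb : Bornology.IsBounded D)
    {F : Euc d → ℝ} (hF : ContDiff ℝ 2 F) :
    ∃ K : ℝ, 0 ≤ K ∧ ∀ u : Euc d → ℝ, ContDiff ℝ 2 u →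
      ∫ x in D, |∑ i, pd i (rfield F u i) x| ≤
        K * (√(gradSq D u) * √(∫ x in D, lapR u x ^ 2) + gradSq D u) := by
  have h1 := fun j => exists_bound_of_continuous hDb (pd_continuous (hF.of_le (by norm_num)) j)
  have h2 := fun i j => exists_bound_of_continuous hDb (pd_pd_continuous hF i j)
  choose C1 hC1 hb1 using h1
  choose C2 hC2 hb2 using h2
  obtain ⟨C3, hC3, hb3⟩ := exists_bound_of_continuous hDb (lapR_continuous hF)
  let A := ∑ j, C1 j
  let B := ∑ i, ∑ j, C2 i j
  have hA : 0 ≤ A := Finset.sum_nonneg fun j _ => hC1 j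
  have hB : 0 ≤ B := Finset.sum_nonneg fun i _ => Finset.sum_nonneg fun j _ => hC2 i j
  refine ⟨2 * (A * d) + 2 * B + C3, by positivity, fun u hu => ?_⟩
  have hP : Continuous fun x => ∑ j, pd j u x ^ 2 := (contDiff_gradNorm hu).continuous
  have hsq : Continuous fun x => √(∑ j, pd j u x ^ 2) := Real.continuous_sqrt.comp hP
  have hlc := lapR_continuous hu
  have hPnn : ∀ x, 0 ≤ ∑ j, pd j u x ^ 2 := fun x => Finset.sum_nonneg fun _ _ => sq_nonneg _
  have hgrad : gradSq D u = ∫ x in D, ∑ j, pd j u x ^ 2 := by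
    unfold gradSq; simp
  have hpt : ∀ x ∈ D, |∑ i, pd i (rfield F u i) x| ≤
      2 * (A * d) * (|√(∑ j, pd j u x ^ 2)| * |lapR u x|)
        + (2 * B + C3) * ∑ j, pd j u x ^ 2 := by
    intro x hx
    have hxc := subset_closure hx
    rw [div_rfield hF hu]
    have t1 : |∑ j, pd j F x * pd j u x| ≤ A * d * √(∑ j, pd j u x ^ 2) :=
      abs_sum_mul_le _ _ hA fun j => (hb1 j x hxc).trans
        (Finset.single_le_sum (fun j _ => hC1 j) (Finset.mem_univ j))
    have hj : ∀ j, |pd j u x| ≤ √(∑ j, pd j u x ^ 2) := fun j =>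
      Real.abs_le_sqrt (Finset.single_le_sum (f := fun j => pd j u x ^ 2)
        (fun _ _ => sq_nonneg _) (Finset.mem_univ j))
    have t2 : |∑ i, ∑ j, pd i (pd j F) x * pd j u x * pd i u x| ≤ B * ∑ j, pd j u x ^ 2 := by
      simp only [B]
      rw [Finset.sum_mul]
      refine (Finset.abs_sum_le_sum_abs _ _).trans (Finset.sum_le_sum fun i _ => ?_)
      rw [Finset.sum_mul]
      refine (Finset.abs_sum_le_sum_abs _ _).trans (Finset.sum_le_sum fun j _ => ?_)
      rw [mul_assoc, abs_mul]
      refine mul_le_mul (hb2 i j x hxc) ?_ (abs_nonneg _) (hC2 i j)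
      rw [abs_mul]
      calc |pd j u x| * |pd i u x| ≤ √(∑ j, pd j u x ^ 2) * √(∑ j, pd j u x ^ 2) :=
            mul_le_mul (hj j) (hj i) (abs_nonneg _) (Real.sqrt_nonneg _)
        _ = _ := Real.mul_self_sqrt (hPnn x)
    have t3 : |(∑ j, pd j u x ^ 2) * lapR F x| ≤ C3 * ∑ j, pd j u x ^ 2 := by
      rw [abs_mul, abs_of_nonneg (hPnn x), mul_comm]
      exact mul_le_mul_of_nonneg_right (hb3 x hxc) (hPnn x)
    refine (abs_sub _ _).trans ((add_le_add (abs_add_le _ _) le_rfl).trans ?_)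
    rw [abs_mul (2 * _), abs_mul 2, abs_mul 2, abs_of_pos (two_pos : (0 : ℝ) < 2),
      abs_of_nonneg (Real.sqrt_nonneg _)]
    have t1' := mul_le_mul_of_nonneg_right t1 (abs_nonneg (lapR u x))
    linarith
  have hI1 : Continuous fun x => |√(∑ j, pd j u x ^ 2)| * |lapR u x| := hsq.abs.mul hlc.abs
  have hdivc : Continuous fun x => ∑ i, pd i (rfield F u i) x :=
    continuous_finsetSum _ fun i _ => pd_continuous (rfield_contDiff hF hu i) i
  have hI2 : IntegrableOn (fun x => 2 * (A * d) * (|√(∑ j, pd j u x ^ 2)| * |lapR u x|)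
      + (2 * B + C3) * ∑ j, pd j u x ^ 2) D :=
    integrableOn_of_continuous hDb ((continuous_const.mul hI1).add (continuous_const.mul hP))
  have hI3 : IntegrableOn (fun x => |∑ i, pd i (rfield F u i) x|) D :=
    integrableOn_of_continuous hDb hdivc.abs
  have hle := setIntegral_mono_on (μ := volume) hI3 hI2 hD.measurableSet hpt
  refine hle.trans ?_
  have hI4 : IntegrableOn (fun x => 2 * (A * d) * (|√(∑ j, pd j u x ^ 2)| * |lapR u x|)) D :=
    integrableOn_of_continuous hDb (continuous_const.mul hI1)
  have hI5 : IntegrableOn (fun x => (2 * B + C3) * ∑ j, pd j u x ^ 2) D :=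
    integrableOn_of_continuous hDb (continuous_const.mul hP)
  rw [integral_add hI4 hI5, integral_const_mul, integral_const_mul, ← hgrad]
  have hcs := cs_real hDb hsq hlc
  have e : ∫ x in D, √(∑ j, pd j u x ^ 2) ^ 2 = gradSq D u := by
    rw [hgrad]; congr 1; ext x; exact Real.sq_sqrt (hPnn x)
  rw [e] at hcs
  have hg := gradSq_nonneg D u
  have h5 : 0 ≤ √(gradSq D u) * √(∫ x in D, lapR u x ^ 2) := by positivity
  have hAd : 0 ≤ 2 * (A * d) := by positivity
  have h6 := mul_le_mul_of_nonneg_left hcs hAd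
  have h7 : 0 ≤ (2 * B + C3) * (√(gradSq D u) * √(∫ x in D, lapR u x ^ 2)) := by positivity
  have h8 : 0 ≤ 2 * (A * d) * gradSq D u := by positivity
  nlinarith
end rellichField

/-! ### The boundary form -/

section boundaryForm
variable {d : ℕ}

lemma sum_pd_sq_pos {F : Euc d → ℝ} {x : Euc d} (h : fderiv ℝ F x ≠ 0) :
    0 < ∑ i, pd i F x ^ 2 := by
  refine lt_of_le_of_ne (Finset.sum_nonneg fun _ _ => sq_nonneg _) fun h0 => h ?_
  have h1 := (Finset.sum_eq_zero_iff_of_nonneg (fun i _ => sq_nonneg (pd i F x))).1 h0.symm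
  have h2 : ∀ i, fderiv ℝ F x (ee i) = 0 := fun i => by
    have := h1 i (Finset.mem_univ i)
    exact pow_eq_zero_iff (two_ne_zero) |>.1 this
  apply ContinuousLinearMap.coe_injective
  refine (EuclideanSpace.basisFun (Fin d) ℝ).toBasis.ext fun i => ?_
  simpa [ee] using h2 i

/-- The coefficient `(∇F·∇f)/|∇F|²` of `df` along `dF`; on `∂D` it is the quotient of the normal
derivatives of `f` and `F` when `f` vanishes on `∂D`. -/
def nc (F : Euc d → ℝ) (f : Euc d → ℂ) (x : Euc d) : ℂ :=
  (∑ i, ((pd i F x : ℝ) : ℂ) * pd i f x) / ((∑ i, pd i F x ^ 2 : ℝ) : ℂ)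

/-- The boundary form of weight `m`, written through the coefficients `nc`. -/
def bd (μ : Measure (Euc d)) (m F : Euc d → ℝ) (f φ : Euc d → ℂ) : ℂ :=
  ∫ x, ((m x : ℝ) : ℂ) * nc F f x * (starRingEnd ℂ) (nc F φ x) ∂μ

lemma nc_of_pd {F : Euc d → ℝ} {f : Euc d → ℂ} {x : Euc d} {c : ℂ}
    (h : ∀ i, pd i f x = c * ((pd i F x : ℝ) : ℂ)) (h0 : 0 < ∑ i, pd i F x ^ 2) :
    nc F f x = c := by
  unfold nc
  have e : ∑ i, ((pd i F x : ℝ) : ℂ) * pd i f x = c * ((∑ i, pd i F x ^ 2 : ℝ) : ℂ) := by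
    push_cast
    rw [Finset.mul_sum]
    exact Finset.sum_congr rfl fun i _ => by rw [h]; ring
  rw [e]
  have : ((∑ i, pd i F x ^ 2 : ℝ) : ℂ) ≠ 0 := by exact_mod_cast h0.ne'
  field_simp

lemma fderiv_re_apply {u : Euc d → ℂ} {x : Euc d} (hu : DifferentiableAt ℝ u x) (v : Euc d) :
    fderiv ℝ (fun y => (u y).re) x v = (fderiv ℝ u x v).re := by
  have := ((Complex.reCLM.hasFDerivAt (x := u x)).comp x hu.hasFDerivAt).fderiv
  have h2 : fderiv ℝ (fun y => (u y).re) x = Complex.reCLM.comp (fderiv ℝ u x) := this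
  rw [h2]; rfl

lemma fderiv_im_apply {u : Euc d → ℂ} {x : Euc d} (hu : DifferentiableAt ℝ u x) (v : Euc d) :
    fderiv ℝ (fun y => (u y).im) x v = (fderiv ℝ u x v).im := by
  have := ((Complex.imCLM.hasFDerivAt (x := u x)).comp x hu.hasFDerivAt).fderiv
  have h2 : fderiv ℝ (fun y => (u y).im) x = Complex.imCLM.comp (fderiv ℝ u x) := this
  rw [h2]; rfl

lemma fderiv_ofReal_apply {u : Euc d → ℝ} {x : Euc d} (hu : DifferentiableAt ℝ u x) (v : Euc d) :
    fderiv ℝ (fun y => ((u y : ℝ) : ℂ)) x v = ((fderiv ℝ u x v : ℝ) : ℂ) := by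
  have := ((Complex.ofRealCLM.hasFDerivAt (x := u x)).comp x hu.hasFDerivAt).fderiv
  have h2 : fderiv ℝ (fun y => ((u y : ℝ) : ℂ)) x = Complex.ofRealCLM.comp (fderiv ℝ u x) := this
  rw [h2]; rfl

/-- The differential of `f ∈ X(D)` is `nc F f • dF` on the boundary. -/
lemma fderiv_eq_nc {D : Set (Euc d)} (hD : IsOpen D) (hC2 : BoundaryC2 D) {F : Euc d → ℝ}
    (hF : ContDiff ℝ 2 F) (hF0 : ∀ x ∈ frontier D, F x = 0)
    (hF1 : ∀ x ∈ frontier D, fderiv ℝ F x ≠ 0) {f : Euc d → ℂ} (hf : MemX D f) {x : Euc d}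
    (hx : x ∈ frontier D) (v : Euc d) :
    fderiv ℝ f x v = nc F f x * ((fderiv ℝ F x v : ℝ) : ℂ) := by
  have hfd := hf.1.differentiable (by norm_num) x
  obtain ⟨a, ha⟩ := lagrange hD hC2 hF hF0 hF1 (f := fun y => (f y).re)
    ((re_contDiff hf.1).of_le (by norm_num)) (fun y hy => by simp [hf.2 y hy]) hx
  obtain ⟨b, hb⟩ := lagrange hD hC2 hF hF0 hF1 (f := fun y => (f y).im)
    ((im_contDiff hf.1).of_le (by norm_num)) (fun y hy => by simp [hf.2 y hy]) hx
  have key : ∀ v, fderiv ℝ f x v = (⟨a, b⟩ : ℂ) * ((fderiv ℝ F x v : ℝ) : ℂ) := by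
    intro v
    have h1 := fderiv_re_apply hfd v
    have h2 := fderiv_im_apply hfd v
    rw [ha] at h1; rw [hb] at h2
    apply Complex.ext
    · simp [← h1]
    · simp [← h2]
  have hc : nc F f x = ⟨a, b⟩ := nc_of_pd (fun i => key (ee i)) (sum_pd_sq_pos (hF1 x hx))
  rw [key v, hc]

lemma nc_add_smul {F : Euc d → ℝ} {f g : Euc d → ℂ} (hf : ContDiff ℝ 2 f) (hg : ContDiff ℝ 2 g)
    (t : ℂ) (x : Euc d) : nc F (fun y => f y + t * g y) x = nc F f x + t * nc F g x := by
  have h1 := hf.differentiable (by norm_num) x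
  have h2 := hg.differentiable (by norm_num) x
  have h3 : DifferentiableAt ℝ (fun y => t * g y) x := h2.const_mul t
  unfold nc
  have e : ∀ i, pd i (fun y => f y + t * g y) x = pd i f x + t * pd i g x := fun i => by
    rw [pd_add h1 h3, pd_const_mul h2]
  simp_rw [e]
  rw [← mul_div_assoc, ← add_div]
  congr 1
  rw [Finset.mul_sum, ← Finset.sum_add_distrib]
  exact Finset.sum_congr rfl fun i _ => by ring

lemma nc_measurable {F : Euc d → ℝ} (hF : ContDiff ℝ 2 F) {f : Euc d → ℂ} (hf : ContDiff ℝ 2 f) :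
    Measurable (nc F f) := by
  have h1 := fun i => pd_continuous (hF.of_le (by norm_num) : ContDiff ℝ 1 F) i
  have h2 := fun i => pd_continuous (hf.of_le (by norm_num) : ContDiff ℝ 1 f) i
  have h3 : Continuous fun x => ∑ i, ((pd i F x : ℝ) : ℂ) * pd i f x :=
    continuous_finsetSum _ fun i _ => (Complex.continuous_ofReal.comp (h1 i)).mul (h2 i)
  have h4 : Continuous fun x => ((∑ i, pd i F x ^ 2 : ℝ) : ℂ) :=
    Complex.continuous_ofReal.comp (continuous_finsetSum _ fun i _ => (h1 i).pow 2)
  exact h3.measurable.div h4.measurable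

lemma nc_bounded {D : Set (Euc d)} (hDb : Bornology.IsBounded D) {F : Euc d → ℝ}
    (hF : ContDiff ℝ 2 F) (hF1 : ∀ x ∈ frontier D, fderiv ℝ F x ≠ 0) {f : Euc d → ℂ}
    (hf : ContDiff ℝ 2 f) : ∃ R : ℝ, 0 ≤ R ∧ ∀ x ∈ frontier D, ‖nc F f x‖ ≤ R := by
  have hcomp : IsCompact (frontier D) :=
    hDb.isCompact_closure.of_isClosed_subset isClosed_frontier frontier_subset_closure
  have h1 := fun i => pd_continuous (hF.of_le (by norm_num) : ContDiff ℝ 1 F) i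
  have h2 := fun i => pd_continuous (hf.of_le (by norm_num) : ContDiff ℝ 1 f) i
  have h3 : Continuous fun x => ∑ i, ((pd i F x : ℝ) : ℂ) * pd i f x :=
    continuous_finsetSum _ fun i _ => (Complex.continuous_ofReal.comp (h1 i)).mul (h2 i)
  have h4 : Continuous fun x => ((∑ i, pd i F x ^ 2 : ℝ) : ℂ) :=
    Complex.continuous_ofReal.comp (continuous_finsetSum _ fun i _ => (h1 i).pow 2)
  have h5 : ContinuousOn (nc F f) (frontier D) := h3.continuousOn.div h4.continuousOn
    fun x hx => by exact_mod_cast (sum_pd_sq_pos (hF1 x hx)).ne'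
  obtain ⟨C, hC⟩ := hcomp.exists_bound_of_continuousOn h5
  exact ⟨max C 0, le_max_right _ _, fun x hx => (hC x hx).trans (le_max_left _ _)⟩

lemma bd_hermitian {μ : Measure (Euc d)} {m F : Euc d → ℝ} (f φ : Euc d → ℂ) :
    (starRingEnd ℂ) (bd μ m F f φ) = bd μ m F φ f := by
  unfold bd
  rw [← integral_conj]
  congr 1; ext x
  simp only [map_mul, Complex.conj_ofReal, Complex.conj_conj]
  ring

lemma memX_add_smul {D : Set (Euc d)} {f g : Euc d → ℂ} (hf : MemX D f) (hg : MemX D g) (t : ℂ) :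
    MemX D fun y => f y + t * g y :=
  ⟨hf.1.add (contDiff_const.mul hg.1), fun x hx => by simp [hf.2 x hx, hg.2 x hx]⟩

/-- A weight that is not integrable stays so after multiplication by a function of modulus
at least one, so the corresponding integral has the value zero. -/
lemma integral_eq_zero_of_not_integrable {μ : Measure (Euc d)} {m : Euc d → ℝ}
    (hm : ¬ Integrable m μ) {q : Euc d → ℂ} (hq : Measurable q) (hq1 : ∀ᵐ x ∂μ, 1 ≤ ‖q x‖) :
    ∫ x, ((m x : ℝ) : ℂ) * q x ∂μ = 0 := by
  refine integral_undef fun hi => hm ?_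
  have h1 : Integrable (fun x => (q x)⁻¹ * (((m x : ℝ) : ℂ) * q x)) μ := by
    refine hi.bdd_mul (c := 1) hq.inv.aestronglyMeasurable ?_
    filter_upwards [hq1] with x hx
    rw [norm_inv]
    exact inv_le_one_of_one_le₀ hx
  have h2 : Integrable (fun x => ((m x : ℝ) : ℂ)) μ := by
    refine h1.congr ?_
    filter_upwards [hq1] with x hx
    have : q x ≠ 0 := fun h => by rw [h, norm_zero] at hx; linarith
    field_simp
  exact h2.re

/-- If the weight is not integrable, a boundary form that is conjugate linear in its second
argument vanishes: the integrand is bounded below by `|m|` after adding multiples of `F` to both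
arguments, so that the integral takes the conventional value `0`. -/
lemma bd_eq_zero {D : Set (Euc d)} (hDb : Bornology.IsBounded D) {F : Euc d → ℝ}
    (hF : ContDiff ℝ 2 F) (hF0 : ∀ x ∈ frontier D, F x = 0)
    (hF1 : ∀ x ∈ frontier D, fderiv ℝ F x ≠ 0) {σ : Measure (Euc d)} {m : Euc d → ℝ}
    (hm : ¬ IntegrableOn m (frontier D) σ)
    (hlin : ∀ f φ ψ, MemX D f → MemX D φ → MemX D ψ → ∀ t : ℝ,
      bd (σ.restrict (frontier D)) m F f (fun y => φ y + (t : ℂ) * ψ y)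
        = bd (σ.restrict (frontier D)) m F f φ + t * bd (σ.restrict (frontier D)) m F f ψ)
    {f w : Euc d → ℂ} (hf : MemX D f) (hw : MemX D w) :
    bd (σ.restrict (frontier D)) m F f w = 0 := by
  set B := bd (σ.restrict (frontier D)) m F with hB
  set G : Euc d → ℂ := fun y => ((F y : ℝ) : ℂ) with hG
  have hGX : MemX D G := ⟨ofReal_contDiff hF, fun x hx => by simp [hG, hF0 x hx]⟩
  have hGc : ∀ x ∈ frontier D, nc F G x = 1 := fun x hx =>
    nc_of_pd (fun i => by rw [one_mul]; exact pd_ofReal (hF.differentiable (by norm_num) x) i)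
      (sum_pd_sq_pos (hF1 x hx))
  have hzero : ∀ u v, MemX D u → MemX D v →
      (∀ x ∈ frontier D, 1 ≤ ‖nc F u x * (starRingEnd ℂ) (nc F v x)‖) → B u v = 0 := by
    intro u v hu hv h
    rw [hB]; unfold bd
    simp_rw [mul_assoc]
    refine integral_eq_zero_of_not_integrable hm ((nc_measurable hF hu.1).mul
      (Complex.continuous_conj.measurable.comp (nc_measurable hF hv.1))) ?_
    exact (ae_restrict_iff' isClosed_frontier.measurableSet).2 (ae_of_all _ h)
  have hlow : ∀ u, MemX D u → ∃ R : ℝ, ∀ t : ℝ, R ≤ t → ∀ x ∈ frontier D,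
      1 ≤ ‖nc F (fun y => u y + (t : ℂ) * G y) x‖ := by
    intro u hu
    obtain ⟨R, hR, h⟩ := nc_bounded hDb hF hF1 hu.1
    refine ⟨R + 1, fun t ht x hx => ?_⟩
    rw [nc_add_smul hu.1 hGX.1, hGc x hx, mul_one]
    have h1 := norm_sub_norm_le (t : ℂ) (-(nc F u x))
    rw [sub_neg_eq_add, norm_neg, add_comm (t : ℂ), Complex.norm_real, Real.norm_eq_abs] at h1
    have h2 := h x hx
    have h3 := le_abs_self t
    linarith
  -- `t ↦ B(G, u + t G)` is affine and vanishes for large `t`, so both coefficients are zero.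
  have hGu : ∀ u, MemX D u → B G u = 0 := by
    intro u hu
    obtain ⟨R, h⟩ := hlow u hu
    have hz : ∀ t : ℝ, R ≤ t → B G u + t * B G G = 0 := fun t ht => by
      rw [← hlin G u G hGX hu hGX t]
      refine hzero _ _ hGX (memX_add_smul hu hGX t) fun x hx => ?_
      rw [hGc x hx, one_mul, RCLike.norm_conj]
      exact h t ht x hx
    have e1 := hz R le_rfl
    have e2 := hz (R + 1) (by linarith)
    push_cast at e2
    linear_combination (R + 1 : ℂ) * e1 - (R : ℂ) * e2
  have huG : ∀ u, MemX D u → B u G = 0 := fun u hu => by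
    rw [hB, ← bd_hermitian, ← hB, hGu u hu, map_zero]
  -- `B(f + t G, w + t G) = 0` for large `t`, and all terms but `B(f, w)` involve `G`.
  obtain ⟨R1, h1⟩ := hlow f hf
  obtain ⟨R2, h2⟩ := hlow w hw
  set t := max R1 R2
  have hfX := memX_add_smul hf hGX (t : ℂ)
  have e1 := hzero _ _ hfX (memX_add_smul hw hGX (t : ℂ)) fun x hx => by
    rw [norm_mul, RCLike.norm_conj]
    exact one_le_mul_of_one_le_of_one_le (h1 t (le_max_left _ _) x hx)
      (h2 t (le_max_right _ _) x hx)
  rw [hlin _ w G hfX hw hGX t, huG _ hfX, mul_zero, add_zero, hB, ← bd_hermitian, ← hB,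
    hlin w f G hw hf hGX t, huG w hw, mul_zero, add_zero, hB, bd_hermitian] at e1
  exact e1
end boundaryForm

section boundaryEstimate
variable {d : ℕ}

lemma gradSq_re_le {D : Set (Euc d)} (hDb : Bornology.IsBounded D) {f : Euc d → ℂ}
    (hf : ContDiff ℝ 2 f) : gradSq D (fun y => (f y).re) ≤ gradSq D f := by
  have h1 := fun i => pd_continuous (hf.of_le (by norm_num) : ContDiff ℝ 1 f) i
  have h2 := fun i => pd_continuous ((re_contDiff hf).of_le (by norm_num) :
    ContDiff ℝ 1 fun y => (f y).re) i
  refine integral_mono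
    (integrableOn_of_continuous hDb (continuous_finsetSum _ fun i _ => (h2 i).norm.pow 2))
    (integrableOn_of_continuous hDb (continuous_finsetSum _ fun i _ => (h1 i).norm.pow 2))
    fun x => Finset.sum_le_sum fun i _ => ?_
  rw [pd_re (hf.differentiable (by norm_num) x)]
  exact pow_le_pow_left₀ (norm_nonneg _) (by simpa using Complex.abs_re_le_norm _) 2

lemma gradSq_im_le {D : Set (Euc d)} (hDb : Bornology.IsBounded D) {f : Euc d → ℂ}
    (hf : ContDiff ℝ 2 f) : gradSq D (fun y => (f y).im) ≤ gradSq D f := by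
  have h1 := fun i => pd_continuous (hf.of_le (by norm_num) : ContDiff ℝ 1 f) i
  have h2 := fun i => pd_continuous ((im_contDiff hf).of_le (by norm_num) :
    ContDiff ℝ 1 fun y => (f y).im) i
  refine integral_mono
    (integrableOn_of_continuous hDb (continuous_finsetSum _ fun i _ => (h2 i).norm.pow 2))
    (integrableOn_of_continuous hDb (continuous_finsetSum _ fun i _ => (h1 i).norm.pow 2))
    fun x => Finset.sum_le_sum fun i _ => ?_
  rw [pd_im (hf.differentiable (by norm_num) x)]
  exact pow_le_pow_left₀ (norm_nonneg _) (by simpa using Complex.abs_im_le_norm _) 2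

lemma lapR_re {f : Euc d → ℂ} (hf : ContDiff ℝ 2 f) (x : Euc d) :
    lapR (fun y => (f y).re) x = (lap f x).re := by
  rw [lap_eq hf, Complex.re_sum]
  refine Finset.sum_congr rfl fun i _ => ?_
  have : pd i (fun y => (f y).re) = fun y => (pd i f y).re :=
    funext fun y => pd_re (hf.differentiable (by norm_num) y) i
  rw [this, pd_re ((pd_contDiff_one hf i).differentiable (by norm_num) x)]

lemma lapR_im {f : Euc d → ℂ} (hf : ContDiff ℝ 2 f) (x : Euc d) :
    lapR (fun y => (f y).im) x = (lap f x).im := by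
  rw [lap_eq hf, Complex.im_sum]
  refine Finset.sum_congr rfl fun i _ => ?_
  have : pd i (fun y => (f y).im) = fun y => (pd i f y).im :=
    funext fun y => pd_im (hf.differentiable (by norm_num) y) i
  rw [this, pd_im ((pd_contDiff_one hf i).differentiable (by norm_num) x)]

lemma lapR_re_sq_le {D : Set (Euc d)} (hDb : Bornology.IsBounded D) {f : Euc d → ℂ}
    (hf : ContDiff ℝ 2 f) : ∫ x in D, lapR (fun y => (f y).re) x ^ 2 ≤ XnormSq D f := by
  refine integral_mono
    (integrableOn_of_continuous hDb ((lapR_continuous (re_contDiff hf)).pow 2))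
    (integrableOn_of_continuous hDb ((lap_continuous hf).norm.pow 2)) fun x => ?_
  simp only
  rw [lapR_re hf, ← sq_abs]
  exact pow_le_pow_left₀ (abs_nonneg _) (Complex.abs_re_le_norm _) 2

lemma lapR_im_sq_le {D : Set (Euc d)} (hDb : Bornology.IsBounded D) {f : Euc d → ℂ}
    (hf : ContDiff ℝ 2 f) : ∫ x in D, lapR (fun y => (f y).im) x ^ 2 ≤ XnormSq D f := by
  refine integral_mono
    (integrableOn_of_continuous hDb ((lapR_continuous (im_contDiff hf)).pow 2))
    (integrableOn_of_continuous hDb ((lap_continuous hf).norm.pow 2)) fun x => ?_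
  simp only
  rw [lapR_im hf, ← sq_abs]
  exact pow_le_pow_left₀ (abs_nonneg _) (Complex.abs_im_le_norm _) 2

lemma integrable_mul_of_continuous {D : Set (Euc d)} (hDb : Bornology.IsBounded D)
    {σ : Measure (Euc d)} {m P : Euc d → ℝ} (hm : IntegrableOn m (frontier D) σ)
    (hP : Continuous P) : IntegrableOn (fun x => m x * P x) (frontier D) σ := by
  obtain ⟨C, -, hC⟩ := exists_bound_of_continuous hDb hP
  refine Integrable.mul_bdd (c := C) hm hP.aestronglyMeasurable ?_
  exact (ae_restrict_iff' isClosed_frontier.measurableSet).2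
    (ae_of_all _ fun x hx => hC x (frontier_subset_closure hx))

/-- The weighted boundary integral of `|∇f|²` is controlled by the interior quantities
`‖∇f‖ ‖Δf‖ + ‖∇f‖²` as soon as the weight, tested against the defining function `F`, is
represented in the interior by a bounded function `h`. -/
lemma weighted_trace {D : Set (Euc d)} (hD : IsOpen D) (hDb : Bornology.IsBounded D)
    (hC2 : BoundaryC2 D) {F : Euc d → ℝ} (hF : ContDiff ℝ 2 F) (hFpos : ∀ x ∈ D, 0 < F x)
    (hF0 : ∀ x ∈ frontier D, F x = 0) (hF1 : ∀ x ∈ frontier D, fderiv ℝ F x ≠ 0)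
    {σ : Measure (Euc d)} {m : Euc d → ℝ} (hm : IntegrableOn m (frontier D) σ)
    (hm0 : ∀ᵐ x ∂σ.restrict (frontier D), 0 ≤ m x) {h : Euc d → ℂ} {M : ℝ} (hM : 0 ≤ M)
    (hhm : AEStronglyMeasurable h (volume.restrict D))
    (hhM : ∀ᵐ x ∂(volume : Measure (Euc d)).restrict D, ‖h x‖ ≤ M)
    (hform : ∀ φ, MemX D φ → bd (σ.restrict (frontier D)) m F (fun y => ((F y : ℝ) : ℂ)) φ
      = - ∫ x in D, h x * (starRingEnd ℂ) (lap φ x)) :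
    ∃ K : ℝ, 0 ≤ K ∧ ∀ f, MemX D f → ∫ x in frontier D, m x * ∑ i, ‖pd i f x‖ ^ 2 ∂σ ≤
      K * (√(gradSq D f) * √(XnormSq D f) + gradSq D f) := by
  obtain ⟨K, hK, hdiv⟩ := div_rfield_bound hD hDb hF
  have hpos := fun x hx => sum_pd_sq_pos (hF1 x hx)
  have hΛ : ∀ ζ p : Euc d → ℝ, ContDiff ℝ 2 ζ → ContDiff ℝ 2 p → (∀ x ∈ frontier D, ζ x = 0) →
      (∀ x ∈ frontier D, fderiv ℝ ζ x = p x • fderiv ℝ F x) →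
      ∫ x in frontier D, m x * p x ∂σ = - ∫ x in D, (h x).re * lapR ζ x := by
    intro ζ p hζ hp hζ0 hζp
    have h1 := hform (fun y => ((ζ y : ℝ) : ℂ))
      ⟨ofReal_contDiff hζ, fun x hx => by simp [hζ0 x hx]⟩
    have e1 : bd (σ.restrict (frontier D)) m F (fun y => ((F y : ℝ) : ℂ))
        (fun y => ((ζ y : ℝ) : ℂ)) = ((∫ x in frontier D, m x * p x ∂σ : ℝ) : ℂ) := by
      unfold bd
      rw [← integral_complex_ofReal]
      refine setIntegral_congr_fun isClosed_frontier.measurableSet fun x hx => ?_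
      have c1 : nc F (fun y => ((F y : ℝ) : ℂ)) x = 1 :=
        nc_of_pd (fun i => by rw [one_mul]; exact pd_ofReal (hF.differentiable (by norm_num) x) i)
          (hpos x hx)
      have c2 : nc F (fun y => ((ζ y : ℝ) : ℂ)) x = ((p x : ℝ) : ℂ) := by
        refine nc_of_pd (fun i => ?_) (hpos x hx)
        rw [pd_ofReal (hζ.differentiable (by norm_num) x) i]
        unfold pd
        rw [hζp x hx]; simp
      rw [c1, c2, Complex.conj_ofReal]; push_cast; ring
    have hi : Integrable (fun x => h x * ((lapR ζ x : ℝ) : ℂ)) (volume.restrict D) := by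
      have : IntegrableOn (fun x => ((lapR ζ x : ℝ) : ℂ)) D :=
        integrableOn_of_continuous hDb (Complex.continuous_ofReal.comp (lapR_continuous hζ))
      exact this.bdd_mul hhm hhM
    have e2 : ∫ x in D, h x * (starRingEnd ℂ) (lap (fun y => ((ζ y : ℝ) : ℂ)) x)
        = ∫ x in D, h x * ((lapR ζ x : ℝ) : ℂ) := by
      congr 1; ext x
      rw [conj_lap_ofReal hζ, lap_ofReal hζ]; rfl
    rw [e1, e2] at h1
    have h2 := congrArg Complex.re h1
    rw [Complex.ofReal_re, Complex.neg_re] at h2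
    rw [h2]
    congr 1
    have h3 := Complex.reCLM.integral_comp_comm hi
    simp only [Complex.reCLM_apply] at h3
    rw [← h3]
    congr 1; ext x
    simp
  have hreal : ∀ u : Euc d → ℝ, ContDiff ℝ 2 u → (∀ x ∈ frontier D, u x = 0) →
      ∫ x in frontier D, m x * ∑ i, pd i u x ^ 2 ∂σ ≤
        M * (K * (√(gradSq D u) * √(∫ x in D, lapR u x ^ 2) + gradSq D u)) := by
    intro u hu hu0
    refine (layer_bound hD hDb hF hFpos hF0 hpos hm hm0 hM
      (Complex.continuous_re.comp_aestronglyMeasurable hhm) ?_ hΛ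
      (contDiff_gradNorm hu).continuous (fun x => Finset.sum_nonneg fun _ _ => sq_nonneg _)
      (rfield_contDiff hF hu) fun x hx => ?_).trans (mul_le_mul_of_nonneg_left (hdiv u hu) hM)
    · filter_upwards [hhM] with x hx
      exact (Complex.abs_re_le_norm _).trans hx
    · obtain ⟨c, hc⟩ := lagrange hD hC2 hF hF0 hF1 (hu.of_le (by norm_num)) hu0 hx
      exact rfield_normal hc
  refine ⟨2 * (M * K), by positivity, fun f hf => ?_⟩
  have hr := hreal (fun y => (f y).re) (re_contDiff hf.1) fun x hx => by simp [hf.2 x hx]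
  have hi := hreal (fun y => (f y).im) (im_contDiff hf.1) fun x hx => by simp [hf.2 x hx]
  have hsum : ∀ x, m x * ∑ i, ‖pd i f x‖ ^ 2 = m x * ∑ i, pd i (fun y => (f y).re) x ^ 2
      + m x * ∑ i, pd i (fun y => (f y).im) x ^ 2 := by
    intro x
    rw [← mul_add, ← Finset.sum_add_distrib]
    congr 1
    refine Finset.sum_congr rfl fun i _ => ?_
    have hfd := hf.1.differentiable (by norm_num) x
    rw [pd_re hfd, pd_im hfd, Complex.sq_norm, Complex.normSq_apply]; ring
  simp_rw [hsum]
  rw [integral_add (integrable_mul_of_continuous hDb hm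
      (contDiff_gradNorm (re_contDiff hf.1)).continuous)
    (integrable_mul_of_continuous hDb hm (contDiff_gradNorm (im_contDiff hf.1)).continuous)]
  have mono : ∀ a b : ℝ, 0 ≤ a → a ≤ gradSq D f → b ≤ XnormSq D f →
      M * (K * (√a * √b + a)) ≤
        M * (K * (√(gradSq D f) * √(XnormSq D f) + gradSq D f)) := by
    intro a b _ ha hb
    gcongr
  have m1 := mono _ _ (gradSq_nonneg _ _) (gradSq_re_le hDb hf.1) (lapR_re_sq_le hDb hf.1)
  have m2 := mono _ _ (gradSq_nonneg _ _) (gradSq_im_le hDb hf.1) (lapR_im_sq_le hDb hf.1)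
  linarith
end boundaryEstimate

section boundaryControl
variable {d : ℕ}

/-- On the compact boundary `|∇F|` is bounded away from zero. -/
lemma nc_sq_le {D : Set (Euc d)} (hD : IsOpen D) (hDb : Bornology.IsBounded D)
    (hC2 : BoundaryC2 D) {F : Euc d → ℝ} (hF : ContDiff ℝ 2 F)
    (hF0 : ∀ x ∈ frontier D, F x = 0) (hF1 : ∀ x ∈ frontier D, fderiv ℝ F x ≠ 0) :
    ∃ C : ℝ, 0 ≤ C ∧ ∀ f, MemX D f → ∀ x ∈ frontier D,
      ‖nc F f x‖ ^ 2 ≤ C * ∑ i, ‖pd i f x‖ ^ 2 := by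
  have hcomp : IsCompact (frontier D) :=
    hDb.isCompact_closure.of_isClosed_subset isClosed_frontier frontier_subset_closure
  have h1 := fun i => pd_continuous (hF.of_le (by norm_num) : ContDiff ℝ 1 F) i
  have h4 : Continuous fun x => ∑ i, pd i F x ^ 2 := continuous_finsetSum _ fun i _ => (h1 i).pow 2
  have hpos := fun x hx => sum_pd_sq_pos (hF1 x hx)
  have h5 : ContinuousOn (fun x => (∑ i, pd i F x ^ 2)⁻¹) (frontier D) :=
    h4.continuousOn.inv₀ fun x hx => (hpos x hx).ne'
  obtain ⟨C, hC⟩ := hcomp.exists_bound_of_continuousOn h5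
  refine ⟨max C 0, le_max_right _ _, fun f hf x hx => ?_⟩
  have hp := hpos x hx
  have e : ∑ i, ‖pd i f x‖ ^ 2 = ‖nc F f x‖ ^ 2 * ∑ i, pd i F x ^ 2 := by
    rw [Finset.mul_sum]
    refine Finset.sum_congr rfl fun i _ => ?_
    have : pd i f x = nc F f x * ((pd i F x : ℝ) : ℂ) :=
      fderiv_eq_nc hD hC2 hF hF0 hF1 hf hx (ee i)
    rw [this, norm_mul, mul_pow, Complex.norm_real, Real.norm_eq_abs, sq_abs]
  have h6 : (∑ i, pd i F x ^ 2)⁻¹ ≤ max C 0 :=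
    (le_abs_self _).trans ((hC x hx).trans (le_max_left _ _))
  calc ‖nc F f x‖ ^ 2 = (∑ i, pd i F x ^ 2)⁻¹ * ∑ i, ‖pd i f x‖ ^ 2 := by
        rw [e]; field_simp
    _ ≤ _ := mul_le_mul_of_nonneg_right h6 (Finset.sum_nonneg fun _ _ => sq_nonneg _)

/-- Weighted Young inequality for the boundary form. -/
lemma bd_young {D : Set (Euc d)} (hD : IsOpen D) (hDb : Bornology.IsBounded D)
    (hC2 : BoundaryC2 D) {F : Euc d → ℝ} (hF : ContDiff ℝ 2 F)
    (hF0 : ∀ x ∈ frontier D, F x = 0) (hF1 : ∀ x ∈ frontier D, fderiv ℝ F x ≠ 0)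
    {σ : Measure (Euc d)} {m : Euc d → ℝ} (hm : IntegrableOn m (frontier D) σ)
    (hm0 : ∀ᵐ x ∂σ.restrict (frontier D), 0 ≤ m x) :
    ∃ C : ℝ, 0 ≤ C ∧ ∀ f w, MemX D f → MemX D w → ∀ t : ℝ, 0 < t →
      ‖bd (σ.restrict (frontier D)) m F f w‖ ≤
        C * (t * (∫ x in frontier D, m x * ∑ i, ‖pd i f x‖ ^ 2 ∂σ)
          + t⁻¹ * ∫ x in frontier D, m x * ∑ i, ‖pd i w x‖ ^ 2 ∂σ) := by
  obtain ⟨C, hC, hCb⟩ := nc_sq_le hD hDb hC2 hF hF0 hF1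
  refine ⟨C, hC, fun f w hf hw t ht => ?_⟩
  have hG : ∀ u, MemX D u → Continuous fun x => ∑ i, ‖pd i u x‖ ^ 2 := fun u hu =>
    continuous_finsetSum _ fun i _ =>
      (pd_continuous (hu.1.of_le (by norm_num) : ContDiff ℝ 1 u) i).norm.pow 2
  have i1 := integrable_mul_of_continuous hDb hm (hG f hf)
  have i2 := integrable_mul_of_continuous hDb hm (hG w hw)
  have i3 : IntegrableOn (fun x => C * (t * (m x * ∑ i, ‖pd i f x‖ ^ 2)
      + t⁻¹ * (m x * ∑ i, ‖pd i w x‖ ^ 2))) (frontier D) σ :=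
    ((i1.const_mul t).add (i2.const_mul t⁻¹)).const_mul C
  have hle : ‖bd (σ.restrict (frontier D)) m F f w‖ ≤
      ∫ x in frontier D, C * (t * (m x * ∑ i, ‖pd i f x‖ ^ 2)
      + t⁻¹ * (m x * ∑ i, ‖pd i w x‖ ^ 2)) ∂σ := by
    refine norm_integral_le_of_norm_le i3 ?_
    have hmem : ∀ᵐ x ∂σ.restrict (frontier D), x ∈ frontier D :=
      ae_restrict_mem isClosed_frontier.measurableSet
    filter_upwards [hm0, hmem] with x hx0 hx
    rw [norm_mul, norm_mul, RCLike.norm_conj, Complex.norm_real, Real.norm_eq_abs,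
      abs_of_nonneg hx0]
    have b1 := hCb f hf x hx
    have b2 := hCb w hw x hx
    set a := ‖nc F f x‖
    set b := ‖nc F w x‖
    have hab : a * b ≤ t * a ^ 2 + t⁻¹ * b ^ 2 := by
      have h2 : 0 ≤ t⁻¹ * (t * a - b) ^ 2 := by positivity
      have e : t⁻¹ * (t * a - b) ^ 2 = t * a ^ 2 - 2 * (a * b) + t⁻¹ * b ^ 2 := by
        field_simp; ring
      have h3 : 0 ≤ t * a ^ 2 + t⁻¹ * b ^ 2 := by positivity
      linarith
    have b1' := mul_le_mul_of_nonneg_left b1 ht.le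
    have b2' := mul_le_mul_of_nonneg_left b2 (inv_pos.2 ht).le
    have := mul_le_mul_of_nonneg_left (hab.trans (add_le_add b1' b2')) hx0
    calc m x * a * b = m x * (a * b) := by ring
      _ ≤ _ := this
      _ = _ := by ring
  refine hle.trans (le_of_eq ?_)
  rw [integral_const_mul, integral_add (i1.const_mul t) (i2.const_mul t⁻¹), integral_const_mul,
    integral_const_mul]

/-- The combination of interior norms that controls the boundary form. -/
def bq (D : Set (Euc d)) (f : Euc d → ℂ) : ℝ := √(gradSq D f) * √(XnormSq D f) + gradSq D f

lemma bq_nonneg (D : Set (Euc d)) (f : Euc d → ℂ) : 0 ≤ bq D f :=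
  add_nonneg (by positivity) (gradSq_nonneg _ _)

/-- The boundary term of `bform`. -/
def bterm (D : Set (Euc d)) (σ : Measure (Euc d)) (ν : Euc d → Euc d) (η : Euc d → ℝ)
    (f φ : Euc d → ℂ) : ℂ :=
  ∫ x in frontier D, ((1 / η x : ℝ) : ℂ) * fderiv ℝ f x (ν x) *
      (starRingEnd ℂ) (fderiv ℝ φ x (ν x)) ∂σ

lemma bform_eq {D : Set (Euc d)} (hD : IsOpen D) (hDb : Bornology.IsBounded D)
    {σ : Measure (Euc d)} {ν : Euc d → Euc d} {η : Euc d → ℝ}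
    {f φ : Euc d → ℂ} (hf : MemX D f) (hφ : MemX D φ) :
    bform D σ ν η f φ
      = - (∫ x in D, f x * (starRingEnd ℂ) (lap φ x)) - bterm D σ ν η f φ := by
  have := green hD hDb (hf.1.of_le (by norm_num)) hf.2 hφ.1
  rw [← this]; rfl

/-- The boundary form is dominated by interior norms with an adjustable weight: the
existence of the solution operator forces the weight of the boundary form to be a boundary
representation of a bounded function, which is what makes the estimate possible for an
arbitrary measure `σ`. -/
lemma bterm_bound [NeZero d] {D : Set (Euc d)} (hD : IsOpen D)
    (hDb : Bornology.IsBounded D) (hC2 : BoundaryC2 D)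
    {σ : Measure (Euc d)} {ν : Euc d → Euc d} {n η : Euc d → ℝ} {nmin ηmin : ℝ}
    (hnmin : 0 < nmin) (hηmin : 0 < ηmin)
    (hn : ∀ᵐ x ∂((volume : Measure (Euc d)).restrict D), nmin ≤ n x)
    (hη : ∀ᵐ x ∂(σ.restrict (frontier D)), ηmin ≤ η x)
    (hnm : AEStronglyMeasurable (fun x => 1 / n x) (volume.restrict D))
    {T : (Euc d → ℂ) → (Euc d → ℂ)}
    (hTmem : ∀ f : Euc d → ℂ, MemX D f → MemX D (T f))
    (hT : ∀ f φ : Euc d → ℂ, MemX D f → MemX D φ →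
      aform D n (T f) φ = bform D σ ν η f φ) :
    ∃ K : ℝ, 0 ≤ K ∧ ∀ f w, MemX D f → MemX D w → ∀ t : ℝ, 0 < t →
      ‖bterm D σ ν η f w‖ ≤ K * (t * bq D f + t⁻¹ * bq D w) := by
  obtain ⟨F, hF, hFpos, hF0, hF1⟩ := exists_defining hD hDb hC2
  set m : Euc d → ℝ := fun x => (1 / η x) * (fderiv ℝ F x (ν x)) ^ 2 with hmdef
  set h : (Euc d → ℂ) → Euc d → ℂ := fun f x => ((1 / n x : ℝ) : ℂ) * lap (T f) x + f x with hh
  have hm0 : ∀ᵐ x ∂σ.restrict (frontier D), 0 ≤ m x := by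
    filter_upwards [hη] with x hx
    have : 0 < η x := hηmin.trans_le hx
    positivity
  have hterm : ∀ f φ, MemX D f → MemX D φ →
      bterm D σ ν η f φ = bd (σ.restrict (frontier D)) m F f φ := by
    intro f φ hf hφ
    refine setIntegral_congr_fun isClosed_frontier.measurableSet fun x hx => ?_
    simp only [hmdef]
    rw [fderiv_eq_nc hD hC2 hF hF0 hF1 hf hx, fderiv_eq_nc hD hC2 hF hF0 hF1 hφ hx, map_mul,
      Complex.conj_ofReal]
    push_cast; ring
  have hninv : ∀ᵐ x ∂((volume : Measure (Euc d)).restrict D), ‖1 / n x‖ ≤ 1 / nmin := by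
    filter_upwards [hn] with x hx
    have : 0 < n x := hnmin.trans_le hx
    rw [Real.norm_eq_abs, abs_of_pos (by positivity)]
    exact one_div_le_one_div_of_le hnmin hx
  have hhm : ∀ f, MemX D f → AEStronglyMeasurable (h f) (volume.restrict D) := fun f hf =>
    ((Complex.continuous_ofReal.comp_aestronglyMeasurable hnm).mul
      (lap_continuous (hTmem f hf).1).aestronglyMeasurable).add
      hf.1.continuous.aestronglyMeasurable
  have hhb : ∀ f, MemX D f → ∃ M : ℝ, 0 ≤ M ∧
      ∀ᵐ x ∂(volume : Measure (Euc d)).restrict D, ‖h f x‖ ≤ M := by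
    intro f hf
    obtain ⟨C1, hC1, b1⟩ := exists_bound_of_continuous hDb (lap_continuous (hTmem f hf).1)
    obtain ⟨C2, hC2, b2⟩ := exists_bound_of_continuous hDb hf.1.continuous
    refine ⟨1 / nmin * C1 + C2, by positivity, ?_⟩
    filter_upwards [hninv, ae_restrict_mem hD.measurableSet] with x hx hxD
    refine (norm_add_le _ _).trans (add_le_add ?_ (b2 x (subset_closure hxD)))
    rw [norm_mul, Complex.norm_real]
    exact mul_le_mul hx (b1 x (subset_closure hxD)) (norm_nonneg _) (by positivity)
  have hhi : ∀ f φ, MemX D f → MemX D φ →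
      IntegrableOn (fun x => h f x * (starRingEnd ℂ) (lap φ x)) D := by
    intro f φ hf hφ
    obtain ⟨M, -, hM⟩ := hhb f hf
    have : IntegrableOn (fun x => (starRingEnd ℂ) (lap φ x)) D :=
      integrableOn_of_continuous hDb (conj_continuous (lap_continuous hφ.1))
    exact this.bdd_mul (hhm f hf) hM
  have hrep : ∀ f φ, MemX D f → MemX D φ → bd (σ.restrict (frontier D)) m F f φ
      = - ∫ x in D, h f x * (starRingEnd ℂ) (lap φ x) := by
    intro f φ hf hφ
    have h1 := hT f φ hf hφ
    rw [bform_eq hD hDb hf hφ, hterm f φ hf hφ] at h1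
    have i2 : IntegrableOn (fun x => f x * (starRingEnd ℂ) (lap φ x)) D :=
      integrableOn_of_continuous hDb
        (hf.1.continuous.mul (conj_continuous (lap_continuous hφ.1)))
    have i1 : IntegrableOn (fun x => ((1 / n x : ℝ) : ℂ) * lap (T f) x *
        (starRingEnd ℂ) (lap φ x)) D := by
      refine ((hhi f φ hf hφ).sub i2).congr (ae_of_all _ fun x => ?_)
      simp only [hh, Pi.sub_apply]; ring
    have e : ∫ x in D, h f x * (starRingEnd ℂ) (lap φ x) = aform D n (T f) φ
        + ∫ x in D, f x * (starRingEnd ℂ) (lap φ x) := by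
      unfold aform
      rw [← integral_add i1 i2]
      congr 1; ext x; simp only [hh]; ring
    rw [e, h1]; ring
  by_cases hm : IntegrableOn m (frontier D) σ
  · obtain ⟨C, hC, hyoung⟩ := bd_young hD hDb hC2 hF hF0 hF1 hm hm0
    have hGX : MemX D fun y => ((F y : ℝ) : ℂ) :=
      ⟨ofReal_contDiff hF, fun x hx => by simp [hF0 x hx]⟩
    obtain ⟨M, hM, hMb⟩ := hhb _ hGX
    obtain ⟨K, hK, htr⟩ := weighted_trace hD hDb hC2 hF hFpos hF0 hF1 hm hm0 hM (hhm _ hGX) hMb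
      fun φ hφ => hrep _ φ hGX hφ
    refine ⟨C * K, by positivity, fun f w hf hw t ht => ?_⟩
    rw [hterm f w hf hw]
    refine (hyoung f w hf hw t ht).trans ?_
    have h1 := mul_le_mul_of_nonneg_left (htr f hf) ht.le
    have h2 := mul_le_mul_of_nonneg_left (htr w hw) (inv_pos.2 ht).le
    refine (mul_le_mul_of_nonneg_left (add_le_add h1 h2) hC).trans (le_of_eq ?_)
    unfold bq; ring
  · refine ⟨0, le_rfl, fun f w hf hw t ht => ?_⟩
    rw [hterm f w hf hw, bd_eq_zero hDb hF hF0 hF1 hm ?_ hf hw]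
    · simp
    · intro f φ ψ hf hφ hψ t
      rw [hrep f φ hf hφ, hrep f ψ hf hψ, hrep f _ hf (memX_add_smul hφ hψ t)]
      have e : ∫ x in D, h f x * (starRingEnd ℂ) (lap (fun y => φ y + (t : ℂ) * ψ y) x)
          = ∫ x in D, (h f x * (starRingEnd ℂ) (lap φ x)
            + (t : ℂ) * (h f x * (starRingEnd ℂ) (lap ψ x))) := by
        congr 1; ext x
        rw [lap_add hφ.1 (contDiff_const.mul hψ.1), lap_const_mul hψ.1, map_add, map_mul,
          Complex.conj_ofReal]
        ring
      rw [e, integral_add (hhi f φ hf hφ) ((hhi f ψ hf hψ).const_mul _), integral_const_mul]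
      ring
end boundaryControl

/-! ### Compactness of the solution operator -/

section assembly
variable {d : ℕ}

lemma memX_sub {D : Set (Euc d)} {f g : Euc d → ℂ} (hf : MemX D f) (hg : MemX D g) :
    MemX D fun y => f y - g y :=
  ⟨hf.1.sub hg.1, fun x hx => by simp [hf.2 x hx, hg.2 x hx]⟩

lemma xnormSq_sub_le {D : Set (Euc d)} (hDb : Bornology.IsBounded D) {f g : Euc d → ℂ}
    (hf : ContDiff ℝ 2 f) (hg : ContDiff ℝ 2 g) :
    XnormSq D (fun y => f y - g y) ≤ 2 * XnormSq D f + 2 * XnormSq D g := by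
  have i1 : IntegrableOn (fun x => 2 * ‖lap f x‖ ^ 2) D :=
    integrableOn_of_continuous hDb (continuous_const.mul ((lap_continuous hf).norm.pow 2))
  have i2 : IntegrableOn (fun x => 2 * ‖lap g x‖ ^ 2) D :=
    integrableOn_of_continuous hDb (continuous_const.mul ((lap_continuous hg).norm.pow 2))
  have i3 : IntegrableOn (fun x => ‖lap (fun y => f y - g y) x‖ ^ 2) D :=
    integrableOn_of_continuous hDb ((lap_continuous (hf.sub hg)).norm.pow 2)
  have h : XnormSq D (fun y => f y - g y)
      ≤ ∫ x in D, (2 * ‖lap f x‖ ^ 2 + 2 * ‖lap g x‖ ^ 2) := by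
    refine integral_mono i3 (i1.add i2) fun x => ?_
    simp only
    rw [lap_sub hf hg]
    have h1 := norm_sub_le (lap f x) (lap g x)
    have h2 := norm_nonneg (lap f x - lap g x)
    nlinarith [sq_nonneg (‖lap f x‖ - ‖lap g x‖)]
  refine h.trans (le_of_eq ?_)
  rw [integral_add i1 i2, integral_const_mul, integral_const_mul]; rfl

lemma bterm_hermitian {D : Set (Euc d)} {σ : Measure (Euc d)} {ν : Euc d → Euc d}
    {η : Euc d → ℝ} (f φ : Euc d → ℂ) :
    (starRingEnd ℂ) (bterm D σ ν η f φ) = bterm D σ ν η φ f := by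
  unfold bterm
  rw [← integral_conj]
  congr 1; ext x
  simp only [map_mul, Complex.conj_ofReal, Complex.conj_conj]
  ring

/-- The Lipschitz type estimate behind compactness: `‖Δ(Tf₁ - Tf₂)‖²` is bounded by
lower order quantities of `f₁ - f₂`. -/
lemma solution_estimate [NeZero d] {D : Set (Euc d)} (hD : IsOpen D)
    (hDb : Bornology.IsBounded D) (hC2 : BoundaryC2 D)
    {σ : Measure (Euc d)} {ν : Euc d → Euc d} {n η : Euc d → ℝ} {nmin nmax ηmin : ℝ}
    (hnmin : 0 < nmin) (hηmin : 0 < ηmin)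
    (hn : ∀ᵐ x ∂((volume : Measure (Euc d)).restrict D), nmin ≤ n x ∧ n x ≤ nmax)
    (hη : ∀ᵐ x ∂(σ.restrict (frontier D)), ηmin ≤ η x)
    {T : (Euc d → ℂ) → (Euc d → ℂ)}
    (hTmem : ∀ f : Euc d → ℂ, MemX D f → MemX D (T f))
    (hT : ∀ f φ : Euc d → ℂ, MemX D f → MemX D φ →
      aform D n (T f) φ = bform D σ ν η f φ) :
    ∃ C : ℝ, 0 ≤ C ∧ ∀ f g, MemX D f → MemX D g →
      XnormSq D (fun x => T f x - T g x) ≤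
        C * (L2normSq D (fun x => f x - g x) + bq D (fun x => f x - g x)) := by
  have hnm : AEStronglyMeasurable (fun x => 1 / n x) (volume.restrict D) :=
    meas_inv hD hDb fun f hf => ⟨T f, hTmem f hf, fun ψ hψ hs =>
      test_identity hD hDb hf (fun φ hφ => hT f φ hf hφ) hψ hs⟩
  obtain ⟨K, hK, hbt⟩ := bterm_bound hD hDb hC2 hnmin hηmin (hn.mono fun _ h => h.1) hη hnm
    hTmem hT
  obtain ⟨C0, hC0, hen⟩ := energy_bounds (d := d) hD hDb
  have hninv : ∀ᵐ x ∂((volume : Measure (Euc d)).restrict D), ‖((1 / n x : ℝ) : ℂ)‖ ≤ 1 / nmin := by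
    filter_upwards [hn] with x hx
    have : 0 < n x := hnmin.trans_le hx.1
    rw [Complex.norm_real, Real.norm_eq_abs, abs_of_pos (by positivity)]
    exact one_div_le_one_div_of_le hnmin hx.1
  have hai : ∀ u φ : Euc d → ℂ, ContDiff ℝ 2 u → ContDiff ℝ 2 φ →
      IntegrableOn (fun x => ((1 / n x : ℝ) : ℂ) * lap u x * (starRingEnd ℂ) (lap φ x)) D := by
    intro u φ hu hφ
    have h1 : IntegrableOn (fun x => lap u x * (starRingEnd ℂ) (lap φ x)) D :=
      integrableOn_of_continuous hDb
        ((lap_continuous hu).mul (conj_continuous (lap_continuous hφ)))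
    refine (h1.bdd_mul (Complex.continuous_ofReal.comp_aestronglyMeasurable hnm) hninv).congr
      (ae_of_all _ fun x => ?_)
    simp only; ring
  have hbi : ∀ u φ : Euc d → ℂ, ContDiff ℝ 2 u → ContDiff ℝ 2 φ →
      IntegrableOn (fun x => u x * (starRingEnd ℂ) (lap φ x)) D := fun u φ hu hφ =>
    integrableOn_of_continuous hDb (hu.continuous.mul (conj_continuous (lap_continuous hφ)))
  have hat : ∀ f φ, MemX D f → MemX D φ → aform D n (T f) φ
      = - (∫ x in D, f x * (starRingEnd ℂ) (lap φ x)) - bterm D σ ν η f φ := fun f φ hf hφ => by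
    rw [hT f φ hf hφ, bform_eq hD hDb hf hφ]
  -- The boundary integrands need not be integrable a priori, so additivity of the boundary
  -- term is read off from the other terms, first in the second argument.
  have hsub2 : ∀ φ f g, MemX D φ → MemX D f → MemX D g →
      bterm D σ ν η φ (fun x => f x - g x) = bterm D σ ν η φ f - bterm D σ ν η φ g := by
    intro φ f g hφ hf hg
    have e1 := hat φ f hφ hf
    have e2 := hat φ g hφ hg
    have e3 := hat φ _ hφ (memX_sub hf hg)
    have s1 : aform D n (T φ) (fun x => f x - g x)
        = aform D n (T φ) f - aform D n (T φ) g := by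
      unfold aform
      rw [← integral_sub (hai _ _ (hTmem φ hφ).1 hf.1) (hai _ _ (hTmem φ hφ).1 hg.1)]
      congr 1; ext x
      rw [lap_sub hf.1 hg.1, map_sub]; ring
    have s2 : ∫ x in D, φ x * (starRingEnd ℂ) (lap (fun y => f y - g y) x)
        = (∫ x in D, φ x * (starRingEnd ℂ) (lap f x))
          - ∫ x in D, φ x * (starRingEnd ℂ) (lap g x) := by
      rw [← integral_sub (hbi _ _ hφ.1 hf.1) (hbi _ _ hφ.1 hg.1)]
      congr 1; ext x
      rw [lap_sub hf.1 hg.1, map_sub]; ring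
    rw [s1, s2] at e3
    linear_combination e3 - e1 + e2
  have hsub1 : ∀ φ f g, MemX D φ → MemX D f → MemX D g →
      bterm D σ ν η (fun x => f x - g x) φ = bterm D σ ν η f φ - bterm D σ ν η g φ := by
    intro φ f g hφ hf hg
    rw [← bterm_hermitian, hsub2 φ f g hφ hf hg, map_sub, bterm_hermitian, bterm_hermitian]
  set N : ℝ := |nmax| + 1 with hN
  have hN0 : 0 < N := by positivity
  set E : ℝ := C0 + C0 ^ 2 with hE
  have hE0 : 0 ≤ E := by positivity
  -- With this weight the `w` part of the boundary bound is absorbed into half of `‖Δw‖²`.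
  set t : ℝ := 2 * (N * K * E) + 1 with ht
  have ht0 : 0 < t := by positivity
  refine ⟨4 * N ^ 2 + 4 * (N * K * t), by positivity, fun f g hf hg => ?_⟩
  have hw := memX_sub (hTmem f hf) (hTmem g hg)
  have hF := memX_sub hf hg
  set w : Euc d → ℂ := fun x => T f x - T g x with hwdef
  set F : Euc d → ℂ := fun x => f x - g x with hFdef
  have hid : aform D n w w
      = - (∫ x in D, F x * (starRingEnd ℂ) (lap w x)) - bterm D σ ν η F w := by
    have s1 : aform D n w w = aform D n (T f) w - aform D n (T g) w := by
      unfold aform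
      rw [← integral_sub (hai _ _ (hTmem f hf).1 hw.1) (hai _ _ (hTmem g hg).1 hw.1)]
      congr 1; ext x
      have : lap w x = lap (T f) x - lap (T g) x := lap_sub (hTmem f hf).1 (hTmem g hg).1 x
      rw [this]; ring
    have s2 : ∫ x in D, F x * (starRingEnd ℂ) (lap w x)
        = (∫ x in D, f x * (starRingEnd ℂ) (lap w x))
          - ∫ x in D, g x * (starRingEnd ℂ) (lap w x) := by
      rw [← integral_sub (hbi _ _ hf.1 hw.1) (hbi _ _ hg.1 hw.1)]
      congr 1; ext x
      simp only [hFdef]; ring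
    rw [s1, hat f w hf hw, hat g w hg hw, s2, hsub1 w f g hw hf hg]; ring
  have hcoer : XnormSq D w ≤ N * ‖aform D n w w‖ := by
    have e : aform D n w w = ((∫ x in D, (1 / n x) * ‖lap w x‖ ^ 2 : ℝ) : ℂ) := by
      unfold aform
      rw [← integral_complex_ofReal]
      congr 1; ext x
      rw [mul_assoc, Complex.mul_conj, Complex.normSq_eq_norm_sq]; push_cast; ring
    have i0 : IntegrableOn (fun x => ‖lap w x‖ ^ 2) D :=
      integrableOn_of_continuous hDb ((lap_continuous hw.1).norm.pow 2)
    have i1 : IntegrableOn (fun x => N * ((1 / n x) * ‖lap w x‖ ^ 2)) D := by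
      refine (i0.bdd_mul (c := 1 / nmin) hnm ?_).const_mul N
      filter_upwards [hninv] with x hx
      rwa [Complex.norm_real] at hx
    have h1 : XnormSq D w ≤ ∫ x in D, N * ((1 / n x) * ‖lap w x‖ ^ 2) := by
      refine integral_mono_ae i0 i1 ?_
      filter_upwards [hn] with x hx
      have h2 : 0 < n x := hnmin.trans_le hx.1
      have h3 : n x ≤ N := hx.2.trans ((le_abs_self _).trans (by simp [hN]))
      have h4 : 1 ≤ N * (1 / n x) := by
        rw [mul_one_div, le_div_iff₀ h2]; linarith
      rw [← mul_assoc]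
      exact le_mul_of_one_le_left (sq_nonneg _) h4
    rw [integral_const_mul] at h1
    refine h1.trans (mul_le_mul_of_nonneg_left ?_ hN0.le)
    rw [e, Complex.norm_real]
    exact le_abs_self _
  have hcs := cs_complex hDb hF.1.continuous (lap_continuous hw.1)
  have hb := hbt F w hF hw t ht0
  have htri : ‖aform D n w w‖ ≤ √(L2normSq D F) * √(XnormSq D w)
      + K * (t * bq D F + t⁻¹ * bq D w) := by
    rw [hid]
    refine (norm_sub_le _ _).trans ?_
    rw [norm_neg]
    exact add_le_add hcs hb
  have hX0 : 0 ≤ XnormSq D w := L2normSq_nonneg _ _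
  have hL0 : 0 ≤ L2normSq D F := L2normSq_nonneg _ _
  have hbw : bq D w ≤ E * XnormSq D w := by
    have h1 := (hen w hw).2
    have hs := Real.sqrt_nonneg (gradSq D w)
    have hsX := Real.sqrt_nonneg (XnormSq D w)
    have h2 := Real.sq_sqrt hX0
    have h3 := Real.sq_sqrt (gradSq_nonneg D w)
    have h4 : gradSq D w ≤ C0 ^ 2 * XnormSq D w := by
      rw [← h3, ← h2, ← mul_pow]; exact pow_le_pow_left₀ hs h1 2
    have h5 : √(gradSq D w) * √(XnormSq D w) ≤ C0 * XnormSq D w := by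
      calc _ ≤ C0 * √(XnormSq D w) * √(XnormSq D w) := mul_le_mul_of_nonneg_right h1 hsX
        _ = C0 * (√(XnormSq D w)) ^ 2 := by ring
        _ = _ := by rw [h2]
    unfold bq; rw [hE]; linarith
  have hhalf : N * K * (t⁻¹ * bq D w) ≤ XnormSq D w / 2 := by
    have h1 : N * K * (t⁻¹ * bq D w) ≤ N * K * (t⁻¹ * (E * XnormSq D w)) := by gcongr
    refine h1.trans ?_
    have h2 : N * K * E * t⁻¹ ≤ 1 / 2 := by
      rw [← div_eq_mul_inv, div_le_iff₀ ht0, ht]; linarith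
    calc N * K * (t⁻¹ * (E * XnormSq D w)) = (N * K * E * t⁻¹) * XnormSq D w := by ring
      _ ≤ 1 / 2 * XnormSq D w := mul_le_mul_of_nonneg_right h2 hX0
      _ = _ := by ring
  have hy : N * (√(L2normSq D F) * √(XnormSq D w)) ≤ N ^ 2 * L2normSq D F + XnormSq D w / 4 := by
    have h2 := Real.sq_sqrt hX0
    have h3 := Real.sq_sqrt hL0
    nlinarith [sq_nonneg (N * √(L2normSq D F) - √(XnormSq D w) / 2)]
  have hfin : XnormSq D w ≤ N * (√(L2normSq D F) * √(XnormSq D w))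
      + N * K * t * bq D F + N * K * (t⁻¹ * bq D w) := by
    refine hcoer.trans ((mul_le_mul_of_nonneg_left htri hN0.le).trans (le_of_eq ?_))
    ring
  have p1 : 0 ≤ N * K * t * L2normSq D F := by positivity
  have p2 : 0 ≤ N ^ 2 * bq D F := mul_nonneg (sq_nonneg _) (bq_nonneg _ _)
  linarith

end assembly

/-- the solution operator `T : X(D) → X(D)` is compact: every bounded
sequence in `X(D)` has a subsequence whose image under `T` is Cauchy in `X(D)`. -/
theorem stmt_5 (d : ℕ) (D : Set (Euc d)) (hD : IsOpen D)
    (hDb : Bornology.IsBounded D) (hC2 : BoundaryC2 D)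
    (σ : Measure (Euc d)) (ν : Euc d → Euc d)
    (n η : Euc d → ℝ) (nmin nmax ηmin ηmax : ℝ)
    (hnmin : 0 < nmin) (hηmin : 0 < ηmin)
    (hn : ∀ᵐ x ∂((volume : Measure (Euc d)).restrict D), nmin ≤ n x ∧ n x ≤ nmax)
    (hη : ∀ᵐ x ∂(σ.restrict (frontier D)), ηmin ≤ η x ∧ η x ≤ ηmax)
    (T : (Euc d → ℂ) → (Euc d → ℂ))
    (hTmem : ∀ f : Euc d → ℂ, MemX D f → MemX D (T f))
    (hT : ∀ f φ : Euc d → ℂ, MemX D f → MemX D φ →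
      aform D n (T f) φ = bform D σ ν η f φ) :
    ∀ f : ℕ → Euc d → ℂ, (∀ k, MemX D (f k)) →
      (∃ M : ℝ, ∀ k, Real.sqrt (XnormSq D (f k)) ≤ M) →
      ∃ g : ℕ → ℕ, StrictMono g ∧
        ∀ ε > (0 : ℝ), ∃ K : ℕ, ∀ i ≥ K, ∀ j ≥ K,
          Real.sqrt (XnormSq D (fun x => T (f (g i)) x - T (f (g j)) x)) ≤ ε := by
  rintro f hf ⟨M, hM⟩
  rcases Nat.eq_zero_or_pos d with hd | hd
  · -- In dimension zero the Laplacian is an empty sum.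
    subst hd
    refine ⟨id, strictMono_id, fun ε hε => ⟨0, fun i _ j _ => ?_⟩⟩
    have : XnormSq D (fun x => T (f (id i)) x - T (f (id j)) x) = 0 := by
      simp [XnormSq, L2normSq, lap]
    rw [this, Real.sqrt_zero]; exact hε.le
  have : NeZero d := ⟨hd.ne'⟩
  have hM0 : 0 ≤ M := (Real.sqrt_nonneg _).trans (hM 0)
  obtain ⟨C, hC, hest⟩ := solution_estimate hD hDb hC2 hnmin hηmin hn (hη.mono fun _ h => h.1)
    hTmem hT
  obtain ⟨C0, hC0, hen⟩ := energy_bounds (d := d) hD hDb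
  have hX : ∀ k, XnormSq D (f k) ≤ M ^ 2 := fun k => by
    rw [← Real.sq_sqrt (show 0 ≤ XnormSq D (f k) from L2normSq_nonneg _ _)]
    exact pow_le_pow_left₀ (Real.sqrt_nonneg _) (hM k) 2
  have hXd : ∀ i j, √(XnormSq D (fun x => f i x - f j x)) ≤ 2 * M := fun i j => by
    refine Real.sqrt_le_iff.2 ⟨by positivity, ?_⟩
    have := xnormSq_sub_le hDb (hf i).1 (hf j).1
    nlinarith [hX i, hX j]
  have hL : ∀ k, L2normSq D (f k) ≤ (C0 * (2 * M)) ^ 2 := fun k => by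
    rw [← Real.sq_sqrt (L2normSq_nonneg D (f k))]
    refine pow_le_pow_left₀ (Real.sqrt_nonneg _) ((hen _ (hf k)).1.trans ?_) 2
    exact mul_le_mul_of_nonneg_left ((hM k).trans (by linarith)) hC0
  have hG : ∀ i j, gradSq D (fun x => f i x - f j x) ≤ (C0 * (2 * M)) ^ 2 := fun i j => by
    rw [← Real.sq_sqrt (gradSq_nonneg D (fun x => f i x - f j x))]
    refine pow_le_pow_left₀ (Real.sqrt_nonneg _) ((hen _ (memX_sub (hf i) (hf j))).2.trans ?_) 2
    exact mul_le_mul_of_nonneg_left (hXd i j) hC0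
  obtain ⟨g, hg, hlim⟩ := rellich hD hDb (fun k => (hf k).1.of_le (by norm_num))
    (fun k => (hf k).2) hL hG
  refine ⟨g, hg, fun ε hε => ?_⟩
  set Φ : ℝ → ℝ := fun L => √(C * (L + (√(√L * (2 * M)) * (2 * M) + √L * (2 * M)))) with hΦ
  have hbound : ∀ i j, √(XnormSq D (fun x => T (f i) x - T (f j) x)) ≤
      Φ (L2normSq D (fun x => f i x - f j x)) := fun i j => by
    refine Real.sqrt_le_sqrt ((hest _ _ (hf i) (hf j)).trans ?_)
    refine mul_le_mul_of_nonneg_left (add_le_add le_rfl ?_) hC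
    have h1 : gradSq D (fun x => f i x - f j x) ≤
        √(L2normSq D (fun x => f i x - f j x)) * (2 * M) :=
      (gradSq_le hD hDb (memX_sub (hf i) (hf j))).trans
        (mul_le_mul_of_nonneg_left (hXd i j) (Real.sqrt_nonneg _))
    exact add_le_add (mul_le_mul (Real.sqrt_le_sqrt h1) (hXd i j) (Real.sqrt_nonneg _)
      (Real.sqrt_nonneg _)) h1
  have hΦc : Continuous Φ := by fun_prop
  have hΦ0 : Φ 0 = 0 := by simp [hΦ]
  have ht := (hΦc.tendsto 0).comp hlim
  rw [hΦ0] at ht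
  have hev := ht.eventually (gt_mem_nhds hε)
  rw [← prod_atTop_atTop_eq, eventually_prod_iff] at hev
  obtain ⟨p, hp, q, hq, hpq⟩ := hev
  obtain ⟨K1, h1⟩ := eventually_atTop.1 hp
  obtain ⟨K2, h2⟩ := eventually_atTop.1 hq
  refine ⟨max K1 K2, fun i hi j hj => (hbound _ _).trans (le_of_lt ?_)⟩
  exact hpq (h1 i (le_trans (le_max_left _ _) hi)) (h2 j (le_trans (le_max_right _ _) hj))
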